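/- arXiv:1611.01593 — 5 statements merged into one kernel-verified Lean document; each statement's English description precedes it below -/
import Mathlib

section
/- Operator Bernstein inequality with constant 1: Let σ > 0 and let f : ℂ → ℂ be an entire function such that M := sup_{x ∈ ℝ} |f(x)| is finite and |f(z)| ≤ M·exp(σ·|Im z|) for all z ∈ ℂ (i.e. f belongs to 𝓔_σ ∩ L^∞(ℝ)). Then for all bounded self-adjoint operators A and B on a complex Hilbert space, ‖f(A) − f(B)‖ ≤ β(σ·‖A − B‖)·M, and in particular ‖f(A) − f(B)‖ ≤ σ·M·‖A − B‖, where β(t) = 2·sin(t/2) for 0 ≤ t ≤ π and β(t) = 2 for t > π. -/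
/-!
Residue calculus over the circles of radius `N * π` expresses `φ h - φ (-h)`, for `φ` of
exponential type one and `0 < h < π / 2`, as a series of the values of `φ` at the zeros of the
cosine. The weights of this series have the signs of the sine at the nodes, so among all `φ` bounded
by one on the real line the sine is extremal; this gives the bound `2 * sin h` and, after rescaling,
the inequality for functions of a real variable with values in any Banach space. The estimate for
the derivatives that follows from it bounds the Taylor coefficients of `f` by `M * σ ^ n / n!`.

The operator inequality is the vector-valued one applied to `G z = f (B + z • (A - B))`. On the real
line `G` is bounded by `M`, because its argument is self-adjoint there. The Taylor coefficients show
that `G` has exponential type at most `σ * ‖A - B‖`, and by Phragmén–Lindelöf `G` then satisfies the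
growth estimate with constant `M`.
-/

open Filter Topology Metric Set

section SimplePoles

variable {E : Type*} [NormedAddCommGroup E] [NormedSpace ℂ E]

theorem differentiableAt_inv_sub_smul {a z : ℂ} (hz : z ≠ a) (r : E) :
    DifferentiableAt ℂ (fun w : ℂ => (w - a)⁻¹ • r) z :=
  ((differentiableAt_id.sub_const a).inv (sub_ne_zero.2 hz)).smul_const r

theorem tendsto_sub_smul_sub_simplePole {F : ℂ → E} {a b : ℂ} (hba : b ≠ a) (r : E) {s : E}
    (hs : Tendsto (fun z => (z - b) • F z) (𝓝[≠] b) (𝓝 s)) :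
    Tendsto (fun z => (z - b) • (F z - (z - a)⁻¹ • r)) (𝓝[≠] b) (𝓝 s) := by
  have hpole : ContinuousAt (fun z => (z - b) • (z - a)⁻¹ • r) b :=
    (continuousAt_id.sub continuousAt_const).smul (differentiableAt_inv_sub_smul hba r).continuousAt
  have hpole_zero : Tendsto (fun z => (z - b) • (z - a)⁻¹ • r) (𝓝[≠] b) (𝓝 0) := by
    simpa only [sub_self, zero_smul] using hpole.tendsto.mono_left nhdsWithin_le_nhds
  simpa only [smul_sub, sub_zero] using hs.sub hpole_zero

variable [CompleteSpace E]

theorem circleIntegral_sub_simplePole {F : ℂ → E} {a c : ℂ} {R : ℝ} (hF : CircleIntegrable F c R)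
    (ha : a ∈ ball c R) (r : E) :
    (∮ z in C(c, R), (F z - (z - a)⁻¹ • r)) =
      (∮ z in C(c, R), F z) - (2 * Real.pi * Complex.I : ℂ) • r := by
  have hR : 0 ≤ R := (pos_of_mem_ball ha).le
  have hpole : CircleIntegrable (fun z => (z - a)⁻¹ • r) c R :=
    ContinuousOn.circleIntegrable hR fun z hz =>
      (differentiableAt_inv_sub_smul (sphere_disjoint_ball.ne_of_mem hz ha)
        r).continuousAt.continuousWithinAt
  rw [circleIntegral.integral_sub hF hpole, circleIntegral.integral_smul_const,
    circleIntegral.integral_sub_inv_of_mem_ball ha]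

theorem exists_differentiableAt_eq_sub_simplePole {F : ℂ → E} {a : ℂ} {r : E}
    (hF : ∀ᶠ z in 𝓝[≠] a, DifferentiableAt ℂ F z)
    (hr : Tendsto (fun z => (z - a) • F z) (𝓝[≠] a) (𝓝 r)) :
    ∃ G : ℂ → E, DifferentiableAt ℂ G a ∧ ∀ z ≠ a, G z = F z - (z - a)⁻¹ • r := by
  classical
  set K : ℂ → E := Function.update (fun z => (z - a) • F z) a r with hK
  have hK_ne : ∀ z ≠ a, K z = (z - a) • F z := fun z hz => Function.update_of_ne hz _ _
  have hK_diff : ∀ᶠ z in 𝓝[≠] a, DifferentiableAt ℂ K z := by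
    filter_upwards [hF, self_mem_nhdsWithin] with z hz hza
    exact ((differentiableAt_id.sub_const a).smul hz).congr_of_eventuallyEq
      ((eventually_ne_nhds hza).mono hK_ne)
  obtain ⟨p, hp⟩ := Complex.analyticAt_of_differentiable_on_punctured_nhds_of_continuousAt
    hK_diff (continuousAt_update_same.2 hr)
  refine ⟨dslope K a, hp.has_fpower_series_dslope_fslope.differentiableAt, fun z hz => ?_⟩
  rw [dslope_of_ne K hz, slope_def_module, hK_ne z hz, hK, Function.update_self, smul_sub,
    inv_smul_smul₀ (sub_ne_zero.2 hz)]

theorem circleIntegral_eq_two_pi_I_smul_sum_of_simplePoles {c : ℂ} {R : ℝ} (hR : 0 ≤ R)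
    {S : Finset ℂ} (hS : ∀ a ∈ S, a ∈ ball c R) (r : ℂ → E) {F : ℂ → E}
    (hF : ∀ z ∈ closedBall c R, z ∉ S → DifferentiableAt ℂ F z)
    (hr : ∀ a ∈ S, Tendsto (fun z => (z - a) • F z) (𝓝[≠] a) (𝓝 (r a))) :
    (∮ z in C(c, R), F z) = (2 * Real.pi * Complex.I : ℂ) • ∑ a ∈ S, r a := by
  classical
  induction S using Finset.induction_on generalizing F with
  | empty =>
    rw [Finset.sum_empty, smul_zero]
    exact Complex.circleIntegral_eq_zero_of_differentiable_on_off_countable hR countable_empty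
      (fun z hz => (hF z hz (Finset.notMem_empty z)).continuousAt.continuousWithinAt)
      (fun z hz => hF z (ball_subset_closedBall hz.1) (Finset.notMem_empty z))
  | insert a S haS ih =>
    obtain ⟨ha, hSR⟩ := Finset.forall_mem_insert _ _ _ |>.1 hS
    obtain ⟨hra, hrS⟩ := Finset.forall_mem_insert _ _ _ |>.1 hr
    have hF_near : ∀ᶠ z in 𝓝[≠] a, DifferentiableAt ℂ F z := by
      filter_upwards [nhdsWithin_le_nhds (closedBall_mem_nhds_of_mem ha), self_mem_nhdsWithin,
        nhdsWithin_le_nhds (S.finite_toSet.isClosed.isOpen_compl.mem_nhds haS)] with z hz hza hzS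
      exact hF z hz (by simpa using ⟨hza, hzS⟩)
    obtain ⟨G, hGa, hG⟩ := exists_differentiableAt_eq_sub_simplePole hF_near hra
    have hG_diff : ∀ z ∈ closedBall c R, z ∉ S → DifferentiableAt ℂ G z := by
      intro z hz hzS
      rcases eq_or_ne z a with rfl | hza
      · exact hGa
      · exact ((hF z hz (by simpa using ⟨hza, hzS⟩)).sub
          (differentiableAt_inv_sub_smul hza _)).congr_of_eventuallyEq
          ((eventually_ne_nhds hza).mono hG)
    have hG_res : ∀ b ∈ S, Tendsto (fun z => (z - b) • G z) (𝓝[≠] b) (𝓝 (r b)) := by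
      intro b hb
      have hba : b ≠ a := ne_of_mem_of_not_mem hb haS
      refine (tendsto_sub_smul_sub_simplePole hba (r a) (hrS b hb)).congr' ?_
      filter_upwards [nhdsWithin_le_nhds (eventually_ne_nhds hba)] with z hz
      rw [hG z hz]
    have hF_int : CircleIntegrable F c R :=
      ContinuousOn.circleIntegrable hR fun z hz =>
        (hF z (sphere_subset_closedBall hz) fun hzS =>
          sphere_disjoint_ball.ne_of_mem hz (hS z hzS) rfl).continuousAt.continuousWithinAt
    rw [Finset.sum_insert haS, smul_add, ← ih hSR hG_diff hG_res,
      circleIntegral.integral_congr hR fun z hz => hG z (sphere_disjoint_ball.ne_of_mem hz ha),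
      circleIntegral_sub_simplePole hF_int ha, add_sub_cancel]

theorem circleIntegral_inv_smul_eq_two_pi_I_smul_sum_of_simpleZeros {c : ℂ} {R : ℝ} (hR : 0 ≤ R)
    {S : Finset ℂ} (hS : ∀ a ∈ S, a ∈ ball c R) {D D' : ℂ → ℂ} {φ : ℂ → E}
    (hD : ∀ z, HasDerivAt D (D' z) z) (hφ : Differentiable ℂ φ)
    (hD_ne : ∀ z ∈ closedBall c R, z ∉ S → D z ≠ 0) (hD_zero : ∀ a ∈ S, D a = 0)
    (hD'_ne : ∀ a ∈ S, D' a ≠ 0) :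
    (∮ z in C(c, R), (D z)⁻¹ • φ z) =
      (2 * Real.pi * Complex.I : ℂ) • ∑ a ∈ S, (D' a)⁻¹ • φ a := by
  refine circleIntegral_eq_two_pi_I_smul_sum_of_simplePoles hR hS (fun a => (D' a)⁻¹ • φ a)
    (fun z hz hzS => ((hD z).differentiableAt.inv (hD_ne z hz hzS)).smul (hφ z)) fun a ha => ?_
  have hslope := (hasDerivAt_iff_tendsto_slope.1 (hD a)).inv₀ (hD'_ne a ha)
  refine (hslope.smul ((hφ a).continuousAt.tendsto.mono_left nhdsWithin_le_nhds)).congr fun z => ?_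
  rw [slope_def_field, hD_zero a ha, sub_zero, inv_div, smul_smul, div_eq_mul_inv]

end SimplePoles

section CosineInterpolation

theorem norm_complex_cos_sq (z : ℂ) :
    ‖Complex.cos z‖ ^ 2 = Real.cosh z.im ^ 2 - Real.sin z.re ^ 2 := by
  have hcos : Complex.cos z = (Real.cos z.re * Real.cosh z.im : ℝ) +
      (-(Real.sin z.re * Real.sinh z.im) : ℝ) * Complex.I := by
    rw [Complex.cos_eq]
    push_cast
    ring
  rw [← Complex.normSq_eq_norm_sq, hcos, Complex.normSq_add_mul_I]
  linear_combination Real.cosh z.im ^ 2 * Real.sin_sq_add_cos_sq z.re -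
    Real.sin z.re ^ 2 * Real.cosh_sq z.im

theorem exp_abs_im_le_three_mul_norm_cos {N : ℕ} (hN : N ≠ 0) {z : ℂ} (hz : ‖z‖ = N * Real.pi) :
    Real.exp |z.im| ≤ 3 * ‖Complex.cos z‖ := by
  have hN_one : (1 : ℝ) ≤ N := Nat.one_le_cast.2 (Nat.one_le_iff_ne_zero.2 hN)
  have hre_add : 3 ≤ N * Real.pi + |z.re| := by
    nlinarith [Real.pi_gt_three, abs_nonneg z.re]
  have hre_im : (N * Real.pi - |z.re|) * (N * Real.pi + |z.re|) = z.im ^ 2 := by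
    linear_combination -sq_abs z.re + Complex.sq_norm_sub_sq_re z - (‖z‖ + N * Real.pi) * hz
  have hre_sub : 0 ≤ N * Real.pi - |z.re| := hz ▸ sub_nonneg.2 (Complex.abs_re_le_norm z)
  have hsin : |Real.sin (|z.re|)| ≤ N * Real.pi - |z.re| := by
    simpa [abs_sub_comm |z.re|, abs_of_nonneg hre_sub]
      using Real.abs_sin_sub_sin_le |z.re| (N * Real.pi)
  have hsin_sq : Real.sin z.re ^ 2 ≤ z.im ^ 2 / 3 := by
    have hsin_abs : Real.sin z.re ^ 2 = |Real.sin (|z.re|)| ^ 2 := by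
      rcases abs_choice z.re with h | h <;> simp [h, sq_abs]
    have := Real.abs_sin_le_one |z.re|
    rw [hsin_abs]
    nlinarith [abs_nonneg (Real.sin |z.re|)]
  have him : z.im ^ 2 ≤ Real.sinh z.im ^ 2 := by
    rw [← sq_abs z.im, ← sq_abs (Real.sinh z.im), Real.abs_sinh]
    exact pow_le_pow_left₀ (abs_nonneg _) (Real.self_le_sinh_iff.2 (abs_nonneg _)) 2
  have hcos : Real.cosh z.im ^ 2 ≤ 2 * ‖Complex.cos z‖ ^ 2 := by
    rw [norm_complex_cos_sq]
    nlinarith [Real.cosh_sq z.im, sq_nonneg z.im]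
  have hexp : Real.exp |z.im| ≤ 2 * Real.cosh z.im := by
    rw [← Real.cosh_abs, Real.cosh_eq]
    linarith [Real.exp_pos (-|z.im|)]
  refine le_of_sq_le_sq ?_ (by positivity)
  nlinarith [Real.exp_pos |z.im|, Real.cosh_pos z.im, norm_nonneg (Complex.cos z)]

/-- The real zeros `(k + 1/2)π` of the cosine, indexed by the integers. -/
noncomputable def cosNode (k : ℤ) : ℝ := (2 * k + 1) * Real.pi / 2

theorem complex_cos_eq_zero_iff_exists_cosNode {z : ℂ} :
    Complex.cos z = 0 ↔ ∃ k : ℤ, (cosNode k : ℂ) = z := by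
  simp only [Complex.cos_eq_zero_iff, cosNode, eq_comm]
  push_cast
  rfl

theorem cos_cosNode (k : ℤ) : Real.cos (cosNode k) = 0 :=
  Real.cos_eq_zero_iff.2 ⟨k, rfl⟩

theorem sin_cosNode_sq (k : ℤ) : Real.sin (cosNode k) ^ 2 = 1 := by
  simpa [cos_cosNode] using Real.sin_sq_add_cos_sq (cosNode k)

theorem cosNode_injective : Function.Injective cosNode := by
  intro j k hjk
  have hcast : (2 * j + 1 : ℝ) = 2 * k + 1 :=
    mul_right_cancel₀ Real.pi_ne_zero ((div_left_inj' two_ne_zero).1 hjk)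
  exact_mod_cast (by linarith : (j : ℝ) = k)

theorem abs_cosNode (k : ℤ) : |cosNode k| = |(2 * k + 1 : ℤ)| * (Real.pi / 2) := by
  rw [cosNode, mul_div_assoc, abs_mul, abs_of_pos Real.pi_div_two_pos]
  push_cast
  rfl

theorem pi_div_two_le_abs_cosNode (k : ℤ) : Real.pi / 2 ≤ |cosNode k| := by
  have hodd : (1 : ℤ) ≤ |2 * k + 1| := Int.one_le_abs (by omega)
  rw [abs_cosNode]
  exact le_mul_of_one_le_left Real.pi_div_two_pos.le (by exact_mod_cast hodd)

theorem abs_cosNode_lt_nat_mul_pi {N : ℕ} {k : ℤ} (hk : k ∈ Finset.Ico (-N : ℤ) N) :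
    |cosNode k| < N * Real.pi := by
  have hlt : |2 * k + 1| < 2 * (N : ℤ) := by
    rw [Finset.mem_Ico] at hk
    rw [abs_lt]
    omega
  have hcast : ((|2 * k + 1| : ℤ) : ℝ) < 2 * N := by exact_mod_cast hlt
  rw [abs_cosNode]
  nlinarith [Real.pi_pos]

theorem mem_Ico_of_abs_cosNode_le_nat_mul_pi {N : ℕ} {k : ℤ} (hk : |cosNode k| ≤ N * Real.pi) :
    k ∈ Finset.Ico (-N : ℤ) N := by
  have hcast : ((|2 * k + 1| : ℤ) : ℝ) ≤ 2 * N := by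
    rw [abs_cosNode] at hk
    nlinarith [Real.pi_pos]
  have hle : |2 * k + 1| ≤ 2 * (N : ℤ) := by exact_mod_cast hcast
  rw [abs_le] at hle
  rw [Finset.mem_Ico]
  omega

/-- The function `cos z * (z ^ 2 - h ^ 2)`: dividing an entire function by it and integrating over
large circles relates its values at `±h` to those at the zeros of the cosine. -/
noncomputable def cosKernel (h : ℝ) (z : ℂ) : ℂ := Complex.cos z * (z ^ 2 - h ^ 2)

/-- The derivative of `cosKernel h`. -/
noncomputable def cosKernelDeriv (h : ℝ) (z : ℂ) : ℂ :=
  -Complex.sin z * (z ^ 2 - h ^ 2) + Complex.cos z * (2 * z)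

/-- The zeros of `cosKernel h` in the disc of radius `N * π`. -/
noncomputable def cosKernelZeros (h : ℝ) (N : ℕ) : Finset ℂ :=
  insert (h : ℂ) (insert (-h : ℂ) ((Finset.Ico (-N : ℤ) N).image fun k => (cosNode k : ℂ)))

/-- The weight of the node `cosNode k` in the interpolation formula for `φ h - φ (-h)`. -/
noncomputable def cosNodeWeight (h : ℝ) (k : ℤ) : ℝ :=
  (Real.sin (cosNode k) * (cosNode k ^ 2 - h ^ 2))⁻¹

theorem hasDerivAt_cosKernel (h : ℝ) (z : ℂ) :
    HasDerivAt (cosKernel h) (cosKernelDeriv h z) z :=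
  ((Complex.hasDerivAt_cos z).mul ((hasDerivAt_pow 2 z).sub_const ((h : ℂ) ^ 2))).congr_deriv
    (by simp [cosKernelDeriv])

theorem cosKernelDeriv_cosNode (h : ℝ) (k : ℤ) :
    cosKernelDeriv h (cosNode k) = -((cosNodeWeight h k)⁻¹ : ℝ) := by
  have hcos : Complex.cos (cosNode k) = 0 := complex_cos_eq_zero_iff_exists_cosNode.2 ⟨k, rfl⟩
  simp [cosKernelDeriv, cosNodeWeight, hcos]

theorem cosKernelDeriv_self (h : ℝ) :
    cosKernelDeriv h h = (2 * h * Real.cos h : ℝ) := by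
  simp only [cosKernelDeriv]
  push_cast
  ring

theorem cosKernelDeriv_neg_self (h : ℝ) :
    cosKernelDeriv h (-h) = -(2 * h * Real.cos h : ℝ) := by
  simp only [cosKernelDeriv, Complex.cos_neg]
  push_cast
  ring

theorem cosKernel_eq_zero {h : ℝ} {N : ℕ} {a : ℂ} (ha : a ∈ cosKernelZeros h N) :
    cosKernel h a = 0 := by
  simp only [cosKernelZeros, Finset.mem_insert, Finset.mem_image] at ha
  rcases ha with rfl | rfl | ⟨k, -, rfl⟩
  · simp [cosKernel]
  · simp [cosKernel]
  · simp [cosKernel, complex_cos_eq_zero_iff_exists_cosNode.2 ⟨k, rfl⟩]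

theorem cosKernel_ne_zero {h : ℝ} {N : ℕ} {z : ℂ} (hz : z ∈ closedBall 0 (N * Real.pi))
    (hz_zeros : z ∉ cosKernelZeros h N) : cosKernel h z ≠ 0 := by
  simp only [cosKernelZeros, Finset.mem_insert, Finset.mem_image, not_or] at hz_zeros
  obtain ⟨hz_pos, hz_neg, hz_node⟩ := hz_zeros
  refine mul_ne_zero (fun hcos => ?_) fun hsq => ?_
  · obtain ⟨k, rfl⟩ := complex_cos_eq_zero_iff_exists_cosNode.1 hcos
    refine hz_node ⟨k, mem_Ico_of_abs_cosNode_le_nat_mul_pi ?_, rfl⟩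
    simpa using hz
  · exact (sq_eq_sq_iff_eq_or_eq_neg.1 (sub_eq_zero.1 hsq)).elim hz_pos hz_neg

variable {h : ℝ} (h_pos : 0 < h) (h_lt : h < Real.pi / 2)

include h_pos h_lt

theorem cosNode_sq_sub_sq_pos (k : ℤ) : 0 < cosNode k ^ 2 - h ^ 2 := by
  rw [sub_pos, sq_lt_sq, abs_of_pos h_pos]
  exact h_lt.trans_le (pi_div_two_le_abs_cosNode k)

theorem two_mul_mul_cos_pos : 0 < 2 * h * Real.cos h :=
  mul_pos (by positivity) (Real.cos_pos_of_mem_Ioo ⟨by linarith, h_lt⟩)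

theorem cosNodeWeight_ne_zero (k : ℤ) : cosNodeWeight h k ≠ 0 :=
  inv_ne_zero (mul_ne_zero (fun hsin => by simpa [hsin] using sin_cosNode_sq k)
    (cosNode_sq_sub_sq_pos h_pos h_lt k).ne')

theorem cosNodeWeight_mul_sin (k : ℤ) :
    cosNodeWeight h k * Real.sin (cosNode k) = |cosNodeWeight h k| := by
  have hsin : |Real.sin (cosNode k)| = 1 := by
    rw [← sq_eq_sq₀ (abs_nonneg _) zero_le_one, sq_abs, sin_cosNode_sq, one_pow]
  have hinv : (Real.sin (cosNode k))⁻¹ * Real.sin (cosNode k) = 1 :=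
    inv_mul_cancel₀ (abs_pos.1 (hsin ▸ one_pos))
  rw [cosNodeWeight, abs_inv, abs_mul, hsin, one_mul,
    abs_of_pos (cosNode_sq_sub_sq_pos h_pos h_lt k), mul_inv, mul_right_comm, hinv, one_mul]

theorem cosKernelDeriv_ne_zero {N : ℕ} {a : ℂ} (ha : a ∈ cosKernelZeros h N) :
    cosKernelDeriv h a ≠ 0 := by
  have hcos : ((2 * h * Real.cos h : ℝ) : ℂ) ≠ 0 :=
    Complex.ofReal_ne_zero.2 (two_mul_mul_cos_pos h_pos h_lt).ne'
  simp only [cosKernelZeros, Finset.mem_insert, Finset.mem_image] at ha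
  rcases ha with rfl | rfl | ⟨k, -, rfl⟩
  · rwa [cosKernelDeriv_self]
  · rwa [cosKernelDeriv_neg_self, neg_ne_zero]
  · rw [cosKernelDeriv_cosNode, neg_ne_zero, Complex.ofReal_ne_zero]
    exact inv_ne_zero (cosNodeWeight_ne_zero h_pos h_lt k)

theorem mem_ball_of_mem_cosKernelZeros {N : ℕ} (hN : N ≠ 0) {a : ℂ}
    (ha : a ∈ cosKernelZeros h N) : a ∈ ball 0 (N * Real.pi) := by
  have hN_one : (1 : ℝ) ≤ N := Nat.one_le_cast.2 (Nat.one_le_iff_ne_zero.2 hN)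
  have h_abs : |h| < N * Real.pi := by
    rw [abs_of_pos h_pos]
    nlinarith [Real.pi_pos]
  simp only [cosKernelZeros, Finset.mem_insert, Finset.mem_image] at ha
  rcases ha with rfl | rfl | ⟨k, hk, rfl⟩
  · simpa using h_abs
  · simpa using h_abs
  · simpa using abs_cosNode_lt_nat_mul_pi hk

variable {E : Type*} [NormedAddCommGroup E] [NormedSpace ℂ E]

theorem sum_cosKernelZeros (φ : ℂ → E) (N : ℕ) :
    ∑ a ∈ cosKernelZeros h N, (cosKernelDeriv h a)⁻¹ • φ a =
      ((2 * h * Real.cos h : ℝ) : ℂ)⁻¹ • (φ h - φ (-h)) -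
        ∑ k ∈ Finset.Ico (-N : ℤ) N, (cosNodeWeight h k : ℂ) • φ (cosNode k) := by
  have hnode (x : ℝ) (hx : x ^ 2 = h ^ 2) :
      (x : ℂ) ∉ (Finset.Ico (-N : ℤ) N).image fun k => (cosNode k : ℂ) := by
    rw [Finset.mem_image]
    rintro ⟨k, -, hk⟩
    have hpos := cosNode_sq_sub_sq_pos h_pos h_lt k
    rw [Complex.ofReal_injective hk, hx, sub_self] at hpos
    exact hpos.false
  have hneg_notMem := hnode (-h) (neg_sq h)
  rw [Complex.ofReal_neg] at hneg_notMem
  have hpos_notMem : (h : ℂ) ∉ insert (-h : ℂ)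
      ((Finset.Ico (-N : ℤ) N).image fun k => (cosNode k : ℂ)) := by
    rw [Finset.mem_insert, not_or]
    exact ⟨self_ne_neg.2 (Complex.ofReal_ne_zero.2 h_pos.ne'), hnode h rfl⟩
  rw [cosKernelZeros, Finset.sum_insert hpos_notMem, Finset.sum_insert hneg_notMem,
    Finset.sum_image fun _ _ _ _ hjk => cosNode_injective (Complex.ofReal_injective hjk),
    cosKernelDeriv_self, cosKernelDeriv_neg_self]
  simp only [cosKernelDeriv_cosNode, inv_neg, Complex.ofReal_inv, inv_inv, neg_smul,
    Finset.sum_neg_distrib, smul_sub]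
  abel

theorem circleIntegral_inv_cosKernel_smul [CompleteSpace E] {φ : ℂ → E} (hφ : Differentiable ℂ φ)
    {N : ℕ} (hN : N ≠ 0) :
    (∮ z in C(0, N * Real.pi), (cosKernel h z)⁻¹ • φ z) =
      (2 * Real.pi * Complex.I : ℂ) • (((2 * h * Real.cos h : ℝ) : ℂ)⁻¹ • (φ h - φ (-h)) -
        ∑ k ∈ Finset.Ico (-N : ℤ) N, (cosNodeWeight h k : ℂ) • φ (cosNode k)) := by
  rw [← sum_cosKernelZeros h_pos h_lt φ N]
  exact circleIntegral_inv_smul_eq_two_pi_I_smul_sum_of_simpleZeros (by positivity)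
    (fun a => mem_ball_of_mem_cosKernelZeros h_pos h_lt hN) (hasDerivAt_cosKernel h) hφ
    (fun z => cosKernel_ne_zero) (fun a => cosKernel_eq_zero)
    (fun a => cosKernelDeriv_ne_zero h_pos h_lt)

theorem norm_inv_cosKernel_smul_le {φ : ℂ → E} {M : ℝ}
    (hφ : ∀ z, ‖φ z‖ ≤ M * Real.exp |z.im|) {N : ℕ} (hN : N ≠ 0) {z : ℂ}
    (hz : ‖z‖ = N * Real.pi) : ‖(cosKernel h z)⁻¹ • φ z‖ ≤ 6 * M / (N * Real.pi) ^ 2 := by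
  have hN_pos : (0 : ℝ) < N * Real.pi := by positivity
  have hN_one : (1 : ℝ) ≤ N := Nat.one_le_cast.2 (Nat.one_le_iff_ne_zero.2 hN)
  have hM : 0 ≤ M := by simpa using (norm_nonneg _).trans (hφ 0)
  have hcos := exp_abs_im_le_three_mul_norm_cos hN hz
  have hcos_pos : 0 < ‖Complex.cos z‖ := by linarith [Real.exp_pos |z.im|]
  have hsq : (N * Real.pi) ^ 2 / 2 ≤ ‖z ^ 2 - (h : ℂ) ^ 2‖ := by
    have hle := norm_sub_norm_le (z ^ 2) ((h : ℂ) ^ 2)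
    rw [norm_pow, norm_pow, hz, Complex.norm_real, Real.norm_eq_abs, sq_abs] at hle
    have h_le : h ≤ N * Real.pi / 2 := by nlinarith [Real.pi_pos]
    nlinarith
  have hsq_pos : 0 < ‖z ^ 2 - (h : ℂ) ^ 2‖ := lt_of_lt_of_le (by positivity) hsq
  rw [norm_smul, norm_inv, cosKernel, norm_mul, inv_mul_le_iff₀ (by positivity)]
  calc ‖φ z‖ ≤ M * (3 * ‖Complex.cos z‖) := (hφ z).trans (by gcongr)
    _ = ‖Complex.cos z‖ * ((N * Real.pi) ^ 2 / 2) * (6 * M / (N * Real.pi) ^ 2) := by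
      field_simp
      ring
    _ ≤ ‖Complex.cos z‖ * ‖z ^ 2 - (h : ℂ) ^ 2‖ * (6 * M / (N * Real.pi) ^ 2) := by gcongr

theorem tendsto_sum_cosNodeWeight_smul [CompleteSpace E] {φ : ℂ → E} (hφ : Differentiable ℂ φ)
    {M : ℝ} (hM : ∀ z, ‖φ z‖ ≤ M * Real.exp |z.im|) :
    Tendsto (fun N : ℕ => ∑ k ∈ Finset.Ico (-N : ℤ) N, (cosNodeWeight h k : ℂ) • φ (cosNode k))
      atTop (𝓝 (((2 * h * Real.cos h : ℝ) : ℂ)⁻¹ • (φ h - φ (-h)))) := by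
  rw [tendsto_iff_norm_sub_tendsto_zero]
  refine squeeze_zero' (Eventually.of_forall fun _ => norm_nonneg _) ?_
    ((tendsto_const_div_atTop_nhds_zero_nat (6 * M / Real.pi)))
  filter_upwards [eventually_ne_atTop 0] with N hN
  have hint := circleIntegral.norm_two_pi_i_inv_smul_integral_le_of_norm_le_const
    (c := 0) (R := N * Real.pi) (by positivity) fun z hz =>
      norm_inv_cosKernel_smul_le h_pos h_lt hM hN (mem_sphere_zero_iff_norm.1 hz)
  rw [circleIntegral_inv_cosKernel_smul h_pos h_lt hφ hN,
    inv_smul_smul₀ Complex.two_pi_I_ne_zero, norm_sub_rev] at hint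
  refine hint.trans_eq ?_
  field_simp

end CosineInterpolation

/-- The Bernstein class with an explicit bound: entire functions of exponential type at most `σ`
that are bounded by `M` on the real line, both conditions being combined into the single growth
estimate `‖φ z‖ ≤ M * exp (σ * |Im z|)`. -/
structure IsBernstein {E : Type*} [NormedAddCommGroup E] [NormedSpace ℂ E] (σ M : ℝ)
    (φ : ℂ → E) : Prop where
  differentiable : Differentiable ℂ φ
  norm_le (z : ℂ) : ‖φ z‖ ≤ M * Real.exp (σ * |z.im|)

theorem isBernstein_sin : IsBernstein 1 1 Complex.sin where
  differentiable := Complex.differentiable_sin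
  norm_le z := by
    have hexp (w : ℂ) : ‖Complex.exp (w * Complex.I)‖ = Real.exp (-w.im) := by
      simp [Complex.norm_exp]
    have hsub : ‖Complex.exp (-z * Complex.I) - Complex.exp (z * Complex.I)‖ ≤
        Real.exp |z.im| + Real.exp |z.im| := by
      refine (norm_sub_le _ _).trans (add_le_add ?_ ?_)
      · rw [hexp, Complex.neg_im, neg_neg]
        exact Real.exp_le_exp.2 (le_abs_self _)
      · rw [hexp]
        exact Real.exp_le_exp.2 (neg_le_abs _)
    rw [Complex.sin, norm_div, norm_mul, Complex.norm_I, mul_one, Complex.norm_ofNat, one_mul,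
      one_mul]
    linarith

namespace IsBernstein

variable {E : Type*} [NormedAddCommGroup E] [NormedSpace ℂ E] {σ M : ℝ} {φ : ℂ → E}

theorem norm_ofReal_le (hφ : IsBernstein σ M φ) (x : ℝ) : ‖φ x‖ ≤ M := by
  simpa using hφ.norm_le x

theorem nonneg (hφ : IsBernstein σ M φ) : 0 ≤ M :=
  (norm_nonneg _).trans (hφ.norm_ofReal_le 0)

theorem comp_affine (hφ : IsBernstein σ M φ) (hσ : 0 ≤ σ) (c : ℂ) (r : ℝ) :
    IsBernstein (σ * |r|) (M * Real.exp (σ * |c.im|)) fun z => φ (c + r * z) where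
  differentiable := hφ.differentiable.comp (by fun_prop)
  norm_le z := by
    have him : |(c + r * z).im| ≤ |c.im| + |r| * |z.im| := by
      simpa [abs_mul] using abs_add_le c.im (r * z.im)
    have := hφ.nonneg
    calc ‖φ (c + r * z)‖ ≤ M * Real.exp (σ * (|c.im| + |r| * |z.im|)) :=
          (hφ.norm_le _).trans (by gcongr)
      _ = M * Real.exp (σ * |c.im|) * Real.exp (σ * |r| * |z.im|) := by
          rw [mul_assoc, ← Real.exp_add]
          ring_nf

theorem norm_sub_le_two_mul (hφ : IsBernstein σ M φ) (a b : ℝ) : ‖φ a - φ b‖ ≤ 2 * M := by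
  linarith [norm_sub_le (φ a) (φ b), hφ.norm_ofReal_le a, hφ.norm_ofReal_le b]

variable [CompleteSpace E]

theorem norm_sub_neg_le (hφ : IsBernstein 1 M φ) {h : ℝ} (h_pos : 0 < h) (h_lt : h < Real.pi / 2) :
    ‖φ h - φ (-h)‖ ≤ 2 * Real.sin h * M := by
  have hcos := two_mul_mul_cos_pos h_pos h_lt
  have hlim := (tendsto_sum_cosNodeWeight_smul h_pos h_lt hφ.differentiable
    (M := M) (by simpa using hφ.norm_le)).norm
  have hlim_sin := ((tendsto_sum_cosNodeWeight_smul h_pos h_lt isBernstein_sin.differentiable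
    (M := 1) (by simpa using isBernstein_sin.norm_le)).norm).mul_const M
  have hsum (N : ℕ) :
      ‖∑ k ∈ Finset.Ico (-N : ℤ) N, (cosNodeWeight h k : ℂ) • φ (cosNode k)‖ ≤
        ‖∑ k ∈ Finset.Ico (-N : ℤ) N, (cosNodeWeight h k : ℂ) • Complex.sin (cosNode k)‖ * M := by
    have hsin : ∑ k ∈ Finset.Ico (-N : ℤ) N, (cosNodeWeight h k : ℂ) • Complex.sin (cosNode k) =
        (∑ k ∈ Finset.Ico (-N : ℤ) N, |cosNodeWeight h k| : ℝ) := by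
      push_cast
      refine Finset.sum_congr rfl fun k _ => ?_
      rw [← cosNodeWeight_mul_sin h_pos h_lt k]
      push_cast
      rfl
    rw [hsin, Complex.norm_real, Real.norm_of_nonneg (by positivity), Finset.sum_mul]
    refine norm_sum_le_of_le _ fun k _ => ?_
    rw [norm_smul, Complex.norm_real, Real.norm_eq_abs]
    exact mul_le_mul_of_nonneg_left (hφ.norm_ofReal_le _) (abs_nonneg _)
  have hle := le_of_tendsto_of_tendsto' hlim hlim_sin hsum
  have hsin_norm : ‖Complex.sin h - Complex.sin (-h)‖ = 2 * Real.sin h := by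
    have hsin_nonneg := Real.sin_nonneg_of_nonneg_of_le_pi h_pos.le (by linarith)
    rw [Complex.sin_neg, sub_neg_eq_add, ← two_mul, norm_mul, Complex.norm_ofNat,
      ← Complex.ofReal_sin, Complex.norm_real, Real.norm_of_nonneg hsin_nonneg]
  rw [norm_smul, norm_smul, mul_assoc ‖_‖, hsin_norm] at hle
  exact le_of_mul_le_mul_left hle (norm_pos_iff.2 (inv_ne_zero
    (Complex.ofReal_ne_zero.2 hcos.ne')))

theorem norm_sub_le_two_mul_sin (hφ : IsBernstein σ M φ) (hσ : 0 < σ) {a b : ℝ}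
    (hab : σ * |a - b| ≤ Real.pi) : ‖φ a - φ b‖ ≤ 2 * Real.sin (σ * |a - b| / 2) * M := by
  wlog hba : b ≤ a generalizing a b
  · rw [norm_sub_rev, abs_sub_comm]
    exact this (abs_sub_comm a b ▸ hab) (le_of_not_ge hba)
  rw [abs_of_nonneg (sub_nonneg.2 hba)] at hab ⊢
  rcases hba.eq_or_lt with rfl | hba
  · simp
  rcases hab.eq_or_lt with hab | hab
  · simpa [hab] using hφ.norm_sub_le_two_mul a b
  have hscaled : IsBernstein 1 M fun z => φ (((a + b) / 2 : ℝ) + (σ⁻¹ : ℝ) * z) := by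
    simpa only [Complex.ofReal_im, abs_zero, mul_zero, Real.exp_zero, mul_one,
      abs_of_pos (inv_pos.2 hσ), mul_inv_cancel₀ hσ.ne'] using
      hφ.comp_affine hσ.le (((a + b) / 2 : ℝ) : ℂ) σ⁻¹
  have hshift := hscaled.norm_sub_neg_le (h := σ * (a - b) / 2)
    (half_pos (mul_pos hσ (sub_pos.2 hba))) (by linarith)
  have ha : (((a + b) / 2 : ℝ) : ℂ) + (σ⁻¹ : ℝ) * (σ * (a - b) / 2 : ℝ) = a := by
    norm_cast
    field_simp
    ring
  have hb : (((a + b) / 2 : ℝ) : ℂ) + (σ⁻¹ : ℝ) * -(σ * (a - b) / 2 : ℝ) = b := by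
    norm_cast
    field_simp
    ring
  rwa [ha, hb] at hshift

theorem norm_sub_le_mul (hφ : IsBernstein σ M φ) (hσ : 0 < σ) (a b : ℝ) :
    ‖φ a - φ b‖ ≤ σ * M * |a - b| := by
  have hM := hφ.nonneg
  rcases le_total (σ * |a - b|) Real.pi with hab | hab
  · have hsin := Real.sin_le (x := σ * |a - b| / 2) (by positivity)
    nlinarith [hφ.norm_sub_le_two_mul_sin hσ hab]
  · nlinarith [hφ.norm_sub_le_two_mul a b, Real.two_le_pi]

theorem deriv (hφ : IsBernstein σ M φ) (hσ : 0 < σ) : IsBernstein σ (σ * M) (deriv φ) where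
  differentiable := hφ.differentiable.deriv
  norm_le z := by
    have hline : IsBernstein σ (M * Real.exp (σ * |z.im|)) fun w => φ (z + w) := by
      simpa using hφ.comp_affine hσ.le z 1
    have hderiv : HasDerivAt (fun t : ℝ => φ (z + t)) (_root_.deriv φ z) 0 := by
      have hadd : HasDerivAt (fun t : ℝ => z + t) 1 0 :=
        (HasDerivAt.ofReal_comp (hasDerivAt_id 0)).const_add z
      simpa [Function.comp_def] using HasDerivAt.scomp (h := fun t : ℝ => z + t) 0
        (hφ.differentiable (z + (0 : ℝ))).hasDerivAt hadd
    have hline_nonneg := hline.nonneg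
    rw [mul_assoc]
    exact hderiv.le_of_lip' (by positivity) (Eventually.of_forall fun t => by
      simpa using hline.norm_sub_le_mul hσ t 0)

theorem iteratedDeriv (hφ : IsBernstein σ M φ) (hσ : 0 < σ) (n : ℕ) :
    IsBernstein σ (σ ^ n * M) (iteratedDeriv n φ) := by
  induction n with
  | zero => simpa using hφ
  | succ n ih =>
    rw [iteratedDeriv_succ, pow_succ', mul_assoc]
    exact ih.deriv hσ

end IsBernstein

section ExponentialType

variable {E : Type*} [NormedAddCommGroup E] [NormedSpace ℂ E] {G : ℂ → E} {C M τ : ℝ}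

theorem norm_le_mul_exp_im_of_bounded_on_real (hG : Differentiable ℂ G) (hτ : 0 ≤ τ)
    (hC : ∀ z, ‖G z‖ ≤ C * Real.exp (τ * ‖z‖)) (hM : ∀ x : ℝ, ‖G x‖ ≤ M) {w : ℂ}
    (hw : 0 ≤ w.im) : ‖G w‖ ≤ M * Real.exp (τ * w.im) := by
  -- The exponential factor makes `g` bounded along the positive real axis.
  set g : ℂ → E := fun z => Complex.exp (-(τ * z)) • G (Complex.I * z) with hg
  have hg_diff : Differentiable ℂ g :=
    Differentiable.smul (by fun_prop) (hG.comp (by fun_prop))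
  have hg_norm (z : ℂ) : ‖g z‖ = Real.exp (-(τ * z.re)) * ‖G (Complex.I * z)‖ := by
    simp [hg, norm_smul, Complex.norm_exp]
  have hg_le (z : ℂ) : ‖g z‖ ≤ C * Real.exp (τ * (‖z‖ - z.re)) := by
    have hGz := hC (Complex.I * z)
    rw [norm_mul, Complex.norm_I, one_mul] at hGz
    calc ‖g z‖ ≤ Real.exp (-(τ * z.re)) * (C * Real.exp (τ * ‖z‖)) := by
          rw [hg_norm]
          gcongr
      _ = C * Real.exp (τ * (‖z‖ - z.re)) := by
          rw [mul_left_comm, ← Real.exp_add]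
          ring_nf
  have hC_nonneg : 0 ≤ C := by simpa using (norm_nonneg _).trans (hC 0)
  have hg_imaginary (x : ℝ) : ‖g (x * Complex.I)‖ ≤ M := by
    have harg : Complex.I * (x * Complex.I) = ((-x : ℝ) : ℂ) := by
      push_cast
      linear_combination (x : ℂ) * Complex.I_mul_I
    simpa [hg_norm, harg] using hM (-x)
  have hg_half_plane : ‖g (-Complex.I * w)‖ ≤ M := by
    refine PhragmenLindelof.right_half_plane_of_bounded_on_real hg_diff.diffContOnCl
      ⟨1, one_lt_two, 2 * τ, .of_bound C (Eventually.of_forall fun z => (hg_le z).trans ?_)⟩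
      ⟨C, eventually_map.2 ?_⟩ hg_imaginary (by simpa using hw)
    · rw [Real.rpow_one, Real.norm_of_nonneg (Real.exp_pos _).le]
      have hre := mul_le_mul_of_nonneg_left ((neg_le_abs z.re).trans z.abs_re_le_norm) hτ
      gcongr C * Real.exp ?_
      linarith
    · filter_upwards [eventually_ge_atTop 0] with x hx
      simpa [abs_of_nonneg hx] using hg_le x
  have harg : Complex.I * (-Complex.I * w) = w := by
    linear_combination (-w) * Complex.I_mul_I
  have hre : (-Complex.I * w).re = w.im := by simp
  rwa [hg_norm, harg, hre, Real.exp_neg, inv_mul_le_iff₀' (Real.exp_pos _)] at hg_half_plane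

theorem isBernstein_of_bounded_on_real (hG : Differentiable ℂ G) (hτ : 0 ≤ τ)
    (hC : ∀ z, ‖G z‖ ≤ C * Real.exp (τ * ‖z‖)) (hM : ∀ x : ℝ, ‖G x‖ ≤ M) :
    IsBernstein τ M G where
  differentiable := hG
  norm_le w := by
    rcases le_total 0 w.im with hw | hw
    · rw [abs_of_nonneg hw]
      exact norm_le_mul_exp_im_of_bounded_on_real hG hτ hC hM hw
    · rw [abs_of_nonpos hw]
      have hreflected := norm_le_mul_exp_im_of_bounded_on_real (G := fun z => G (-z))
        (hG.comp differentiable_neg) hτ (fun z => by simpa using hC (-z))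
        (fun x => by simpa using hM (-x)) (w := -w) (by simpa using hw)
      simpa using hreflected

end ExponentialType

section EntireFunctionalCalculus

open FormalMultilinearSeries
open scoped Nat

/-- The Taylor coefficients at the origin. For an entire function `f`, the value of `f` at an
element `T` of a Banach algebra is `ofScalarsSum (taylorCoeff f) T`. -/
noncomputable def taylorCoeff (f : ℂ → ℂ) (n : ℕ) : ℂ := (n ! : ℂ)⁻¹ * iteratedDeriv n f 0

variable {f : ℂ → ℂ} {σ M : ℝ}

theorem hasSum_taylorCoeff_mul_pow (hf : Differentiable ℂ f) (z : ℂ) :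
    HasSum (fun n => taylorCoeff f n * z ^ n) (f z) := by
  simpa [taylorCoeff, mul_assoc, mul_comm, mul_left_comm] using
    Complex.hasSum_taylorSeries_of_entire hf 0 z

theorem IsBernstein.norm_taylorCoeff_le (hf : IsBernstein σ M f) (hσ : 0 < σ) (n : ℕ) :
    ‖taylorCoeff f n‖ ≤ M * (σ ^ n / n !) := by
  have hderiv : ‖_root_.iteratedDeriv n f 0‖ ≤ σ ^ n * M := by
    simpa using (hf.iteratedDeriv hσ n).norm_le 0
  rw [taylorCoeff, norm_mul, norm_inv, Complex.norm_natCast, inv_mul_eq_div, mul_div_left_comm,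
    ← mul_div_assoc]
  gcongr

section BanachAlgebra

variable {𝔸 : Type*} [NormedRing 𝔸] [NormedAlgebra ℂ 𝔸]

theorem radius_ofScalars_taylorCoeff (hf : Differentiable ℂ f) :
    (ofScalars 𝔸 (taylorCoeff f)).radius = ⊤ := by
  refine radius_eq_top_of_summable_norm _ fun r => ?_
  refine Summable.of_norm_bounded_eventually_nat (hasSum_taylorCoeff_mul_pow hf r).summable.norm ?_
  filter_upwards [eventually_gt_atTop 0] with n hn
  rw [norm_mul, norm_mul, norm_norm, norm_pow, norm_pow, Complex.norm_real]
  gcongr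
  exact ofScalars_norm_le 𝔸 (taylorCoeff f) n hn

variable [CompleteSpace 𝔸]

theorem hasSum_ofScalarsSum_taylorCoeff (hf : Differentiable ℂ f) (T : 𝔸) :
    HasSum (fun n => taylorCoeff f n • T ^ n) (ofScalarsSum (taylorCoeff f) T) := by
  simpa only [ofScalars_apply_eq, ofScalarsSum] using (ofScalars 𝔸 (taylorCoeff f)).hasSum (x := T)
    (by simp [radius_ofScalars_taylorCoeff hf])

theorem differentiable_ofScalarsSum_taylorCoeff (hf : Differentiable ℂ f) :
    Differentiable ℂ (ofScalarsSum (taylorCoeff f) : 𝔸 → 𝔸) := by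
  have hball := (ofScalars 𝔸 (taylorCoeff f)).hasFPowerSeriesOnBall
    (by simp [radius_ofScalars_taylorCoeff hf])
  intro T
  exact (hball.analyticAt_of_mem (by simp [radius_ofScalars_taylorCoeff hf])).differentiableAt

theorem IsBernstein.norm_ofScalarsSum_taylorCoeff_le [NormOneClass 𝔸] (hf : IsBernstein σ M f)
    (hσ : 0 < σ) (T : 𝔸) :
    ‖ofScalarsSum (taylorCoeff f) T‖ ≤ M * Real.exp (σ * ‖T‖) := by
  have hexp : HasSum (fun n : ℕ => M * ((σ * ‖T‖) ^ n / n !)) (M * Real.exp (σ * ‖T‖)) := by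
    rw [Real.exp_eq_exp_ℝ]
    exact (NormedSpace.expSeries_div_hasSum_exp (σ * ‖T‖)).mul_left M
  rw [← (hasSum_ofScalarsSum_taylorCoeff hf.differentiable T).tsum_eq]
  refine tsum_of_norm_bounded hexp fun n => ?_
  calc ‖taylorCoeff f n • T ^ n‖ ≤ M * (σ ^ n / n !) * ‖T‖ ^ n := by
        rw [norm_smul]
        have := hf.nonneg
        gcongr
        · exact hf.norm_taylorCoeff_le hσ n
        · exact norm_pow_le T n
    _ = M * ((σ * ‖T‖) ^ n / n !) := by ring

end BanachAlgebra

variable {𝔸 : Type*} [CStarAlgebra 𝔸]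

theorem cfc_eq_ofScalarsSum_taylorCoeff (hf : Differentiable ℂ f) (T : 𝔸) (hT : IsStarNormal T) :
    cfc f T = ofScalarsSum (taylorCoeff f) T := by
  set X : C(spectrum ℂ T, ℂ) := (ContinuousMap.id ℂ).restrict (spectrum ℂ T)
  have hX : ofScalarsSum (taylorCoeff f) X = ⟨_, hf.continuous.continuousOn.domRestrict⟩ := by
    ext x
    have hsum_at := ContinuousMap.hasSum_apply (hasSum_ofScalarsSum_taylorCoeff hf X) x
    exact hsum_at.unique (hasSum_taylorCoeff_mul_pow hf x)
  have hsum := (hasSum_ofScalarsSum_taylorCoeff hf X).map (cfcHom hT) (cfcHom_continuous hT)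
  simp only [Function.comp_def, map_smul, map_pow, hX, X, cfcHom_id] at hsum
  rw [cfc_apply f T hT hf.continuous.continuousOn]
  exact hsum.unique (hasSum_ofScalarsSum_taylorCoeff hf T)

theorem IsBernstein.norm_cfc_le (hf : IsBernstein σ M f) {T : 𝔸} (hT : IsSelfAdjoint T) :
    ‖cfc f T‖ ≤ M :=
  _root_.norm_cfc_le hf.nonneg fun x hx => by
    rw [hT.mem_spectrum_eq_re hx]
    exact hf.norm_ofReal_le _

theorem isSelfAdjoint_add_ofReal_smul {B D : 𝔸} (hB : IsSelfAdjoint B) (hD : IsSelfAdjoint D)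
    (x : ℝ) : IsSelfAdjoint (B + (x : ℂ) • D) :=
  hB.add (IsSelfAdjoint.smul (Complex.conj_ofReal x) hD)

theorem IsBernstein.ofScalarsSum_taylorCoeff_add_smul (hf : IsBernstein σ M f) (hσ : 0 < σ)
    {B D : 𝔸} (hB : IsSelfAdjoint B) (hD : IsSelfAdjoint D) :
    IsBernstein (σ * ‖D‖) M fun z : ℂ => ofScalarsSum (taylorCoeff f) (B + z • D) := by
  have hdiff : Differentiable ℂ fun z : ℂ => ofScalarsSum (taylorCoeff f) (B + z • D) :=
    (differentiable_ofScalarsSum_taylorCoeff hf.differentiable).comp (by fun_prop)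
  have hreal (x : ℝ) : ‖ofScalarsSum (taylorCoeff f) (B + (x : ℂ) • D)‖ ≤ M := by
    have hsa := isSelfAdjoint_add_ofReal_smul hB hD x
    rw [← cfc_eq_ofScalarsSum_taylorCoeff hf.differentiable _ hsa.isStarNormal]
    exact hf.norm_cfc_le hsa
  refine isBernstein_of_bounded_on_real (C := M * Real.exp (σ * ‖B‖)) hdiff (by positivity)
    (fun z => ?_) hreal
  have hM := hf.nonneg
  rcases subsingleton_or_nontrivial 𝔸 with _ | _
  · rw [ofScalarsSum_of_subsingleton, norm_zero]
    positivity
  have hnorm : ‖B + z • D‖ ≤ ‖B‖ + ‖z‖ * ‖D‖ := norm_smul z D ▸ norm_add_le _ _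
  calc ‖ofScalarsSum (taylorCoeff f) (B + z • D)‖ ≤ M * Real.exp (σ * (‖B‖ + ‖z‖ * ‖D‖)) :=
        (hf.norm_ofScalarsSum_taylorCoeff_le hσ _).trans (by gcongr)
    _ = M * Real.exp (σ * ‖B‖) * Real.exp (σ * ‖D‖ * ‖z‖) := by
        rw [mul_assoc, ← Real.exp_add]
        ring_nf

end EntireFunctionalCalculus

theorem stmt_0_general {𝔸 : Type*} [CStarAlgebra 𝔸] (σ : ℝ) (hσ : 0 < σ) (f : ℂ → ℂ)
    (hf : Differentiable ℂ f) (M : ℝ) (hgrowth : ∀ z : ℂ, ‖f z‖ ≤ M * Real.exp (σ * |z.im|))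
    (β : ℝ → ℝ)
    (hβ₁ : ∀ t : ℝ, 0 ≤ t → t ≤ Real.pi → β t = 2 * Real.sin (t / 2))
    (hβ₂ : ∀ t : ℝ, Real.pi < t → β t = 2)
    (A B : 𝔸) (hA : IsSelfAdjoint A) (hB : IsSelfAdjoint B) :
    ‖cfc f A - cfc f B‖ ≤ β (σ * ‖A - B‖) * M ∧
      ‖cfc f A - cfc f B‖ ≤ σ * M * ‖A - B‖ := by
  rcases eq_or_ne A B with rfl | hAB
  · simp [hβ₁ 0 le_rfl Real.pi_pos.le]
  have hτ : 0 < σ * ‖A - B‖ := mul_pos hσ (norm_sub_pos_iff.2 hAB)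
  have hf_bernstein : IsBernstein σ M f := ⟨hf, hgrowth⟩
  set G : ℂ → 𝔸 := fun z => FormalMultilinearSeries.ofScalarsSum (taylorCoeff f) (B + z • (A - B))
  have hG : IsBernstein (σ * ‖A - B‖) M G :=
    hf_bernstein.ofScalarsSum_taylorCoeff_add_smul hσ hB (hA.sub hB)
  have hG_one : G (1 : ℝ) = cfc f A := by
    simp [G, cfc_eq_ofScalarsSum_taylorCoeff hf A hA.isStarNormal]
  have hG_zero : G (0 : ℝ) = cfc f B := by
    simp [G, cfc_eq_ofScalarsSum_taylorCoeff hf B hB.isStarNormal]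
  rw [← hG_one, ← hG_zero]
  refine ⟨?_, by simpa [mul_right_comm] using hG.norm_sub_le_mul hτ 1 0⟩
  rcases le_or_gt (σ * ‖A - B‖) Real.pi with hle | hgt
  · rw [hβ₁ _ hτ.le hle]
    simpa using hG.norm_sub_le_two_mul_sin hτ (a := 1) (b := 0) (by simpa using hle)
  · rw [hβ₂ _ hgt]
    exact hG.norm_sub_le_two_mul 1 0

/-- Operator Bernstein inequality with constant 1: if `f` is an entire function,
bounded on the real line with supremum `M` and satisfying
`‖f z‖ ≤ M * exp (σ * |Im z|)` (i.e. `f ∈ 𝓔_σ ∩ L^∞(ℝ)`), then for all bounded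
self-adjoint operators `A`, `B` on a complex Hilbert space,
`‖f(A) - f(B)‖ ≤ β (σ * ‖A - B‖) * M ≤ σ * M * ‖A - B‖`, where
`β t = 2 sin (t/2)` for `0 ≤ t ≤ π` and `β t = 2` for `t > π`. -/
theorem stmt_0 {H : Type*} [NormedAddCommGroup H] [InnerProductSpace ℂ H] [CompleteSpace H]
    (σ : ℝ) (hσ : 0 < σ) (f : ℂ → ℂ) (hf : Differentiable ℂ f)
    (M : ℝ) (hM : IsLUB (Set.range fun x : ℝ => ‖f (x : ℂ)‖) M)
    (hgrowth : ∀ z : ℂ, ‖f z‖ ≤ M * Real.exp (σ * |z.im|))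
    (β : ℝ → ℝ)
    (hβ₁ : ∀ t : ℝ, 0 ≤ t → t ≤ Real.pi → β t = 2 * Real.sin (t / 2))
    (hβ₂ : ∀ t : ℝ, Real.pi < t → β t = 2)
    (A B : H →L[ℂ] H) (hA : IsSelfAdjoint A) (hB : IsSelfAdjoint B) :
    ‖cfc f A - cfc f B‖ ≤ β (σ * ‖A - B‖) * M ∧
      ‖cfc f A - cfc f B‖ ≤ σ * M * ‖A - B‖ :=
  stmt_0_general σ hσ f hf M hgrowth β hβ₁ hβ₂ A B hA hB
end

section
/- Bernstein inequality for unitary operators: Let n be a positive integer and let c : ℤ → ℂ vanish outside {−n, …, n}, and put f(z) = Σ_{k=−n}^{n} c_k z^k (a trigonometric polynomial of degree at most n). Then for all unitary operators U and V on a complex Hilbert space, ‖Σ_{k=−n}^{n} c_k U^k − Σ_{k=−n}^{n} c_k V^k‖ ≤ n · (sup_{|z|=1} |f(z)|) · ‖U − V‖, where for negative k the power U^k means (U*)^{−k}. -/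
/-!
Let `f(z) = ∑ c k * z ^ k` have degree at most `n`, with `|f| ≤ C` on the unit circle. For a unitary
`w` and a self-adjoint `K` with `K * K = 1`, the function `t ↦ f (w * exp (t * I • K))` is a
trigonometric polynomial of degree at most `n` with operator coefficients, bounded by `C` because
its values are functions of unitaries. M. Riesz's interpolation formula expresses its derivative
through its values, hence bounds it by `n * C`; and that derivative is a divided difference of `f`
at `w`, applied to `w * K`.

Taking `w` to be diagonal with entries `u`, `v` and `K = [0, x; star x, 0]` with `x` unitary turns
this into a bound for the divided difference at `(u, v)` applied to `u * x`. As a self-adjoint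
contraction is the average of two unitaries, the bound holds for self-adjoint contractions `x`, and
then, by the same `2 × 2` trick, for all contractions. The theorem follows, since the divided
difference maps `u - v` to `f u - f v`.
-/

open Finset Complex Filter Topology

section RieszInterpolation

/-- The angles `θ` with `exp (2 * n * θ * I) = -1`: the nodes of M. Riesz's interpolation formula
for trigonometric polynomials of degree at most `n`. -/
noncomputable def rieszAngle (n j : ℕ) : ℝ := (2 * j + 1) * Real.pi / (2 * n)

/-- The nodes `exp (θ * I)` on the unit circle, with `θ` running over `rieszAngle n`. -/
noncomputable def rieszNode (n j : ℕ) : ℂ := exp (rieszAngle n j * I)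

/-- The coefficients of M. Riesz's formula `-m = ∑ j, rieszWeight n j * rieszNode n j ^ m`. -/
noncomputable def rieszWeight (n j : ℕ) : ℂ :=
  rieszNode n j ^ n / (n * ‖1 - rieszNode n j‖ ^ 2)

variable {n : ℕ}

lemma norm_rieszNode (n j : ℕ) : ‖rieszNode n j‖ = 1 :=
  norm_exp_ofReal_mul_I _

lemma rieszNode_ne_zero (n j : ℕ) : rieszNode n j ≠ 0 :=
  exp_ne_zero _

lemma rieszNode_pow_two_mul (hn : n ≠ 0) (j : ℕ) : rieszNode n j ^ (2 * n) = -1 := by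
  have hn' : (n : ℂ) ≠ 0 := Nat.cast_ne_zero.2 hn
  rw [rieszNode, ← exp_nat_mul, ← exp_pi_mul_I, exp_eq_exp_iff_exists_int]
  refine ⟨j, ?_⟩
  push_cast [rieszAngle]
  field_simp
  ring

lemma rieszNode_eq_mul_pow (hn : n ≠ 0) (j : ℕ) :
    rieszNode n j = rieszNode n 0 * exp (2 * Real.pi * I / (2 * n : ℕ)) ^ j := by
  have hn' : (n : ℂ) ≠ 0 := Nat.cast_ne_zero.2 hn
  rw [rieszNode, rieszNode, ← exp_nat_mul, ← exp_add]
  congr 1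
  push_cast [rieszAngle]
  field_simp
  ring

lemma sum_rieszNode_pow_eq_zero (hn : n ≠ 0) {l : ℕ} (hl : ¬2 * n ∣ l) :
    ∑ j ∈ range (2 * n), rieszNode n j ^ l = 0 := by
  set ζ : ℂ := exp (2 * Real.pi * I / (2 * n : ℕ))
  have hprim : IsPrimitiveRoot ζ (2 * n) := isPrimitiveRoot_exp _ (by omega)
  have hζl : ζ ^ l ≠ 1 := fun h => hl (hprim.dvd_of_pow_eq_one l h)
  calc ∑ j ∈ range (2 * n), rieszNode n j ^ l
      = ∑ j ∈ range (2 * n), rieszNode n 0 ^ l * (ζ ^ l) ^ j :=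
        sum_congr rfl fun j _ => by rw [rieszNode_eq_mul_pow hn j, mul_pow, pow_right_comm]
    _ = 0 := by
        rw [← mul_sum, geom_sum_eq hζl, pow_right_comm, hprim.pow_eq_one, one_pow, sub_self,
          zero_div, mul_zero]

lemma one_sub_sq_mul_sum_sub_mul_pow {R : Type*} [CommRing R] (a w : R) (N : ℕ) :
    (1 - w) ^ 2 * ∑ p ∈ range N, (a - p) * w ^ p =
      a * (1 - w) - w + w ^ N * ((N - a) * (1 - w) + w) := by
  induction N with
  | zero => simp
  | succ N ih => rw [sum_range_succ, mul_add, ih]; push_cast; ring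

lemma norm_one_sub_sq_mul_self {w : ℂ} (hw : ‖w‖ = 1) :
    (‖1 - w‖ ^ 2 : ℂ) * w = -(1 - w) ^ 2 := by
  have hconj : w * (starRingEnd ℂ) w = 1 := by simp [mul_conj', hw]
  rw [← mul_conj', map_sub, map_one]
  linear_combination (w - 1) * hconj

lemma sum_sub_mul_pow_eq_two_div {w : ℂ} (hw : ‖w‖ = 1) (hwn : w ^ (2 * n) = -1) :
    ∑ p ∈ range (2 * n), ((n : ℂ) - p) * w ^ p = 2 / ‖1 - w‖ ^ 2 := by
  have hw0 : w ≠ 0 := norm_ne_zero_iff.1 (hw.trans_ne one_ne_zero)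
  have hw1 : (‖1 - w‖ ^ 2 : ℂ) ≠ 0 := by
    have : 1 - w ≠ 0 := sub_ne_zero.2 fun h => by norm_num [← h] at hwn
    simpa using this
  rw [eq_div_iff hw1]
  apply mul_right_cancel₀ hw0
  have hsum := one_sub_sq_mul_sum_sub_mul_pow (n : ℂ) w (2 * n)
  rw [hwn] at hsum
  push_cast at hsum
  linear_combination (∑ p ∈ range (2 * n), ((n : ℂ) - p) * w ^ p) * norm_one_sub_sq_mul_self hw -
    hsum

lemma two_mul_mul_rieszWeight (hn : n ≠ 0) (j : ℕ) :
    2 * n * rieszWeight n j =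
      rieszNode n j ^ n * ∑ p ∈ range (2 * n), ((n : ℂ) - p) * rieszNode n j ^ p := by
  have hn' : (n : ℂ) ≠ 0 := Nat.cast_ne_zero.2 hn
  rw [sum_sub_mul_pow_eq_two_div (norm_rieszNode n j) (rieszNode_pow_two_mul hn j), rieszWeight]
  field_simp

lemma sum_sub_mul_sum_rieszNode_pow_add (hn : n ≠ 0) {q : ℕ} (hq : q ≤ 2 * n) :
    ∑ p ∈ range (2 * n), ((n : ℂ) - p) * ∑ j ∈ range (2 * n), rieszNode n j ^ (q + p) =
      2 * n * (n - q) := by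
  -- the only exponent `q + p` divisible by `2 * n` is `0` if `q = 0`, and `2 * n` otherwise
  obtain rfl | hq0 := Nat.eq_zero_or_pos q
  · rw [sum_eq_single_of_mem 0 (mem_range.2 (by omega))]
    · simp only [Nat.cast_zero, sub_zero, add_zero, pow_zero, sum_const, card_range, nsmul_eq_mul,
        Nat.cast_mul, Nat.cast_ofNat, mul_one]
      ring
    · intro p hp hp0
      rw [sum_rieszNode_pow_eq_zero hn, mul_zero]
      rw [zero_add]
      exact Nat.not_dvd_of_pos_of_lt (by omega) (mem_range.1 hp)
  · rw [sum_eq_single_of_mem (2 * n - q) (mem_range.2 (by omega))]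
    · simp only [Nat.add_sub_cancel' hq, rieszNode_pow_two_mul hn, Nat.cast_sub hq, Nat.cast_mul,
        Nat.cast_ofNat, sum_const, card_range, nsmul_eq_mul]
      ring
    · intro p hp hpq
      rw [sum_rieszNode_pow_eq_zero hn, mul_zero]
      rintro ⟨t, ht⟩
      have ht2 : t < 2 := by rw [mem_range] at hp; nlinarith
      interval_cases t <;> omega

lemma sum_rieszWeight_mul_rieszNode_zpow {m : ℤ} (hm : m.natAbs ≤ n) :
    ∑ j ∈ range (2 * n), rieszWeight n j * rieszNode n j ^ m = -m := by
  obtain rfl | hn := eq_or_ne n 0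
  · simp_all
  have hn' : (2 * n : ℂ) ≠ 0 := by simpa using hn
  obtain ⟨q, hq⟩ : ∃ q : ℕ, (q : ℤ) = n + m := ⟨(n + m).toNat, by omega⟩
  have hpow (j p : ℕ) : rieszNode n j ^ n * rieszNode n j ^ p * rieszNode n j ^ m =
      rieszNode n j ^ (q + p) := by
    simp only [← zpow_natCast, ← zpow_add₀ (rieszNode_ne_zero n j)]
    congr 1
    push_cast
    omega
  apply mul_left_cancel₀ hn'
  calc 2 * n * ∑ j ∈ range (2 * n), rieszWeight n j * rieszNode n j ^ m
      = ∑ j ∈ range (2 * n), ∑ p ∈ range (2 * n), ((n : ℂ) - p) * rieszNode n j ^ (q + p) := by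
        simp only [mul_sum, ← mul_assoc, two_mul_mul_rieszWeight hn, ← hpow, sum_mul]
        exact sum_congr rfl fun j _ => sum_congr rfl fun p _ => by ring
    _ = 2 * n * (n - q) := by
        rw [sum_comm]
        simp only [← mul_sum]
        exact sum_sub_mul_sum_rieszNode_pow_add hn (by omega)
    _ = 2 * n * -m := by
        have : (q : ℂ) = n + m := by exact_mod_cast hq
        rw [this]; ring

lemma sum_norm_rieszWeight (n : ℕ) : ∑ j ∈ range (2 * n), ‖rieszWeight n j‖ = n := by
  have hnorm (j : ℕ) : (‖rieszWeight n j‖ : ℂ) = rieszWeight n j * rieszNode n j ^ (-n : ℤ) := by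
    have := rieszNode_ne_zero n j
    rw [rieszWeight, norm_div, norm_pow, norm_rieszNode, one_pow, zpow_neg, zpow_natCast,
      div_mul_eq_mul_div, mul_inv_cancel₀ (pow_ne_zero n this)]
    simp
  have := sum_rieszWeight_mul_rieszNode_zpow (n := n) (m := -n) (by simp)
  simp only [← hnorm] at this
  push_cast [neg_neg] at this
  exact_mod_cast this

end RieszInterpolation

section TrigPoly

variable {E : Type*} [AddCommGroup E] [Module ℂ E] {A : Type*} [Ring A] [Algebra ℂ A] {n : ℕ}

variable (E n) in
/-- The trigonometric polynomials `t ↦ ∑ m, exp (m * t * I) • a m` of degree at most `n` with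
coefficients in `E`. -/
def trigPoly : Submodule ℂ (ℝ → E) :=
  Submodule.span ℂ {F | ∃ m : ℤ, m.natAbs ≤ n ∧ ∃ a : E, F = fun t : ℝ => exp (m * t * I) • a}

lemma exp_smul_mem_trigPoly {m : ℤ} (hm : m.natAbs ≤ n) (a : E) :
    (fun t : ℝ => exp (m * t * I) • a) ∈ trigPoly E n :=
  Submodule.subset_span ⟨m, hm, a, rfl⟩

lemma const_mem_trigPoly (a : E) : (fun _ : ℝ => a) ∈ trigPoly E n := by
  simpa using exp_smul_mem_trigPoly (n := n) (m := 0) (by simp) a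

lemma trigPoly_mono {k : ℕ} (hkn : k ≤ n) : trigPoly E k ≤ trigPoly E n :=
  Submodule.span_mono fun _ ⟨m, hm, h⟩ => ⟨m, hm.trans hkn, h⟩

lemma mul_mem_trigPoly {k : ℕ} {F G : ℝ → A} (hF : F ∈ trigPoly A k) (hG : G ∈ trigPoly A n) :
    F * G ∈ trigPoly A (k + n) := by
  have hFG := Submodule.mul_mem_mul hF hG
  rw [trigPoly, trigPoly, Submodule.span_mul_span] at hFG
  refine Submodule.span_mono ?_ hFG
  rintro _ ⟨_, ⟨l, hl, a, rfl⟩, _, ⟨m, hm, b, rfl⟩, rfl⟩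
  refine ⟨l + m, by omega, a * b, funext fun t => ?_⟩
  simp only [Pi.mul_apply, smul_mul_smul_comm, ← exp_add]
  congr 2
  push_cast
  ring

lemma pow_mem_trigPoly {F : ℝ → A} (hF : F ∈ trigPoly A n) (k : ℕ) :
    F ^ k ∈ trigPoly A (k * n) := by
  induction k with
  | zero => exact pow_zero F ▸ const_mem_trigPoly (1 : A)
  | succ k ih => simpa only [pow_succ, Nat.succ_mul] using mul_mem_trigPoly ih hF

lemma star_mem_trigPoly [StarAddMonoid E] [StarModule ℂ E] {F : ℝ → E} (hF : F ∈ trigPoly E n) :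
    star F ∈ trigPoly E n := by
  induction hF using Submodule.span_induction with
  | mem F hF =>
    obtain ⟨m, hm, a, rfl⟩ := hF
    convert exp_smul_mem_trigPoly (m := -m) (by simpa using hm) (star a) using 2 with t
    simp [← exp_conj]
  | zero => simp
  | add F G _ _ hF hG => simpa using add_mem hF hG
  | smul c F _ hF => simpa using Submodule.smul_mem _ _ hF

lemma coe_zpow_mem_trigPoly [StarRing A] [StarModule ℂ A] {g : ℝ → unitary A}
    (hg : (fun t => (g t : A)) ∈ trigPoly A 1) (k : ℤ) :
    (fun t => ((g t ^ k : unitary A) : A)) ∈ trigPoly A k.natAbs := by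
  have hpow (m : ℕ) : (fun t => (g t : A)) ^ m ∈ trigPoly A m := by
    simpa only [mul_one] using pow_mem_trigPoly hg m
  obtain ⟨m, rfl | rfl⟩ := k.eq_nat_or_neg
  · simpa [Pi.pow_def] using hpow m
  · simpa [← Unitary.star_eq_inv, Pi.star_def, Pi.pow_def] using star_mem_trigPoly (hpow m)

end TrigPoly

section Bernstein

variable {E : Type*} [NormedAddCommGroup E] [NormedSpace ℂ E] {n : ℕ}

lemma hasDerivAt_of_mem_trigPoly {F : ℝ → E} (hF : F ∈ trigPoly E n) (t : ℝ) :
    HasDerivAt F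
      (-I • ∑ j ∈ range (2 * n), rieszWeight n j • F (t + rieszAngle n j)) t := by
  induction hF using Submodule.span_induction with
  | mem F hF =>
    obtain ⟨m, hm, a, rfl⟩ := hF
    have hderiv : HasDerivAt (fun t : ℝ => exp (m * t * I)) (exp (m * t * I) * (m * I)) t := by
      simpa using (((hasDerivAt_id (t : ℂ)).const_mul (m : ℂ)).mul_const I).cexp.comp_ofReal
    convert hderiv.smul_const a using 1
    have hshift (j : ℕ) : exp (m * (t + rieszAngle n j : ℝ) * I) =
        exp (m * t * I) * rieszNode n j ^ m := by
      rw [rieszNode, ← exp_int_mul, ← exp_add]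
      congr 1
      push_cast
      ring
    simp only [hshift, smul_smul, ← sum_smul, mul_left_comm (rieszWeight n _), ← mul_sum,
      sum_rieszWeight_mul_rieszNode_zpow hm]
    congr 1
    ring
  | zero => simp
  | add F G _ _ hF hG =>
    simpa only [Pi.add_apply, smul_add, sum_add_distrib] using hF.add hG
  | smul c F _ hF =>
    convert hF.const_smul c using 1
    simp only [Pi.smul_apply, smul_comm _ c, smul_sum]

lemma norm_deriv_le_of_mem_trigPoly {F : ℝ → E} (hF : F ∈ trigPoly E n) {C : ℝ}
    (hC : ∀ t, ‖F t‖ ≤ C) (t : ℝ) : ‖deriv F t‖ ≤ n * C := by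
  rw [(hasDerivAt_of_mem_trigPoly hF t).deriv, norm_smul, norm_neg, norm_I, one_mul,
    ← sum_norm_rieszWeight, sum_mul]
  refine norm_sum_le_of_le _ fun j _ => ?_
  rw [norm_smul]
  gcongr
  exact hC _

end Bernstein

section DividedDifference

variable {A : Type*} [Ring A] [StarRing A] (s : Finset ℤ) (c : ℤ → ℂ) (u v : unitary A)

lemma coe_zpow_mul_sub_mul_coe_zpow (j k : ℤ) (x : A) :
    ((u ^ j : unitary A) : A) * (u * x - x * v) * (v ^ (k - 1 - j) : unitary A) =
      (u ^ (j + 1) : unitary A) * x * (v ^ (k - (j + 1)) : unitary A) -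
        (u ^ j : unitary A) * x * (v ^ (k - j) : unitary A) := by
  rw [zpow_add_one, show k - j = 1 + (k - 1 - j) by ring, show k - (j + 1) = k - 1 - j by ring,
    zpow_one_add, Submonoid.coe_mul, Submonoid.coe_mul]
  noncomm_ring

variable [Algebra ℂ A]

/-- The divided difference of `z ^ k` at unitaries `u` and `v`, as the linear map
`x ↦ ∑ j, u ^ j * x * v ^ (k - 1 - j)` over `0 ≤ j < k`. For `k < 0` it is minus the same sum
over `k ≤ j < 0`, here reindexed by `j ↦ -1 - j`. -/
def zpowDividedDifference (k : ℤ) : A →ₗ[ℂ] A :=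
  ∑ j ∈ range k.toNat,
      LinearMap.mulLeftRight ℂ
        (((u ^ (j : ℤ) : unitary A) : A), ((v ^ (k - 1 - j) : unitary A) : A)) -
    ∑ j ∈ range (-k).toNat,
      LinearMap.mulLeftRight ℂ
        (((u ^ (-1 - j : ℤ) : unitary A) : A), ((v ^ (k + j) : unitary A) : A))

/-- The divided difference `(f(u) x - x f(v)) / (u x - x v)` of `f(z) = ∑ k ∈ s, c k * z ^ k`,
as a linear map defined for all `x`. -/
def dividedDifference : A →ₗ[ℂ] A :=
  ∑ k ∈ s, c k • zpowDividedDifference u v k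

lemma zpowDividedDifference_apply (k : ℤ) (x : A) :
    zpowDividedDifference u v k x =
      ∑ j ∈ range k.toNat, ((u ^ (j : ℤ) : unitary A) : A) * x * (v ^ (k - 1 - j) : unitary A) -
      ∑ j ∈ range (-k).toNat,
        ((u ^ (-1 - j : ℤ) : unitary A) : A) * x * (v ^ (k + j) : unitary A) := by
  simp [zpowDividedDifference]

lemma dividedDifference_apply (x : A) :
    dividedDifference s c u v x = ∑ k ∈ s, c k • zpowDividedDifference u v k x := by
  simp [dividedDifference]

lemma zpowDividedDifference_mul_sub_mul (k : ℤ) (x : A) :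
    zpowDividedDifference u v k (u * x - x * v) =
      (u ^ k : unitary A) * x - x * (v ^ k : unitary A) := by
  let h (j : ℤ) : A := (u ^ j : unitary A) * x * (v ^ (k - j) : unitary A)
  have hpos (j : ℕ) : ((u ^ (j : ℤ) : unitary A) : A) * (u * x - x * v) *
      (v ^ (k - 1 - j) : unitary A) = h (j + 1 : ℕ) - h j :=
    coe_zpow_mul_sub_mul_coe_zpow u v j k x
  have hneg (j : ℕ) : ((u ^ (-1 - j : ℤ) : unitary A) : A) * (u * x - x * v) *
      (v ^ (k + j) : unitary A) = h (-(j : ℕ)) - h (-(j + 1 : ℕ)) := by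
    convert coe_zpow_mul_sub_mul_coe_zpow u v (-1 - j) k x using 6 <;> push_cast <;> ring
  rw [zpowDividedDifference_apply, sum_congr rfl fun j _ => hpos j,
    sum_congr rfl fun j _ => hneg j, sum_range_sub fun j : ℕ => h j,
    sum_range_sub' fun j : ℕ => h (-j)]
  obtain hk | hk := le_total 0 k <;> simp [h, hk, Int.toNat_of_nonpos]

lemma dividedDifference_mul_sub_mul (x : A) :
    dividedDifference s c u v (u * x - x * v) =
      (∑ k ∈ s, c k • ((u ^ k : unitary A) : A)) * x -
        x * ∑ k ∈ s, c k • ((v ^ k : unitary A) : A) := by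
  simp only [dividedDifference_apply, zpowDividedDifference_mul_sub_mul, smul_sub,
    sum_sub_distrib, sum_mul, mul_sum, smul_mul_assoc, mul_smul_comm]

end DividedDifference

section Derivative

variable {A : Type*} [NormedRing A] [NormedAlgebra ℂ A] [StarRing A] [ContinuousStar A]

lemma hasDerivAt_coe_unitary_zpow {g : ℝ → unitary A} {g' : A} {t : ℝ}
    (hg : HasDerivAt (fun t => (g t : A)) g' t) (k : ℤ) :
    HasDerivAt (fun t => ((g t ^ k : unitary A) : A))
      (zpowDividedDifference (g t) (g t) k g') t := by
  have hslope (r : ℝ) : zpowDividedDifference (g r) (g t) k (slope (fun t => (g t : A)) t r) =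
      slope (fun t => ((g t ^ k : unitary A) : A)) t r := by
    have := zpowDividedDifference_mul_sub_mul (g r) (g t) k 1
    simp only [mul_one, one_mul] at this
    rw [slope_def_module, slope_def_module, LinearMap.map_smul_of_tower, this]
  have hcont : Tendsto g (𝓝[≠] t) (𝓝 (g t)) :=
    tendsto_subtype_rng.2 (hg.continuousAt.tendsto.mono_left nhdsWithin_le_nhds)
  have hzpow (j : ℤ) : Tendsto (fun r => ((g r ^ j : unitary A) : A)) (𝓝[≠] t)
      (𝓝 (g t ^ j : unitary A)) :=
    tendsto_subtype_rng.1 (hcont.zpow j)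
  rw [hasDerivAt_iff_tendsto_slope] at hg ⊢
  refine Tendsto.congr hslope ?_
  simp only [zpowDividedDifference_apply]
  exact (tendsto_finsetSum _ fun j _ => ((hzpow _).mul hg).mul_const _).sub
    (tendsto_finsetSum _ fun j _ => ((hzpow _).mul hg).mul_const _)

end Derivative

section SymmetryRotation

variable {A : Type*} [Ring A] [Algebra ℂ A]

/-- The path `t ↦ exp (t * I • K)`, for a symmetry `K`, i.e. a self-adjoint `K` with `K * K = 1`;
it is written here in the closed form that only a symmetry has. -/
noncomputable def symmetryRotation (K : A) (t : ℝ) : A :=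
  (Real.cos t : ℂ) • 1 + (Real.sin t * I) • K

lemma symmetryRotation_mem_trigPoly (K : A) : symmetryRotation K ∈ trigPoly A 1 := by
  convert add_mem (exp_smul_mem_trigPoly (n := 1) (m := 1) (by simp) ((2⁻¹ : ℂ) • (1 + K)))
    (exp_smul_mem_trigPoly (n := 1) (m := -1) (by simp) ((2⁻¹ : ℂ) • (1 - K))) using 1
  funext t
  have hexp_neg : exp ((-1 : ℤ) * t * I) = cos t - sin t * I := by
    simpa [sub_eq_add_neg] using exp_mul_I (-t)
  rw [symmetryRotation, Pi.add_apply, hexp_neg, Int.cast_one, one_mul, exp_mul_I, ofReal_cos,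
    ofReal_sin]
  module

lemma symmetryRotation_mem_unitary [StarRing A] [StarModule ℂ A] {K : A}
    (hK : IsSelfAdjoint K) (hKK : K * K = 1) (t : ℝ) :
    symmetryRotation K t ∈ unitary A := by
  have hcs : (Real.cos t : ℂ) ^ 2 + (Real.sin t : ℂ) ^ 2 = 1 := by
    exact_mod_cast Real.cos_sq_add_sin_sq t
  have hstar : star (symmetryRotation K t) =
      (Real.cos t : ℂ) • 1 - (Real.sin t * I) • K := by
    simp [symmetryRotation, hK.star_eq, sub_eq_add_neg, -ofReal_cos, -ofReal_sin]
  have hsin : (Real.sin t * I) * (Real.sin t * I) = -(Real.sin t : ℂ) ^ 2 := by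
    rw [mul_mul_mul_comm, I_mul_I]; ring
  have hone : (Real.cos t : ℂ) ^ 2 • (1 : A) + (Real.sin t : ℂ) ^ 2 • (1 : A) = 1 := by
    rw [← add_smul, hcs, one_smul]
  rw [Unitary.mem_iff, hstar, symmetryRotation]
  constructor <;> refine Eq.trans ?_ hone <;>
  · simp only [mul_add, add_mul, mul_sub, sub_mul, smul_mul_smul_comm, mul_one, one_mul, hKK, hsin]
    module

lemma hasDerivAt_symmetryRotation_zero {A : Type*} [NormedRing A] [NormedAlgebra ℂ A] (K : A) :
    HasDerivAt (symmetryRotation K) (I • K) 0 := by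
  have hcos := (Real.hasDerivAt_cos 0).ofReal_comp.smul_const (1 : A)
  have hsin := ((Real.hasDerivAt_sin 0).ofReal_comp.mul_const I).smul_const K
  exact (hcos.fun_add hsin).congr_deriv (by simp)

end SymmetryRotation

section CStarAlgebra

variable {A : Type*} [CStarAlgebra A]

lemma norm_sum_smul_coe_zpow_le {s : Finset ℤ} {c : ℤ → ℂ} {C : ℝ}
    (hf : ∀ z : ℂ, ‖z‖ = 1 → ‖∑ k ∈ s, c k * z ^ k‖ ≤ C) (u : unitary A) :
    ‖∑ k ∈ s, c k • ((u ^ k : unitary A) : A)‖ ≤ C := by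
  have hspec : ∀ z ∈ spectrum ℂ (u : A), ‖z‖ = 1 := fun z hz => by
    simpa using Unitary.spectrum_subset_circle u hz
  have hcont (k : ℤ) : ContinuousOn (fun z : ℂ => z ^ k) (spectrum ℂ (u : A)) := fun z hz =>
    (continuousAt_zpow₀ z k
      (.inl (norm_ne_zero_iff.1 ((hspec z hz).trans_ne one_ne_zero)))).continuousWithinAt
  have hzpow (k : ℤ) : cfc (fun z : ℂ => z ^ k) (u : A) = (u ^ k : unitary A) := by
    have hnormal : IsStarNormal (Unitary.toUnits u : A) :=
      inferInstanceAs (IsStarNormal (u : A))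
    rw [← Unitary.val_toUnits_apply, ← Unitary.val_toUnits_apply, map_zpow]
    exact cfc_zpow (R := ℂ) (Unitary.toUnits u) k
  have hcfc : cfc (∑ k ∈ s, fun z : ℂ => c k * z ^ k) (u : A) =
      ∑ k ∈ s, c k • ((u ^ k : unitary A) : A) := by
    rw [cfc_sum _ _ _ fun k _ => (hcont k).const_mul (c k)]
    simp only [cfc_const_mul _ _ _ (hcont _), hzpow]
  rw [← hcfc]
  refine norm_cfc_le ((norm_nonneg _).trans (hf 1 norm_one)) fun z hz => ?_
  simpa using hf z (hspec z hz)

variable {n : ℕ} {s : Finset ℤ} {c : ℤ → ℂ} {C : ℝ}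

lemma norm_dividedDifference_mul_le_of_symmetry (hs : ∀ k ∈ s, k.natAbs ≤ n)
    (hf : ∀ z : ℂ, ‖z‖ = 1 → ‖∑ k ∈ s, c k * z ^ k‖ ≤ C) (w : unitary A) {K : A}
    (hK : IsSelfAdjoint K) (hKK : K * K = 1) :
    ‖dividedDifference s c w w (w * K)‖ ≤ n * C := by
  let g (t : ℝ) : unitary A := w * ⟨symmetryRotation K t, symmetryRotation_mem_unitary hK hKK t⟩
  have hg_zero : g 0 = w := by ext; simp [g, symmetryRotation]
  have hg_mem : (fun t => (g t : A)) ∈ trigPoly A 1 :=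
    zero_add 1 ▸
      mul_mem_trigPoly (const_mem_trigPoly (n := 0) (w : A)) (symmetryRotation_mem_trigPoly K)
  have hg_deriv : HasDerivAt (fun t => (g t : A)) (I • (w * K)) 0 :=
    ((hasDerivAt_symmetryRotation_zero K).const_mul (w : A)).congr_deriv (mul_smul_comm I (w : A) K)
  let F (t : ℝ) : A := ∑ k ∈ s, c k • ((g t ^ k : unitary A) : A)
  have hF_mem : F ∈ trigPoly A n := by
    convert sum_mem fun k hk => Submodule.smul_mem _ (c k)
      (trigPoly_mono (hs k hk) (coe_zpow_mem_trigPoly hg_mem k)) using 1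
    ext t
    simp [F]
  have hF_deriv : HasDerivAt F (I • dividedDifference s c w w (w * K)) 0 := by
    rw [← map_smul, dividedDifference_apply]
    exact HasDerivAt.fun_sum fun k _ =>
      (hg_zero ▸ hasDerivAt_coe_unitary_zpow hg_deriv k).const_smul (c k)
  have hbound := norm_deriv_le_of_mem_trigPoly hF_mem
    (fun t => norm_sum_smul_coe_zpow_le hf (g t)) 0
  rwa [hF_deriv.deriv, norm_smul, norm_I, one_mul] at hbound

end CStarAlgebra

section Dilation

variable {A : Type*} [Ring A] [StarRing A]

/-- The self-adjoint matrix `[0, x; star x, 0]`. -/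
def selfAdjointDilation (x : A) : CStarMatrix (Fin 2) (Fin 2) A :=
  CStarMatrix.ofMatrix !![0, x; star x, 0]

lemma isSelfAdjoint_selfAdjointDilation (x : A) : IsSelfAdjoint (selfAdjointDilation x) := by
  refine CStarMatrix.ext fun i j => ?_
  fin_cases i <;> fin_cases j <;> simp [selfAdjointDilation, CStarMatrix.star_apply]

variable [Algebra ℂ A] {ι : Type*} [Fintype ι] [DecidableEq ι]

/-- The inclusion of `ι → A` into the matrix algebra over `A` as the diagonal matrices. -/
def diagonalStarAlgHom : (ι → A) →⋆ₐ[ℂ] CStarMatrix ι ι A where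
  toFun d := CStarMatrix.ofMatrix (Matrix.diagonal d)
  map_one' := Matrix.diagonal_one
  map_mul' d e := (Matrix.diagonal_mul_diagonal d e).symm
  map_zero' := Matrix.diagonal_zero
  map_add' d e := (Matrix.diagonal_add d e).symm
  commutes' _ := rfl
  map_star' d := (Matrix.diagonal_conjTranspose d).symm

lemma diagonalStarAlgHom_apply (d : ι → A) :
    diagonalStarAlgHom d = CStarMatrix.ofMatrix (Matrix.diagonal d) :=
  rfl

/-- The unitary matrix with a given family of unitaries on its diagonal. -/
def unitaryDiagonal : (ι → unitary A) →* unitary (CStarMatrix ι ι A) where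
  toFun w := ⟨diagonalStarAlgHom fun i => (w i : A), Unitary.map_mem _ <| by
    simp [Unitary.mem_iff, Pi.mul_def, Pi.one_def]⟩
  map_one' := Subtype.ext (map_one diagonalStarAlgHom)
  map_mul' v w := Subtype.ext
    (map_mul diagonalStarAlgHom (fun i => (v i : A)) fun i => (w i : A))

lemma unitaryDiagonal_mul_apply (w : ι → unitary A) (X : CStarMatrix ι ι A) (i j : ι) :
    ((unitaryDiagonal w : CStarMatrix ι ι A) * X) i j = w i * X i j :=
  Matrix.diagonal_mul (fun i => (w i : A)) X i j

lemma mul_unitaryDiagonal_apply (w : ι → unitary A) (X : CStarMatrix ι ι A) (i j : ι) :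
    (X * (unitaryDiagonal w : CStarMatrix ι ι A)) i j = X i j * w j :=
  Matrix.mul_diagonal (fun i => (w i : A)) X i j

lemma dividedDifference_unitaryDiagonal_apply (s : Finset ℤ) (c : ℤ → ℂ) (w : ι → unitary A)
    (X : CStarMatrix ι ι A) (i j : ι) :
    dividedDifference s c (unitaryDiagonal w) (unitaryDiagonal w) X i j =
      dividedDifference s c (w i) (w j) (X i j) := by
  let entry : CStarMatrix ι ι A →ₗ[ℂ] A :=
    Matrix.entryLinearMap ℂ A i j ∘ₗ CStarMatrix.ofMatrixₗ.symm.toLinearMap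
  have hterm (k l : ℤ) : entry ((unitaryDiagonal w ^ k : unitary (CStarMatrix ι ι A)) * X *
      (unitaryDiagonal w ^ l : unitary (CStarMatrix ι ι A))) =
      (w i ^ k : unitary A) * X i j * (w j ^ l : unitary A) := by
    rw [← map_zpow, ← map_zpow]
    exact (mul_unitaryDiagonal_apply _ _ i j).trans
      (congrArg (· * ((w j ^ l : unitary A) : A)) (unitaryDiagonal_mul_apply _ X i j))
  change entry (dividedDifference s c _ _ X) = dividedDifference s c (w i) (w j) (X i j)
  simp only [dividedDifference_apply, zpowDividedDifference_apply, map_sum, map_smul, map_sub,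
    hterm]

lemma selfAdjointDilation_mul_self (x : A) :
    selfAdjointDilation x * selfAdjointDilation x =
      diagonalStarAlgHom ![x * star x, star x * x] := by
  refine CStarMatrix.ext fun i j => ?_
  fin_cases i <;> fin_cases j <;>
    simp [selfAdjointDilation, diagonalStarAlgHom_apply, CStarMatrix.mul_apply]

end Dilation

section DilationNorm

variable {A : Type*} [CStarAlgebra A] [PartialOrder A] [StarOrderedRing A]

lemma norm_selfAdjointDilation_le (x : A) : ‖selfAdjointDilation x‖ ≤ ‖x‖ := by
  refine abs_le_of_sq_le_sq' ?_ (norm_nonneg x) |>.2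
  rw [← (isSelfAdjoint_selfAdjointDilation x).norm_mul_self, selfAdjointDilation_mul_self]
  refine (NonUnitalStarAlgHom.norm_apply_le (diagonalStarAlgHom (A := A) (ι := Fin 2)) _).trans ?_
  rw [pi_norm_le_iff_of_nonneg (sq_nonneg _), Fin.forall_fin_two]
  simp [CStarRing.norm_self_mul_star, CStarRing.norm_star_mul_self, sq]

/-- A divided difference at `(u, v)` is the corner of one at `(w, w)`, with `w` diagonal. -/
lemma norm_dividedDifference_mul_le_dilation (s : Finset ℤ) (c : ℤ → ℂ) (u v : unitary A)
    (x : A) :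
    ‖dividedDifference s c u v (u * x)‖ ≤
      ‖dividedDifference s c (unitaryDiagonal ![u, v]) (unitaryDiagonal ![u, v])
        (unitaryDiagonal ![u, v] * selfAdjointDilation x)‖ := by
  refine le_of_eq_of_le ?_ (CStarMatrix.norm_entry_le_norm (i := 0) (j := 1))
  rw [dividedDifference_unitaryDiagonal_apply, unitaryDiagonal_mul_apply]
  simp [selfAdjointDilation]

end DilationNorm

section Contractions

variable {n : ℕ} {s : Finset ℤ} {c : ℤ → ℂ} {C : ℝ}

section Order

variable {A : Type*} [CStarAlgebra A] [PartialOrder A] [StarOrderedRing A]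

lemma norm_dividedDifference_mul_le_of_unitary (hs : ∀ k ∈ s, k.natAbs ≤ n)
    (hf : ∀ z : ℂ, ‖z‖ = 1 → ‖∑ k ∈ s, c k * z ^ k‖ ≤ C) (u v x : unitary A) :
    ‖dividedDifference s c u v (u * x)‖ ≤ n * C := by
  have hsymm : selfAdjointDilation (x : A) * selfAdjointDilation (x : A) = 1 := by
    rw [selfAdjointDilation_mul_self, Unitary.mul_star_self_of_mem x.2,
      Unitary.star_mul_self_of_mem x.2, ← map_one diagonalStarAlgHom]
    congr 1
    ext i
    fin_cases i <;> rfl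
  exact (norm_dividedDifference_mul_le_dilation s c u v x).trans
    (norm_dividedDifference_mul_le_of_symmetry hs hf _ (isSelfAdjoint_selfAdjointDilation _) hsymm)

/-- A self-adjoint contraction is the average of a unitary and its adjoint. -/
lemma norm_dividedDifference_mul_le_of_isSelfAdjoint (hs : ∀ k ∈ s, k.natAbs ≤ n)
    (hf : ∀ z : ℂ, ‖z‖ = 1 → ‖∑ k ∈ s, c k * z ^ k‖ ≤ C) (u v : unitary A) {x : A}
    (hx : IsSelfAdjoint x) (hx1 : ‖x‖ ≤ 1) :
    ‖dividedDifference s c u v (u * x)‖ ≤ n * C := by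
  let y : unitary A := selfAdjoint.unitarySelfAddISMul ⟨x, hx⟩ hx1
  have hxy : x = (2⁻¹ : ℝ) • ((y : A) + (star y : unitary A)) := by
    rw [Unitary.coe_star, ← realPart_apply_coe,
      selfAdjoint.realPart_unitarySelfAddISMul ⟨x, hx⟩ hx1]
  have hy := norm_dividedDifference_mul_le_of_unitary hs hf u v y
  have hy' := norm_dividedDifference_mul_le_of_unitary hs hf u v (star y)
  calc ‖dividedDifference s c u v (u * x)‖
      = 2⁻¹ * ‖dividedDifference s c u v (u * y) +
          dividedDifference s c u v (u * (star y : unitary A))‖ := by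
        rw [hxy, mul_smul_comm, mul_add, LinearMap.map_smul_of_tower, map_add, norm_smul]
        norm_num
    _ ≤ 2⁻¹ * (n * C + n * C) := by gcongr; exact norm_add_le_of_le hy hy'
    _ = n * C := by ring

lemma norm_dividedDifference_mul_le_of_norm_le_one (hs : ∀ k ∈ s, k.natAbs ≤ n)
    (hf : ∀ z : ℂ, ‖z‖ = 1 → ‖∑ k ∈ s, c k * z ^ k‖ ≤ C) (u v : unitary A) {x : A}
    (hx : ‖x‖ ≤ 1) :
    ‖dividedDifference s c u v (u * x)‖ ≤ n * C :=
  (norm_dividedDifference_mul_le_dilation s c u v x).trans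
    (norm_dividedDifference_mul_le_of_isSelfAdjoint hs hf _ _
      (isSelfAdjoint_selfAdjointDilation x) ((norm_selfAdjointDilation_le x).trans hx))

end Order

variable {A : Type*} [CStarAlgebra A]

lemma norm_dividedDifference_le (hs : ∀ k ∈ s, k.natAbs ≤ n)
    (hf : ∀ z : ℂ, ‖z‖ = 1 → ‖∑ k ∈ s, c k * z ^ k‖ ≤ C) (u v : unitary A) (x : A) :
    ‖dividedDifference s c u v x‖ ≤ n * C * ‖x‖ := by
  let := CStarAlgebra.spectralOrder A
  let := CStarAlgebra.spectralOrderedRing A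
  obtain rfl | hx := eq_or_ne x 0
  · simp
  have hcontr : ‖star (u : A) * NormedSpace.normalize x‖ ≤ 1 := by
    rw [← Unitary.coe_star, CStarRing.norm_coe_unitary_mul, NormedSpace.norm_normalize hx]
  have hbound := norm_dividedDifference_mul_le_of_norm_le_one hs hf u v hcontr
  rw [← mul_assoc, ← Unitary.coe_star, Unitary.coe_mul_star_self, one_mul] at hbound
  calc ‖dividedDifference s c u v x‖
      = ‖x‖ * ‖dividedDifference s c u v (NormedSpace.normalize x)‖ := by
        conv_lhs => rw [← NormedSpace.norm_smul_normalize x]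
        rw [LinearMap.map_smul_of_tower, norm_smul, norm_norm]
    _ ≤ n * C * ‖x‖ := by rw [mul_comm]; gcongr

lemma norm_sum_smul_zpow_mul_sub_mul_le (hs : ∀ k ∈ s, k.natAbs ≤ n)
    (hf : ∀ z : ℂ, ‖z‖ = 1 → ‖∑ k ∈ s, c k * z ^ k‖ ≤ C) (u v : unitary A) (x : A) :
    ‖(∑ k ∈ s, c k • ((u ^ k : unitary A) : A)) * x -
      x * ∑ k ∈ s, c k • ((v ^ k : unitary A) : A)‖ ≤ n * C * ‖u * x - x * v‖ := by
  rw [← dividedDifference_mul_sub_mul]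
  exact norm_dividedDifference_le hs hf u v _

end Contractions

lemma bddAbove_norm_sum_mul_zpow (s : Finset ℤ) (c : ℤ → ℂ) :
    BddAbove ((fun z : ℂ => ‖∑ k ∈ s, c k * z ^ k‖) '' {z : ℂ | ‖z‖ = 1}) := by
  refine ⟨∑ k ∈ s, ‖c k‖, ?_⟩
  rintro _ ⟨z, hz : ‖z‖ = 1, rfl⟩
  exact norm_sum_le_of_le _ fun k _ => by simp [hz]

theorem stmt_1_general {A : Type*} [CStarAlgebra A] (n : ℕ) (c : ℤ → ℂ) (U V : unitary A) :
    ‖(∑ k ∈ Icc (-(n : ℤ)) (n : ℤ), c k • ((U ^ k : unitary A) : A)) -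
      (∑ k ∈ Icc (-(n : ℤ)) (n : ℤ), c k • ((V ^ k : unitary A) : A))‖ ≤
      (n : ℝ) *
        sSup ((fun z : ℂ => ‖∑ k ∈ Icc (-(n : ℤ)) (n : ℤ), c k * z ^ k‖) '' {z : ℂ | ‖z‖ = 1}) *
        ‖(U : A) - (V : A)‖ := by
  have hdeg : ∀ k ∈ Icc (-(n : ℤ)) (n : ℤ), k.natAbs ≤ n := fun k hk => by
    rw [mem_Icc] at hk
    omega
  have hsup : ∀ z : ℂ, ‖z‖ = 1 → ‖∑ k ∈ Icc (-(n : ℤ)) (n : ℤ), c k * z ^ k‖ ≤ _ := fun z hz =>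
    le_csSup (bddAbove_norm_sum_mul_zpow _ c) ⟨z, hz, rfl⟩
  simpa only [mul_one, one_mul] using norm_sum_smul_zpow_mul_sub_mul_le hdeg hsup U V 1

/-- Bernstein inequality for unitary operators: if `f(z) = ∑_{k=-n}^n c k * z^k`
is a trigonometric polynomial of degree at most `n`, then for all unitary
operators `U`, `V` on a complex Hilbert space,
`‖f(U) - f(V)‖ ≤ n * (sup_{|z|=1} |f z|) * ‖U - V‖`, where `U^k` for negative
`k` means `(U*)^(-k)` (the integer power in the unitary group). -/
theorem stmt_1 {H : Type*} [NormedAddCommGroup H] [InnerProductSpace ℂ H] [CompleteSpace H]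
    (n : ℕ) (hn : 0 < n) (c : ℤ → ℂ)
    (hc : ∀ k : ℤ, k ∉ Finset.Icc (-(n : ℤ)) (n : ℤ) → c k = 0)
    (U V : unitary (H →L[ℂ] H)) :
    ‖(∑ k ∈ Finset.Icc (-(n : ℤ)) (n : ℤ),
        c k • ((U ^ k : unitary (H →L[ℂ] H)) : H →L[ℂ] H)) -
      (∑ k ∈ Finset.Icc (-(n : ℤ)) (n : ℤ),
        c k • ((V ^ k : unitary (H →L[ℂ] H)) : H →L[ℂ] H))‖ ≤
      (n : ℝ) *
        sSup ((fun z : ℂ => ‖∑ k ∈ Finset.Icc (-(n : ℤ)) (n : ℤ), c k * z ^ k‖) ''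
          {z : ℂ | ‖z‖ = 1}) *
        ‖(U : H →L[ℂ] H) - (V : H →L[ℂ] H)‖ :=
  stmt_1_general n c U V
end

section
/- A primitive of the Fourier transform of a complex measure is operator Lipschitz with constant the total mass: Let ν be a finite positive Borel measure on ℝ and ρ : ℝ → ℂ a Borel measurable function with |ρ(s)| ≤ 1 for all s (so that μ = ρ·ν is a complex Borel measure of total variation at most ν(ℝ)). Let f : ℝ → ℂ satisfy f(x) = f(0) + ∫₀ˣ ( ∫_ℝ e^{−i·s·t}·ρ(s) dν(s) ) dt for every x ∈ ℝ, i.e. f is a primitive of the Fourier transform of μ. Then for all bounded self-adjoint operators A and B on a complex Hilbert space, ‖f(A) − f(B)‖ ≤ ν(ℝ)·‖A − B‖. -/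
open MeasureTheory

/-!
Put `g_c(x) = ∫₀ˣ exp (c t) dt`. By Fubini `f(x) = f(0) + ∫ ρ(s) g_{-is}(x) dν(s)`, and the
functional calculus commutes with the integral, so it suffices that `g_c` is operator Lipschitz with
constant `1` for every imaginary `c`. As `g_c(x) = (exp (c x) - 1) / c` for `c ≠ 0`, this amounts to
`‖exp X - exp Y‖ ≤ ‖X - Y‖` for skew-adjoint `X` and `Y`, which follows by differentiating the path
`t ↦ exp (t X) exp ((1 - t) Y)` from `exp Y` to `exp X`: its derivative is
`exp (t X) (X - Y) exp ((1 - t) Y)`, and the two exponentials are unitary.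
-/

open NormedSpace in
lemma hasDerivAt_exp_smul_mul_exp_one_sub_smul {𝕜 A : Type*} [RCLike 𝕜] [NormedRing A]
    [NormedAlgebra 𝕜 A] [CompleteSpace A] (x y : A) (t : 𝕜) :
    HasDerivAt (fun u : 𝕜 ↦ exp (u • x) * exp ((1 - u) • y))
      (exp (t • x) * (x - y) * exp ((1 - t) • y)) t := by
  have hx := hasDerivAt_exp_smul_const x t
  have hy := (hasDerivAt_exp_smul_const' y (1 - t)).comp_const_sub 1 t
  exact (hx.mul hy).congr_deriv (by noncomm_ring)

open NormedSpace in
lemma norm_exp_sub_exp_le_of_mem_skewAdjoint {A : Type*} [NormedRing A] [NormedAlgebra ℝ A]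
    [CompleteSpace A] [StarRing A] [CStarRing A] [StarModule ℝ A] {x y : A}
    (hx : x ∈ skewAdjoint A) (hy : y ∈ skewAdjoint A) :
    ‖exp x - exp y‖ ≤ ‖x - y‖ := by
  let +nondep : NormedAlgebra ℚ A := .restrictScalars ℚ ℝ A
  have exp_smul_mem_unitary {z : A} (hz : z ∈ skewAdjoint A) (t : ℝ) : exp (t • z) ∈ unitary A :=
    exp_mem_unitary_of_mem_skewAdjoint (skewAdjoint.smul_mem t hz)
  have norm_deriv_eq (t : ℝ) : ‖exp (t • x) * (x - y) * exp ((1 - t) • y)‖ = ‖x - y‖ := by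
    rw [CStarRing.norm_mul_mem_unitary _ (exp_smul_mem_unitary hy (1 - t)),
      CStarRing.norm_mem_unitary_mul _ (exp_smul_mem_unitary hx t)]
  simpa using norm_image_sub_le_of_norm_deriv_le_segment_01'
    (fun t _ ↦ (hasDerivAt_exp_smul_mul_exp_one_sub_smul x y t).hasDerivWithinAt)
    (fun t _ ↦ (norm_deriv_eq t).le)

lemma cfc_exp_mul_re {A : Type*} [CStarAlgebra A] {a : A} (ha : IsSelfAdjoint a)
    (c : ℂ) : cfc (fun z : ℂ ↦ Complex.exp (c * z.re)) a = NormedSpace.exp (c • a) := by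
  have : IsStarNormal a := ha.isStarNormal
  calc cfc (fun z : ℂ ↦ Complex.exp (c * z.re)) a
    _ = cfc (fun z : ℂ ↦ Complex.exp (c • z)) a :=
      cfc_congr fun z hz ↦ by simp [← ha.mem_spectrum_eq_re hz]
    _ = cfc Complex.exp (c • a) := cfc_comp_smul c Complex.exp a (by fun_prop)
    _ = NormedSpace.exp (c • a) := CFC.complex_exp_eq_normedSpace_exp

section ParametricIntegral

variable {X 𝕜 : Type*} [RCLike 𝕜] [MeasurableSpace X] {μ : Measure X} [TopologicalSpace X]
  [OpensMeasurableSpace X] {ρ : X → 𝕜}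

lemma continuous_integral_mul_of_norm_le {T : Type*} [TopologicalSpace T]
    [FirstCountableTopology T] {g : X → T → 𝕜} (hg : Continuous (Function.uncurry g)) {C : T → ℝ}
    (hC : Continuous C) (hgC : ∀ x t, ‖g x t‖ ≤ C t) (hρ : Integrable ρ μ) :
    Continuous fun t ↦ ∫ x, ρ x * g x t ∂μ := by
  refine continuous_iff_continuousAt.mpr fun t₀ ↦
    continuousAt_of_dominated (bound := fun x ↦ ‖ρ x‖ * (C t₀ + 1))
      (.of_forall fun t ↦ ?_) ?_ (hρ.norm.mul_const _) (.of_forall fun x ↦ by fun_prop)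
  · have : Continuous (g · t) := by fun_prop
    exact hρ.aestronglyMeasurable.mul this.aestronglyMeasurable
  · filter_upwards [hC.continuousAt.eventually_lt_const (lt_add_one (C t₀))] with t ht
    refine .of_forall fun x ↦ ?_
    rw [norm_mul]
    gcongr
    exact (hgC x t).trans ht.le

lemma integrable_mkD_domRestrict_mul {Y : Type*} [TopologicalSpace Y] {s : Set Y} [CompactSpace s]
    [SecondCountableTopologyEither X C(s, 𝕜)] {g : X → Y → 𝕜}
    (hg : Continuous (Function.uncurry g)) {C : ℝ} (hgC : ∀ x, ∀ y ∈ s, ‖g x y‖ ≤ C)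
    (hρ : Integrable ρ μ) :
    Integrable (fun x ↦ ContinuousMap.mkD (s.domRestrict fun y ↦ ρ x * g x y) 0) μ := by
  have mkD_mul : (fun x ↦ ContinuousMap.mkD (s.domRestrict fun y ↦ ρ x * g x y) 0) =
      ρ • fun x ↦ ContinuousMap.mkD (s.domRestrict (g x)) 0 := by
    ext x y
    have hgx : Continuous (g x) := by fun_prop
    simp [ContinuousMap.mkD_apply_of_continuousOn, hgx.continuousOn,
      (hgx.const_mul (ρ x)).continuousOn]
  rw [mkD_mul]
  refine hρ.smul_bdd |C| (ContinuousMap.aeStronglyMeasurable_mkD_restrict_of_uncurry _ _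
    hg.continuousOn) (.of_forall fun x ↦ (ContinuousMap.norm_le _ (abs_nonneg C)).mpr fun y ↦ ?_)
  have hgx : Continuous (g x) := by fun_prop
  rw [ContinuousMap.mkD_apply_of_continuousOn hgx.continuousOn]
  exact (hgC x y y.2).trans (le_abs_self C)

section Cfc

variable {A : Type*} {p : A → Prop} [NormedRing A] [StarRing A] [NormedAlgebra 𝕜 A]
  [ContinuousFunctionalCalculus 𝕜 A p] [CompleteSpace A] {a : A} {g : X → 𝕜 → 𝕜} {C : ℝ}

lemma integrable_smul_cfc (hg : Continuous (Function.uncurry g))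
    (hgC : ∀ x, ∀ z ∈ spectrum 𝕜 a, ‖g x z‖ ≤ C) (hρ : Integrable ρ μ) (ha : p a) :
    Integrable (fun x ↦ ρ x • cfc (g x) a) μ := by
  have hg_cont (x : X) : Continuous (g x) := by fun_prop
  simpa only [cfc_const_mul _ _ a (hg_cont _).continuousOn] using
    integrable_cfc' _ a (integrable_mkD_domRestrict_mul hg hgC hρ) ha

lemma cfc_integral_mul [NormedSpace ℝ A] (hg : Continuous (Function.uncurry g))
    (hgC : ∀ x, ∀ z ∈ spectrum 𝕜 a, ‖g x z‖ ≤ C) (hρ : Integrable ρ μ) (ha : p a) :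
    cfc (fun z ↦ ∫ x, ρ x * g x z ∂μ) a = ∫ x, ρ x • cfc (g x) a ∂μ := by
  have hg_cont (x : X) : Continuous (g x) := by fun_prop
  rw [cfc_integral' _ a (.of_forall fun x ↦ ((hg_cont x).const_mul (ρ x)).continuousOn)
    (integrable_mkD_domRestrict_mul hg hgC hρ) ha]
  simp only [cfc_const_mul _ _ a (hg_cont _).continuousOn]

end Cfc

end ParametricIntegral

/-- `f : ℝ → ℂ` is operator Lipschitz with constant `K` on the C⋆-algebra `A`: `f` is continuous and
`‖f(a) - f(b)‖ ≤ K ‖a - b‖` for all self-adjoint `a b : A`. Here `f(a)` is the complex functional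
calculus of `a` at `z ↦ f (re z)`, since `f` is complex-valued. Continuity is part of the definition
because `cfc` takes the junk value `0` at functions that are not continuous on the spectrum. -/
structure OperatorLipschitzWith_s4 (A : Type*) [CStarAlgebra A] (K : ℝ) (f : ℝ → ℂ) : Prop where
  continuous : Continuous f
  norm_cfc_sub_le : ∀ ⦃a b : A⦄, IsSelfAdjoint a → IsSelfAdjoint b →
    ‖cfc (fun z : ℂ ↦ f z.re) a - cfc (fun z : ℂ ↦ f z.re) b‖ ≤ K * ‖a - b‖

namespace OperatorLipschitzWith_s4

variable {A : Type*} [CStarAlgebra A] {K : ℝ} {f : ℝ → ℂ}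

lemma const_add (hf : OperatorLipschitzWith_s4 A K f) (c : ℂ) :
    OperatorLipschitzWith_s4 A K fun x ↦ c + f x where
  continuous := hf.continuous.const_add c
  norm_cfc_sub_le a b ha hb := by
    have hf_re : Continuous fun z : ℂ ↦ f z.re := hf.continuous.comp Complex.continuous_re
    rw [cfc_const_add c _ a hf_re.continuousOn ha.isStarNormal,
      cfc_const_add c _ b hf_re.continuousOn hb.isStarNormal, add_sub_add_left_eq_sub]
    exact hf.norm_cfc_sub_le ha hb

lemma const_mul (hf : OperatorLipschitzWith_s4 A K f) (c : ℂ) :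
    OperatorLipschitzWith_s4 A (‖c‖ * K) fun x ↦ c * f x where
  continuous := hf.continuous.const_mul c
  norm_cfc_sub_le a b ha hb := by
    have hf_re : Continuous fun z : ℂ ↦ f z.re := hf.continuous.comp Complex.continuous_re
    rw [cfc_const_mul c _ a hf_re.continuousOn, cfc_const_mul c _ b hf_re.continuousOn,
      ← smul_sub, norm_smul, mul_assoc]
    gcongr
    exact hf.norm_cfc_sub_le ha hb

variable (A) in
lemma ofReal : OperatorLipschitzWith_s4 A 1 fun x ↦ (x : ℂ) where
  continuous := Complex.continuous_ofReal
  norm_cfc_sub_le a b ha hb := by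
    have cfc_re {d : A} (hd : IsSelfAdjoint d) : cfc (fun z : ℂ ↦ (z.re : ℂ)) d = d :=
      (cfc_congr fun z hz ↦ (hd.mem_spectrum_eq_re hz).symm).trans (cfc_id' ℂ d hd.isStarNormal)
    rw [cfc_re ha, cfc_re hb, one_mul]

variable (A) in
lemma exp_mul {c : ℂ} (hc : c ∈ skewAdjoint ℂ) :
    OperatorLipschitzWith_s4 A ‖c‖ fun x ↦ Complex.exp (c * x) where
  continuous := by fun_prop
  norm_cfc_sub_le a b ha hb := by
    rw [cfc_exp_mul_re ha, cfc_exp_mul_re hb, ← norm_smul, smul_sub]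
    exact norm_exp_sub_exp_le_of_mem_skewAdjoint (ha.smul_mem_skewAdjoint hc)
      (hb.smul_mem_skewAdjoint hc)

lemma integral_mul {X : Type*} [MeasurableSpace X] {μ : Measure X} [TopologicalSpace X]
    [OpensMeasurableSpace X] {g : X → ℝ → ℂ} (hg : ∀ x, OperatorLipschitzWith_s4 A K (g x))
    (hg_cont : Continuous (Function.uncurry g)) {C : ℝ → ℝ} (hC : Continuous C)
    (hgC : ∀ x t, ‖g x t‖ ≤ C t) {ρ : X → ℂ} (hρ : Integrable ρ μ) :
    OperatorLipschitzWith_s4 A ((∫ x, ‖ρ x‖ ∂μ) * K) fun t ↦ ∫ x, ρ x * g x t ∂μ where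
  continuous := continuous_integral_mul_of_norm_le hg_cont hC hgC hρ
  norm_cfc_sub_le a b ha hb := by
    have hg_re : Continuous (Function.uncurry fun (x : X) (z : ℂ) ↦ g x z.re) :=
      hg_cont.comp (continuous_fst.prodMk (Complex.continuous_re.comp continuous_snd))
    have bounded_on_spectrum (d : A) : ∃ M, ∀ x, ∀ z ∈ spectrum ℂ d, ‖g x z.re‖ ≤ M := by
      obtain ⟨M, hM⟩ := (spectrum.isCompact d).exists_bound_of_continuousOn
        (hC.comp Complex.continuous_re).continuousOn
      exact ⟨M, fun x z hz ↦ (hgC x z.re).trans ((le_abs_self _).trans (hM z hz))⟩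
    obtain ⟨Ma, hMa⟩ := bounded_on_spectrum a
    obtain ⟨Mb, hMb⟩ := bounded_on_spectrum b
    rw [cfc_integral_mul hg_re hMa hρ ha.isStarNormal,
      cfc_integral_mul hg_re hMb hρ hb.isStarNormal,
      ← integral_sub (integrable_smul_cfc hg_re hMa hρ ha.isStarNormal)
        (integrable_smul_cfc hg_re hMb hρ hb.isStarNormal),
      mul_assoc, ← integral_mul_const]
    refine norm_integral_le_of_norm_le (hρ.norm.mul_const _) (.of_forall fun x ↦ ?_)
    rw [← smul_sub, norm_smul]
    gcongr
    exact (hg x).norm_cfc_sub_le ha hb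

end OperatorLipschitzWith_s4

/-- The primitive of `t ↦ exp (c t)` on `ℝ` that vanishes at `0`. It is defined by an integral,
rather than as `(exp (c x) - 1) / c`, so that it is jointly continuous at `c = 0` as well. -/
noncomputable def expPrimitive (c : ℂ) (x : ℝ) : ℂ := ∫ t in 0..x, Complex.exp (c * t)

lemma continuous_uncurry_expPrimitive : Continuous (Function.uncurry expPrimitive) :=
  intervalIntegral.continuous_parametric_intervalIntegral_of_continuous
    (f := fun (p : ℂ × ℝ) (t : ℝ) ↦ Complex.exp (p.1 * t)) (by fun_prop) continuous_snd

lemma norm_exp_mul_ofReal_of_mem_skewAdjoint {c : ℂ} (hc : c ∈ skewAdjoint ℂ) (t : ℝ) :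
    ‖Complex.exp (c * t)‖ = 1 := by
  have re_eq_zero : c.re = 0 :=
    self_eq_neg.mp (congrArg Complex.re (skewAdjoint.mem_iff.mp hc))
  simp [Complex.norm_exp, re_eq_zero]

lemma norm_expPrimitive_le_abs {c : ℂ} (hc : c ∈ skewAdjoint ℂ) (x : ℝ) :
    ‖expPrimitive c x‖ ≤ |x| := by
  simpa [expPrimitive] using intervalIntegral.norm_integral_le_of_norm_le_const
    (a := 0) (b := x) fun t _ ↦ (norm_exp_mul_ofReal_of_mem_skewAdjoint hc t).le

lemma operatorLipschitzWith_expPrimitive (A : Type*) [CStarAlgebra A] {c : ℂ}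
    (hc : c ∈ skewAdjoint ℂ) : OperatorLipschitzWith_s4 A 1 (expPrimitive c) := by
  obtain rfl | hc₀ := eq_or_ne c 0
  · have expPrimitive_zero : expPrimitive 0 = fun x : ℝ ↦ (x : ℂ) := by
      ext x
      simp [expPrimitive]
    exact expPrimitive_zero ▸ .ofReal A
  · have expPrimitive_eq : expPrimitive c = fun x : ℝ ↦ c⁻¹ * (-1 + Complex.exp (c * x)) := by
      ext x
      rw [expPrimitive, integral_exp_mul_complex hc₀, Complex.ofReal_zero, mul_zero,
        Complex.exp_zero, div_eq_inv_mul, sub_eq_neg_add]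
    have lipschitz := ((OperatorLipschitzWith_s4.exp_mul A hc).const_add (-1)).const_mul c⁻¹
    rwa [← expPrimitive_eq, ← norm_mul, inv_mul_cancel₀ hc₀, norm_one] at lipschitz

lemma neg_I_mul_ofReal_mem_skewAdjoint (s : ℝ) : -(Complex.I * s) ∈ skewAdjoint ℂ := by
  simp [skewAdjoint.mem_iff]

lemma intervalIntegral_integral_exp_mul_eq {ν : Measure ℝ} [SFinite ν] {ρ : ℝ → ℂ}
    (hρ : Integrable ρ ν) (x : ℝ) :
    ∫ t in 0..x, ∫ s, Complex.exp (-(Complex.I * s * t)) * ρ s ∂ν =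
      ∫ s, ρ s * expPrimitive (-(Complex.I * s)) x ∂ν := by
  have exp_continuous : Continuous fun q : ℝ × ℝ ↦ Complex.exp (-(Complex.I * q.2 * q.1)) := by
    fun_prop
  have norm_exp_le (q : ℝ × ℝ) : ‖Complex.exp (-(Complex.I * q.2 * q.1))‖ ≤ 1 := by
    simp [Complex.norm_exp]
  have : IsFiniteMeasure (volume.restrict (Set.uIoc 0 x)) := by
    rw [Set.uIoc]
    infer_instance
  have integrand_integrable : Integrable
      (Function.uncurry fun t s : ℝ ↦ Complex.exp (-(Complex.I * s * t)) * ρ s)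
      ((volume.restrict (Set.uIoc 0 x)).prod ν) :=
    (hρ.comp_snd _).bdd_mul exp_continuous.aestronglyMeasurable (.of_forall norm_exp_le)
  rw [intervalIntegral_integral_swap integrand_integrable]
  simp only [intervalIntegral.integral_mul_const, expPrimitive, neg_mul, mul_comm (ρ _)]

theorem stmt_4_general {A : Type*} [CStarAlgebra A] {ν : Measure ℝ} [SFinite ν] {ρ : ℝ → ℂ}
    (hρ : Integrable ρ ν) {f : ℝ → ℂ}
    (hf : ∀ x : ℝ, f x = f 0 +
      ∫ t in (0 : ℝ)..x, ∫ s, Complex.exp (-(Complex.I * (s : ℂ) * (t : ℂ))) * ρ s ∂ν)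
    {a b : A} (ha : IsSelfAdjoint a) (hb : IsSelfAdjoint b) :
    ‖cfc (fun z : ℂ ↦ f z.re) a - cfc (fun z : ℂ ↦ f z.re) b‖ ≤ (∫ s, ‖ρ s‖ ∂ν) * ‖a - b‖ := by
  have f_eq : f = fun x ↦ f 0 + ∫ s, ρ s * expPrimitive (-(Complex.I * s)) x ∂ν :=
    funext fun x ↦ (hf x).trans (by rw [intervalIntegral_integral_exp_mul_eq hρ])
  have jointly_continuous :
      Continuous (Function.uncurry fun s : ℝ ↦ expPrimitive (-(Complex.I * s))) :=
    continuous_uncurry_expPrimitive.comp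
      (by fun_prop : Continuous fun q : ℝ × ℝ ↦ (-(Complex.I * q.1), q.2))
  have lipschitz : OperatorLipschitzWith_s4 A ((∫ s, ‖ρ s‖ ∂ν) * 1) f := by
    rw [f_eq]
    exact (OperatorLipschitzWith_s4.integral_mul
      (fun s ↦ operatorLipschitzWith_expPrimitive A (neg_I_mul_ofReal_mem_skewAdjoint s))
      jointly_continuous continuous_abs
      (fun s ↦ norm_expPrimitive_le_abs (neg_I_mul_ofReal_mem_skewAdjoint s)) hρ).const_add (f 0)
  simpa using lipschitz.norm_cfc_sub_le ha hb

/-- A primitive of the Fourier transform of a complex measure `μ = ρ·ν` (with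
`ν` a finite positive Borel measure and `|ρ| ≤ 1`) is operator Lipschitz with
constant at most the total mass `ν(ℝ)`: if
`f x = f 0 + ∫₀ˣ (∫ e^{-i s t} ρ(s) dν(s)) dt`, then for all bounded
self-adjoint operators `A`, `B`, `‖f(A) - f(B)‖ ≤ ν(ℝ) * ‖A - B‖`. -/
theorem stmt_4 {H : Type*} [NormedAddCommGroup H] [InnerProductSpace ℂ H] [CompleteSpace H]
    (ν : Measure ℝ) [IsFiniteMeasure ν]
    (ρ : ℝ → ℂ) (hρm : Measurable ρ) (hρ : ∀ s : ℝ, ‖ρ s‖ ≤ 1)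
    (f : ℝ → ℂ)
    (hf : ∀ x : ℝ, f x = f 0 +
      ∫ t in (0 : ℝ)..x, ∫ s, Complex.exp (-(Complex.I * (s : ℂ) * (t : ℂ))) * ρ s ∂ν)
    (A B : H →L[ℂ] H) (hA : IsSelfAdjoint A) (hB : IsSelfAdjoint B) :
    ‖cfc (fun z : ℂ => f z.re) A - cfc (fun z : ℂ => f z.re) B‖ ≤
      (ν Set.univ).toReal * ‖A - B‖ := by
  have hρ_int : Integrable ρ ν := .of_bound hρm.aestronglyMeasurable 1 (.of_forall hρ)
  have mass_le : ∫ s, ‖ρ s‖ ∂ν ≤ (ν Set.univ).toReal := by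
    simpa [Measure.real] using integral_mono hρ_int.norm (integrable_const 1) hρ
  exact (stmt_4_general hρ_int hf hA hB).trans (by gcongr)
end

section
/- Let f : ℝ → ℂ be continuous with f(0) = 0, and let M ≥ 0 be such that f is operator Lipschitz with constant M. Define g : ℝ → ℂ by g(x) = x²·f(1/x) for x ≠ 0 and g(0) = 0. Then g is operator Lipschitz with constant 3M; that is, for every complex Hilbert space H and all bounded self-adjoint operators A, B on H, ‖g(A) − g(B)‖ ≤ 3·M·‖A − B‖. -/
/-- A function `f : ℝ → ℂ` is operator Lipschitz with constant `M` if for every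
complex Hilbert space `H` and all bounded self-adjoint operators `A`, `B` on `H`,
`‖f(A) - f(B)‖ ≤ M * ‖A - B‖`, where `f(A)` is the continuous functional
calculus of `A` applied to `z ↦ f (Re z)`. -/
def OperatorLipschitzWith (M : ℝ) (f : ℝ → ℂ) : Prop :=
  ∀ (H : Type) [NormedAddCommGroup H] [InnerProductSpace ℂ H] [CompleteSpace H]
    (A B : H →L[ℂ] H), IsSelfAdjoint A → IsSelfAdjoint B →
    ‖cfc (fun z : ℂ => f z.re) A - cfc (fun z : ℂ => f z.re) B‖ ≤ M * ‖A - B‖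

/-!
Operator Lipschitz estimates are commutator estimates: `f` is operator Lipschitz with constant `M`
iff `‖[f(S), Y]‖ ≤ M ‖[S, Y]‖` for all self-adjoint `S` and `Y`. For unitary `Y` this compares `S`
with a conjugate of `S`, and differentiating at `t = 0` along `exp(itY)` gives it for self-adjoint
`Y`; conversely, take `S = A ⊕ B` and for `Y` the flip of `H ⊕ H`, so that `‖[S, Y]‖ = ‖A - B‖`.

If `S` is invertible, then `g(S) = S F S` with `F = f(S⁻¹)`, and
`[S F S, Y] = F S [S, Y] + [F, S Y S] + [S, Y] F S`. Here `‖F S‖ ≤ M` because `|f(x)| ≤ M |x|`,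
and `[S⁻¹, S Y S] = -[S, Y]`, so each of the three terms is at most `M ‖[S, Y]‖`.

A non-invertible `S` is replaced by `(S ⊕ -S) + δJ`, where `J` is the flip and `δ → 0`. As `J`
commutes with `Y ⊕ Y`, the commutator with `Y ⊕ Y` does not depend on `δ`; as `J` anticommutes with
`S ⊕ -S`, the square of this operator is `(S² ⊕ S²) + δ²`, so it is invertible for `δ ≠ 0`.
-/

open Filter Topology

theorem lie_mul_mul_self_of_commute {R : Type*} [Ring R] {a s : R} (h : Commute a s) (y : R) :
    ⁅s * a * s, y⁆ = a * s * ⁅s, y⁆ + ⁅a, s * y * s⁆ + ⁅s, y⁆ * (a * s) := by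
  simp only [Ring.lie_def, mul_sub, sub_mul, ← mul_assoc, ← h.eq]
  simp only [mul_assoc, ← h.eq]
  abel

theorem lie_inv_mul_mul_self {R : Type*} [Ring R] (s : Rˣ) (y : R) :
    ⁅(↑s⁻¹ : R), s * y * s⁆ = -⁅(s : R), y⁆ := by
  simp [Ring.lie_def, mul_assoc]

theorem isSelfAdjoint_units_inv {R : Type*} [Ring R] [StarRing R] {s : Rˣ}
    (hs : IsSelfAdjoint (s : R)) : IsSelfAdjoint (↑s⁻¹ : R) := by
  have hs' : star s = s := Units.ext hs
  rw [isSelfAdjoint_iff, ← Units.coe_star_inv, hs']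

theorem norm_lie_mul_mul_self_le {R : Type*} [NormedRing R] {a : R} {s : Rˣ} {M : ℝ}
    (h : Commute a s) (has : ‖a * s‖ ≤ M) {y : R}
    (hy : ‖⁅a, s * y * s⁆‖ ≤ M * ‖⁅(↑s⁻¹ : R), s * y * s⁆‖) :
    ‖⁅s * a * s, y⁆‖ ≤ 3 * M * ‖⁅(s : R), y⁆‖ := by
  rw [lie_inv_mul_mul_self, norm_neg] at hy
  rw [lie_mul_mul_self_of_commute h]
  calc ‖a * s * ⁅(s : R), y⁆ + ⁅a, s * y * s⁆ + ⁅(s : R), y⁆ * (a * s)‖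
      ≤ ‖a * s‖ * ‖⁅(s : R), y⁆‖ + ‖⁅a, s * y * s⁆‖ + ‖⁅(s : R), y⁆‖ * ‖a * s‖ :=
        (norm_add₃_le ..).trans (by gcongr <;> exact norm_mul_le _ _)
    _ ≤ M * ‖⁅(s : R), y⁆‖ + M * ‖⁅(s : R), y⁆‖ + ‖⁅(s : R), y⁆‖ * M := by gcongr
    _ = 3 * M * ‖⁅(s : R), y⁆‖ := by ring

section CStarAlgebra

variable {A : Type*} [CStarAlgebra A]

theorem norm_lie_unitary (a : A) (u : unitary A) :
    ‖⁅a, (u : A)⁆‖ = ‖Unitary.conjStarAlgAut ℂ A u a - a‖ := by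
  rw [← CStarRing.norm_mul_coe_unitary (Unitary.conjStarAlgAut ℂ A u a - a) u, Ring.lie_def,
    norm_sub_rev]
  simp [sub_mul, mul_assoc]

theorem norm_lie_le_of_forall_unitary {a b : A} {M : ℝ}
    (h : ∀ u : unitary A, ‖⁅a, (u : A)⁆‖ ≤ M * ‖⁅b, (u : A)⁆‖) {y : A} (hy : IsSelfAdjoint y) :
    ‖⁅a, y⁆‖ ≤ M * ‖⁅b, y⁆‖ := by
  let u (t : ℝ) : unitary A := selfAdjoint.expUnitary (t • ⟨y, hy⟩)
  have hu : HasDerivAt (fun t ↦ (u t : A)) (Complex.I • y) 0 := by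
    simpa [u, selfAdjoint.expUnitary_coe, smul_comm Complex.I] using
      hasDerivAt_exp_smul_const (𝕂 := ℝ) (Complex.I • y) 0
  have tendsto_norm_lie (c : A) :
      Tendsto (fun t : ℝ ↦ ‖t⁻¹‖ * ‖⁅c, (u t : A)⁆‖) (𝓝[≠] 0) (𝓝 ‖⁅c, y⁆‖) := by
    have hderiv : HasDerivAt (fun t ↦ ⁅c, (u t : A)⁆) (Complex.I • ⁅c, y⁆) 0 := by
      convert (hu.const_mul c).fun_sub (hu.mul_const c) using 1
      · rfl
      · simp only [Ring.lie_def]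
      · simp only [Ring.lie_def, mul_smul_comm, smul_mul_assoc, smul_sub]
    simpa [u, norm_smul, Ring.lie_def] using hderiv.tendsto_slope_zero.norm
  refine le_of_tendsto_of_tendsto' (tendsto_norm_lie a) ((tendsto_norm_lie b).const_mul M)
    fun t ↦ ?_
  rw [mul_left_comm]
  gcongr
  exact h (u t)

theorem continuous_lie_cfc {X : Type*} [TopologicalSpace X] {f : ℂ → ℂ} (hf : Continuous f)
    {a : X → A} (ha : Continuous a) [∀ x, IsStarNormal (a x)] (b : A) :
    Continuous fun x ↦ ⁅cfc f (a x), b⁆ := by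
  have hcfc : Continuous fun x ↦ cfc f (a x) := ha.cfc_of_mem_nhdsSet f (s := Set.univ) univ_mem
  exact (hcfc.mul_const b).sub (hcfc.const_mul b)

theorem isUnit_add_smul_of_anticommute {d j : A} (hd : IsSelfAdjoint d) (hj : j * j = 1)
    (hdj : d * j = -(j * d)) {δ : ℝ} (hδ : δ ≠ 0) : IsUnit (d + δ • j) := by
  have isUnit_sub {c : ℝ} (hc : c ≠ 0) : IsUnit (d - algebraMap ℂ A (c * Complex.I)) := by
    by_contra h
    rw [← neg_sub, IsUnit.neg_iff] at h
    simpa [hc] using hd.mem_spectrum_eq_re (spectrum.mem_iff.mpr h)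
  have hsq : (d + δ • j) ^ 2 =
      (d - algebraMap ℂ A (δ * Complex.I)) * (d - algebraMap ℂ A ((-δ : ℝ) * Complex.I)) := by
    calc (d + δ • j) ^ 2 = d * d + (δ * δ) • 1 := by
          simp [sq, mul_add, add_mul, hj, hdj, smul_smul]
      _ = d * d - algebraMap ℂ A (δ * Complex.I) * algebraMap ℂ A (δ * Complex.I) := by
          rw [← map_mul, Algebra.algebraMap_eq_smul_one, sub_eq_add_neg, ← neg_smul,
            ← Complex.coe_smul]
          congr 2
          push_cast
          linear_combination (δ ^ 2 : ℂ) * Complex.I_sq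
      _ = _ := by
          rw [(Algebra.commute_algebraMap_right _ d).mul_self_sub_mul_self_eq', Complex.ofReal_neg,
            neg_mul, map_neg, sub_neg_eq_add]
  rw [← isUnit_pow_iff two_ne_zero, hsq]
  exact (isUnit_sub hδ).mul (isUnit_sub (neg_ne_zero.mpr hδ))

theorem norm_lie_cfc_le_of_anticommute {f : ℂ → ℂ} (hf : Continuous f) {M : ℝ} {y : A}
    (h : ∀ s : A, IsSelfAdjoint s → IsUnit s → ‖⁅cfc f s, y⁆‖ ≤ M * ‖⁅s, y⁆‖)
    {d j : A} (hd : IsSelfAdjoint d) (hj : IsSelfAdjoint j) (hjj : j * j = 1)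
    (hdj : d * j = -(j * d)) (hjy : Commute j y) :
    ‖⁅cfc f d, y⁆‖ ≤ M * ‖⁅d, y⁆‖ := by
  let s (δ : ℝ) : A := d + δ • j
  have hs (δ : ℝ) : IsSelfAdjoint (s δ) := hd.add (.smul (.all δ) hj)
  have lie_s (δ : ℝ) : ⁅s δ, y⁆ = ⁅d, y⁆ := by
    simp only [s, Ring.lie_def, add_mul, mul_add, smul_mul_assoc, mul_smul_comm, hjy.eq,
      add_sub_add_right_eq_sub]
  have norm_lie_le (δ : ℝ) (hδ : δ ≠ 0) : ‖⁅cfc f (s δ), y⁆‖ ≤ M * ‖⁅d, y⁆‖ :=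
    lie_s δ ▸ h (s δ) (hs δ) (isUnit_add_smul_of_anticommute hd hjj hdj hδ)
  have tendsto_lie : Tendsto (fun δ ↦ ‖⁅cfc f (s δ), y⁆‖) (𝓝[≠] 0) (𝓝 ‖⁅cfc f d, y⁆‖) := by
    have := fun δ ↦ (hs δ).isStarNormal
    have hc : Continuous fun δ ↦ ‖⁅cfc f (s δ), y⁆‖ :=
      (continuous_lie_cfc hf (by fun_prop) y).norm
    exact (hc.tendsto' 0 _ (by simp [s])).mono_left nhdsWithin_le_nhds
  exact le_of_tendsto tendsto_lie (eventually_nhdsWithin_of_forall norm_lie_le)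

end CStarAlgebra

section Block

variable {H K : Type*} [NormedAddCommGroup H] [InnerProductSpace ℂ H] [CompleteSpace H]
  [NormedAddCommGroup K] [InnerProductSpace ℂ K] [CompleteSpace K]

/-- The operator `a ⊕ b` on the Hilbert space direct sum `H ⊕ K`, as a star homomorphism in
`(a, b)`. -/
noncomputable def blockDiag :
    (H →L[ℂ] H) × (K →L[ℂ] K) →⋆ₐ[ℂ] (WithLp 2 (H × K) →L[ℂ] WithLp 2 (H × K)) where
  toFun a := (WithLp.prodContinuousLinearEquiv 2 ℂ H K).symm.conjContinuousAlgEquiv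
    (a.1.prodMap a.2)
  map_one' := by ext; all_goals rfl
  map_mul' _ _ := by ext; all_goals rfl
  map_zero' := by ext; all_goals rfl
  map_add' _ _ := by ext; all_goals rfl
  commutes' _ := by ext; all_goals rfl
  map_star' a := by
    refine (ContinuousLinearMap.eq_adjoint_iff _ _).mpr fun x y ↦ ?_
    simp [ContinuousLinearMap.star_eq_adjoint, ContinuousLinearMap.adjoint_inner_left]

theorem blockDiag_apply (a : (H →L[ℂ] H) × (K →L[ℂ] K)) (x : WithLp 2 (H × K)) :
    blockDiag a x = WithLp.toLp 2 (a.1 x.fst, a.2 x.snd) :=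
  rfl

theorem blockDiag_injective : Function.Injective (blockDiag (H := H) (K := K)) := by
  intro a b hab
  ext x
  · simpa [blockDiag_apply] using congrArg (fun T ↦ (T (WithLp.toLp 2 (x, 0))).fst) hab
  · simpa [blockDiag_apply] using congrArg (fun T ↦ (T (WithLp.toLp 2 (0, x))).snd) hab

theorem norm_blockDiag (a : (H →L[ℂ] H) × (K →L[ℂ] K)) : ‖blockDiag a‖ = ‖a‖ :=
  NonUnitalStarAlgHom.norm_map (A := (H →L[ℂ] H) × (K →L[ℂ] K))
    (B := WithLp 2 (H × K) →L[ℂ] WithLp 2 (H × K)) blockDiag blockDiag_injective a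

theorem continuous_blockDiag : Continuous (blockDiag (H := H) (K := K)) :=
  (AddMonoidHomClass.isometry_of_norm _ norm_blockDiag).continuous

theorem lie_blockDiag (a b : (H →L[ℂ] H) × (K →L[ℂ] K)) :
    ⁅blockDiag a, blockDiag b⁆ = blockDiag (⁅a.1, b.1⁆, ⁅a.2, b.2⁆) := by
  rw [Ring.lie_def, ← map_mul, ← map_mul, ← map_sub]
  rfl

theorem isSelfAdjoint_blockDiag {a : H →L[ℂ] H} {b : K →L[ℂ] K} (ha : IsSelfAdjoint a)
    (hb : IsSelfAdjoint b) : IsSelfAdjoint (blockDiag (a, b)) :=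
  .map (x := (a, b)) (by rw [isSelfAdjoint_iff]; ext1 <;> simp [ha.star_eq, hb.star_eq]) blockDiag

theorem cfc_blockDiag {f : ℂ → ℂ} (hf : Continuous f) (a : H →L[ℂ] H) (b : K →L[ℂ] K)
    [IsStarNormal a] [IsStarNormal b] :
    cfc f (blockDiag (a, b)) = blockDiag (cfc f a, cfc f b) := by
  have hab : IsStarNormal (a, b) := ⟨Prod.ext (star_comm_self' a) (star_comm_self' b)⟩
  rw [← StarAlgHom.map_cfc (S := ℂ) blockDiag f (a, b) hf.continuousOn continuous_blockDiag hab
      (hab.map _),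
    cfc_map_prod (S := ℂ) f a b hf.continuousOn hab]

variable (H) in
/-- The flip `(x, y) ↦ (y, x)` of `H ⊕ H`, as a unitary operator; its commutator with `a ⊕ b`
measures `a - b`. -/
noncomputable def blockSwap : unitary (WithLp 2 (H × H) →L[ℂ] WithLp 2 (H × H)) :=
  Unitary.linearIsometryEquiv.symm (LinearIsometryEquiv.withLpProdComm 2 ℂ H H)

theorem blockSwap_apply (x : WithLp 2 (H × H)) :
    (blockSwap H : WithLp 2 (H × H) →L[ℂ] _) x = WithLp.toLp 2 (x.snd, x.fst) :=
  rfl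

theorem blockSwap_mul_self :
    (blockSwap H * blockSwap H : WithLp 2 (H × H) →L[ℂ] WithLp 2 (H × H)) = 1 := by
  ext; rfl

theorem isSelfAdjoint_blockSwap :
    IsSelfAdjoint (blockSwap H : WithLp 2 (H × H) →L[ℂ] WithLp 2 (H × H)) := by
  have hinv : (blockSwap H)⁻¹ = blockSwap H :=
    inv_eq_of_mul_eq_one_left (Subtype.ext blockSwap_mul_self)
  rw [isSelfAdjoint_iff, ← Unitary.coe_star, Unitary.star_eq_inv, hinv]

theorem blockSwap_mul_blockDiag (a b : H →L[ℂ] H) :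
    blockSwap H * blockDiag (a, b) = blockDiag (b, a) * blockSwap H := by
  ext; rfl

theorem conj_blockSwap_blockDiag (a b : H →L[ℂ] H) :
    Unitary.conjStarAlgAut ℂ _ (blockSwap H) (blockDiag (a, b)) = blockDiag (b, a) := by
  rw [blockSwap, Unitary.conjStarAlgAut_symm_unitaryLinearIsometryEquiv]
  ext; rfl

theorem blockDiag_neg_mul_blockSwap (a : H →L[ℂ] H) :
    blockDiag (a, -a) * blockSwap H = -(blockSwap H * blockDiag (a, -a)) := by
  rw [blockSwap_mul_blockDiag]
  ext x
  simp [blockDiag_apply, blockSwap_apply, ← WithLp.toLp_neg]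

theorem norm_lie_blockDiag_blockSwap (a b : H →L[ℂ] H) :
    ‖⁅blockDiag (a, b), (blockSwap H : WithLp 2 (H × H) →L[ℂ] WithLp 2 (H × H))⁆‖ = ‖a - b‖ := by
  rw [norm_lie_unitary, conj_blockSwap_blockDiag, ← map_sub, Prod.mk_sub_mk, norm_blockDiag,
    Prod.norm_mk, norm_sub_rev b a, max_self]

theorem norm_lie_cfc_le_of_forall_isUnit {f : ℂ → ℂ} (hf : Continuous f) {M : ℝ}
    (h : ∀ T Z : WithLp 2 (H × H) →L[ℂ] WithLp 2 (H × H), IsSelfAdjoint T → IsUnit T →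
      IsSelfAdjoint Z → ‖⁅cfc f T, Z⁆‖ ≤ M * ‖⁅T, Z⁆‖)
    {S Y : H →L[ℂ] H} (hS : IsSelfAdjoint S) (hY : IsSelfAdjoint Y) :
    ‖⁅cfc f S, Y⁆‖ ≤ M * ‖⁅S, Y⁆‖ := by
  have := hS.isStarNormal
  have := hS.neg.isStarNormal
  have hle := norm_lie_cfc_le_of_anticommute hf
    (fun T hT hTu ↦ h T _ hT hTu (isSelfAdjoint_blockDiag hY hY))
    (isSelfAdjoint_blockDiag hS hS.neg) isSelfAdjoint_blockSwap blockSwap_mul_self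
    (blockDiag_neg_mul_blockSwap S) (blockSwap_mul_blockDiag Y Y)
  rw [cfc_blockDiag hf, lie_blockDiag, lie_blockDiag, norm_blockDiag, norm_blockDiag] at hle
  have neg_lie_S : ⁅-S, Y⁆ = -⁅S, Y⁆ := by
    rw [Ring.lie_def, Ring.lie_def, neg_mul, mul_neg, neg_sub_neg, neg_sub]
  calc ‖⁅cfc f S, Y⁆‖ ≤ ‖(⁅cfc f S, Y⁆, ⁅cfc f (-S), Y⁆)‖ := le_max_left _ _
    _ ≤ M * ‖(⁅S, Y⁆, ⁅-S, Y⁆)‖ := hle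
    _ = M * ‖⁅S, Y⁆‖ := by rw [Prod.norm_mk, neg_lie_S, norm_neg, max_self]

end Block

section Lipschitz

variable {M : ℝ} {f : ℝ → ℂ}

theorem norm_cfc_mul_inv_le {A : Type*} [CStarAlgebra A] (hf : Continuous f)
    (hM : ∀ x, ‖f x‖ ≤ M * |x|) {s : Aˣ} (hs : IsSelfAdjoint (s : A)) :
    ‖cfc (fun z : ℂ ↦ f z.re) (s : A) * ↑s⁻¹‖ ≤ M := by
  have := hs.isStarNormal
  have ne_zero {z : ℂ} : z ∈ spectrum ℂ (s : A) → z ≠ 0 := spectrum.ne_zero_of_mem_of_unit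
  have hM0 : 0 ≤ M := by simpa using (norm_nonneg _).trans (hM 1)
  rw [← cfc_inv_id (R := ℂ) s, ← cfc_mul (fun z : ℂ ↦ f z.re) (fun z ↦ z⁻¹) (s : A) (by fun_prop)
    (continuousOn_inv₀.mono fun _ ↦ ne_zero)]
  refine norm_cfc_le hM0 fun z hz ↦ ?_
  calc ‖f z.re * z⁻¹‖ ≤ M * ‖z‖ * ‖z‖⁻¹ := by
        rw [norm_mul, norm_inv]
        gcongr
        exact (hM _).trans (by gcongr; exact Complex.abs_re_le_norm z)
    _ = M := mul_inv_cancel_right₀ (norm_ne_zero_iff.mpr (ne_zero hz)) M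

namespace OperatorLipschitzWith

theorem norm_sub_le (hf : OperatorLipschitzWith M f) (x y : ℝ) :
    ‖f x - f y‖ ≤ M * |x - y| := by
  have isSelfAdjoint_algebraMap (t : ℝ) : IsSelfAdjoint (algebraMap ℂ (ℂ →L[ℂ] ℂ) t) :=
    .algebraMap _ (Complex.conj_ofReal t)
  have h := hf ℂ _ _ (isSelfAdjoint_algebraMap x) (isSelfAdjoint_algebraMap y)
  rw [cfc_algebraMap, cfc_algebraMap, ← map_sub, ← map_sub, norm_algebraMap',
    norm_algebraMap', ← Complex.ofReal_sub, Complex.norm_real] at h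
  exact h

protected theorem continuous (hf : OperatorLipschitzWith M f) : Continuous f :=
  (LipschitzWith.of_dist_le' fun x y ↦ by
    simpa only [dist_eq_norm, Real.norm_eq_abs] using hf.norm_sub_le x y).continuous

variable {H : Type} [NormedAddCommGroup H] [InnerProductSpace ℂ H] [CompleteSpace H]
  {S Y : H →L[ℂ] H}

theorem norm_lie_cfc_unitary_le (hf : OperatorLipschitzWith M f) (hS : IsSelfAdjoint S)
    (u : unitary (H →L[ℂ] H)) :
    ‖⁅cfc (fun z : ℂ ↦ f z.re) S, (u : H →L[ℂ] H)⁆‖ ≤ M * ‖⁅S, (u : H →L[ℂ] H)⁆‖ := by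
  have := hf.continuous
  have := hS.isStarNormal
  have hSu : IsSelfAdjoint (Unitary.conjStarAlgAut ℂ _ u S) := hS.map _
  have := hSu.isStarNormal
  have hc : Continuous (Unitary.conjStarAlgAut ℂ (H →L[ℂ] H) u) := by
    simpa only [funext (Unitary.conjStarAlgAut_apply (S := ℂ) u)] using by fun_prop
  rw [norm_lie_unitary, norm_lie_unitary, StarAlgHomClass.map_cfc (S := ℂ) _ _ _ (by fun_prop) hc]
  exact hf H _ _ hSu hS

theorem norm_lie_cfc_le (hf : OperatorLipschitzWith M f) (hS : IsSelfAdjoint S)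
    (hY : IsSelfAdjoint Y) : ‖⁅cfc (fun z : ℂ ↦ f z.re) S, Y⁆‖ ≤ M * ‖⁅S, Y⁆‖ :=
  norm_lie_le_of_forall_unitary (A := H →L[ℂ] H) (hf.norm_lie_cfc_unitary_le hS) hY

theorem of_forall_norm_lie_le (hf : Continuous f)
    (h : ∀ (H : Type) [NormedAddCommGroup H] [InnerProductSpace ℂ H] [CompleteSpace H]
      (S Y : H →L[ℂ] H), IsSelfAdjoint S → IsUnit S → IsSelfAdjoint Y →
        ‖⁅cfc (fun z : ℂ ↦ f z.re) S, Y⁆‖ ≤ M * ‖⁅S, Y⁆‖) :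
    OperatorLipschitzWith M f := by
  intro H _ _ _ A B hA hB
  have := hA.isStarNormal
  have := hB.isStarNormal
  have hf' : Continuous fun z : ℂ ↦ f z.re := hf.comp Complex.continuous_re
  simpa only [cfc_blockDiag hf', norm_lie_blockDiag_blockSwap] using
    norm_lie_cfc_le_of_forall_isUnit hf' (h _) (isSelfAdjoint_blockDiag hA hB)
      isSelfAdjoint_blockSwap

end OperatorLipschitzWith

/-- The transform `x ↦ x ^ 2 * f (1 / x)`. Its value at `0` is `0`, as `(0 : ℝ)⁻¹ = 0`
and `(0 : ℂ) ^ 2 = 0`. -/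
noncomputable def sqMulCompInv (f : ℝ → ℂ) (x : ℝ) : ℂ :=
  (x : ℂ) ^ 2 * f x⁻¹

theorem norm_sqMulCompInv_le (hf : ∀ x, ‖f x‖ ≤ M * |x|) (x : ℝ) :
    ‖sqMulCompInv f x‖ ≤ M * |x| := by
  obtain rfl | hx := eq_or_ne x 0
  · simp [sqMulCompInv]
  calc ‖sqMulCompInv f x‖ = |x| ^ 2 * ‖f x⁻¹‖ := by simp [sqMulCompInv]
    _ ≤ |x| ^ 2 * (M * |x⁻¹|) := by gcongr; exact hf _
    _ = M * |x| := by rw [abs_inv]; field_simp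

theorem continuous_sqMulCompInv (hf : Continuous f) (hM : ∀ x, ‖f x‖ ≤ M * |x|) :
    Continuous (sqMulCompInv f) := by
  refine continuous_iff_continuousAt.mpr fun x ↦ ?_
  obtain rfl | hx := eq_or_ne x 0
  · have h0 : sqMulCompInv f 0 = 0 := by simp [sqMulCompInv]
    rw [ContinuousAt, h0]
    refine squeeze_zero_norm (norm_sqMulCompInv_le hM) ?_
    exact Continuous.tendsto' (by fun_prop) _ _ (by simp)
  · unfold sqMulCompInv
    fun_prop (disch := assumption)

theorem cfc_sqMulCompInv {A : Type*} [CStarAlgebra A] (hf : Continuous f) {s : Aˣ}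
    (hs : IsSelfAdjoint (s : A)) :
    cfc (fun z : ℂ ↦ sqMulCompInv f z.re) (s : A) =
      s * cfc (fun z : ℂ ↦ f z.re) (↑s⁻¹ : A) * s := by
  have := hs.isStarNormal
  have hinv : ContinuousOn (fun z : ℂ ↦ f z⁻¹.re) (spectrum ℂ (s : A)) :=
    (hf.comp Complex.continuous_re).comp_continuousOn
      (continuousOn_inv₀.mono fun _ ↦ spectrum.ne_zero_of_mem_of_unit)
  calc cfc (fun z : ℂ ↦ sqMulCompInv f z.re) (s : A)
      = cfc (fun z : ℂ ↦ z * f z⁻¹.re * z) (s : A) := by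
        refine cfc_congr fun z hz ↦ ?_
        rw [hs.mem_spectrum_eq_re hz, ← Complex.ofReal_inv]
        simp only [sqMulCompInv, Complex.ofReal_re]
        ring
    _ = s * cfc (fun z : ℂ ↦ f z⁻¹.re) (s : A) * s := by
        have hmul : ContinuousOn (fun z : ℂ ↦ z * f z⁻¹.re) (spectrum ℂ (s : A)) :=
          continuousOn_id.mul hinv
        rw [cfc_mul _ _ _ hmul (by fun_prop), cfc_mul _ _ _ (by fun_prop) hinv, cfc_id' ℂ (s : A)]
    _ = s * cfc (fun z : ℂ ↦ f z.re) (↑s⁻¹ : A) * s := by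
        rw [cfc_comp_inv (fun z : ℂ ↦ f z.re) s (by fun_prop)]

namespace OperatorLipschitzWith

variable {H : Type} [NormedAddCommGroup H] [InnerProductSpace ℂ H] [CompleteSpace H]
  {S Y : H →L[ℂ] H}

theorem norm_le (hf : OperatorLipschitzWith M f) (hf0 : f 0 = 0) (x : ℝ) : ‖f x‖ ≤ M * |x| := by
  simpa [hf0] using hf.norm_sub_le x 0

theorem norm_lie_cfc_sqMulCompInv_le_of_isUnit (hf : OperatorLipschitzWith M f) (hf0 : f 0 = 0)
    (hS : IsSelfAdjoint S) (hSu : IsUnit S) (hY : IsSelfAdjoint Y) :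
    ‖⁅cfc (fun z : ℂ ↦ sqMulCompInv f z.re) S, Y⁆‖ ≤ 3 * M * ‖⁅S, Y⁆‖ := by
  lift S to (H →L[ℂ] H)ˣ using hSu
  have hSinv := isSelfAdjoint_units_inv hS
  have hSYS : IsSelfAdjoint (S * Y * S : H →L[ℂ] H) := by
    simpa only [hS.star_eq] using hY.conjugate (S : H →L[ℂ] H)
  rw [cfc_sqMulCompInv hf.continuous hS]
  refine norm_lie_mul_mul_self_le ?_ ?_ (hf.norm_lie_cfc_le hSinv hSYS)
  · exact hSinv.commute_cfc ((Commute.refl (S : H →L[ℂ] H)).units_inv_left) _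
  · simpa using norm_cfc_mul_inv_le hf.continuous (hf.norm_le hf0) hSinv

protected theorem sqMulCompInv (hf : OperatorLipschitzWith M f) (hf0 : f 0 = 0) :
    OperatorLipschitzWith (3 * M) (sqMulCompInv f) :=
  of_forall_norm_lie_le (continuous_sqMulCompInv hf.continuous (hf.norm_le hf0))
    fun _ _ _ _ _ _ ↦ hf.norm_lie_cfc_sqMulCompInv_le_of_isUnit hf0

end OperatorLipschitzWith

end Lipschitz

/-- If `f : ℝ → ℂ` is continuous with `f 0 = 0` and operator Lipschitz with
constant `M`, then `g(x) = x² f(1/x)` (with `g 0 = 0`) is operator Lipschitz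
with constant `3M`. -/
theorem stmt_5 (f : ℝ → ℂ) (hf : Continuous f) (hf0 : f 0 = 0)
    (M : ℝ) (hM : 0 ≤ M) (hlip : OperatorLipschitzWith M f)
    (g : ℝ → ℂ) (hg : ∀ x : ℝ, x ≠ 0 → g x = (x : ℂ) ^ 2 * f x⁻¹) (hg0 : g 0 = 0) :
    OperatorLipschitzWith (3 * M) g := by
  have hgf : g = sqMulCompInv f := by
    ext x
    obtain rfl | hx := eq_or_ne x 0
    · simp [hg0, sqMulCompInv]
    · exact hg x hx
  exact hgf ▸ hlip.sqMulCompInv hf0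
end

section
/- Hölder functions are operator Hölder: There exists a constant c > 0 such that for every α ∈ (0,1), every L ≥ 0, every function f : ℝ → ℝ satisfying |f(x) − f(y)| ≤ L·|x − y|^α for all x, y ∈ ℝ, and all bounded self-adjoint operators A and B on a complex Hilbert space, ‖f(A) − f(B)‖ ≤ c·(1 − α)^{−1}·L·‖A − B‖^α. -/
/-!
The operator Poisson kernel `K_A(s) = t / π * ((A - s) ^ 2 + t ^ 2)⁻¹` is a difference of resolvents
and also a multiple of `R* R` for a resolvent `R`. The resolvent identity and Cauchy-Schwarz
therefore bound `⟪(K_A(s) - K_B(s)) x, y⟫` by `‖A - B‖ / (2t)` times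
`⟪K_B(s) x, x⟫ + ⟪K_A(s) y, y⟫`, whose integral over `s` is `‖x‖ ^ 2 + ‖y‖ ^ 2`. Hence the Poisson
mean `P_t f` of a bounded function is operator Lipschitz with constant `‖f‖ / t`.

Put `C_t = 2 P_t - P_{2t}`. For `f` Hölder, `‖C_t f - f‖ = O(L t ^ α)` uniformly in `α`. Since
`C_t ^ 2 - C_{2t} ^ 2 = (C_t + C_{2t}) (C_t - C_{2t})`, the function `C_t ^ 2 f - C_{2t} ^ 2 f` is
operator Lipschitz with constant `O(L t ^ (α - 1))`. Summing over the scales `2 ^ n * t`, a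
geometric series of ratio `2 ^ (α - 1)`, bounds the operator Lipschitz constant of `C_t ^ 2 f` by
`O((1 - α)⁻¹ L t ^ (α - 1))`. At `t = ‖A - B‖` this and the trivial bound for the remainder
`f - C_t ^ 2 f` both give the claim.
-/

open MeasureTheory ProbabilityTheory Set Filter Topology
open Complex (I)
open scoped BoundedContinuousFunction NNReal ComplexConjugate InnerProductSpace Real

section NormIntegral

variable {G E : Type*} [Add G] [TopologicalSpace G] [MeasurableSpace G] [NormedAddCommGroup E]
  [NormedSpace ℝ E]

lemma norm_integral_comp_add_left_le (μ : Measure G) [IsProbabilityMeasure μ] (f : G →ᵇ E)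
    (x : G) : ‖∫ r, f (x + r) ∂μ‖ ≤ ‖f‖ :=
  (norm_integral_le_of_norm_le_const (.of_forall fun _ ↦ f.norm_coe_le_norm _)).trans_eq
    (by simp)

end NormIntegral

section TranslationMean

variable {G E : Type*} [AddCommMonoid G] [TopologicalSpace G] [ContinuousAdd G]
  [SecondCountableTopology G] [MeasurableSpace G] [BorelSpace G]
  [NormedAddCommGroup E]

lemma integrable_comp_add_left (μ : Measure G) [IsFiniteMeasure μ] (f : G →ᵇ E) (x : G) :
    Integrable (fun r ↦ f (x + r)) μ :=
  .of_bound (Continuous.aestronglyMeasurable (by fun_prop)) ‖f‖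
    (.of_forall fun _ ↦ f.norm_coe_le_norm _)

variable [NormedSpace ℝ E]

lemma continuous_integral_comp_add_left (μ : Measure G) [IsFiniteMeasure μ] (f : G →ᵇ E) :
    Continuous fun x ↦ ∫ r, f (x + r) ∂μ :=
  continuous_of_dominated (bound := fun _ ↦ ‖f‖)
    (fun x ↦ (integrable_comp_add_left μ f x).aestronglyMeasurable)
    (fun _ ↦ .of_forall fun _ ↦ f.norm_coe_le_norm _) (integrable_const _)
    (.of_forall fun _ ↦ by fun_prop)

variable (μ ν : Measure G) [IsProbabilityMeasure μ] [IsProbabilityMeasure ν]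

/-- The average `x ↦ ∫ r, f (x + r) ∂μ` of the translates of `f` against a probability measure `μ`,
as an operator on bounded continuous functions. For symmetric `μ` it is convolution with `μ`. -/
noncomputable def translationMean : (G →ᵇ E) →L[ℝ] (G →ᵇ E) :=
  LinearMap.mkContinuous
    { toFun f := .ofNormedAddCommGroup (fun x ↦ ∫ r, f (x + r) ∂μ)
        (continuous_integral_comp_add_left μ f) ‖f‖ (norm_integral_comp_add_left_le μ f)
      map_add' f g := BoundedContinuousFunction.ext fun x ↦
        integral_add (integrable_comp_add_left μ f x) (integrable_comp_add_left μ g x)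
      map_smul' c _ := BoundedContinuousFunction.ext fun _ ↦ integral_smul c _ }
    1 fun f ↦ (BoundedContinuousFunction.norm_ofNormedAddCommGroup_le _ (norm_nonneg f)
      (norm_integral_comp_add_left_le μ f)).trans_eq (one_mul _).symm

lemma translationMean_apply (f : G →ᵇ E) (x : G) :
    translationMean μ f x = ∫ r, f (x + r) ∂μ := rfl

lemma norm_translationMean_le : ‖translationMean (E := E) μ‖ ≤ 1 :=
  LinearMap.mkContinuous_norm_le _ zero_le_one _

lemma translationMean_translationMean (f : G →ᵇ E) :
    translationMean μ (translationMean ν f) = translationMean (μ.conv ν) f := by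
  ext x
  simp only [translationMean_apply, integral_conv (integrable_comp_add_left _ f x), add_assoc]

lemma translationMean_comm (f : G →ᵇ E) :
    translationMean μ (translationMean ν f) = translationMean ν (translationMean μ f) := by
  simp only [translationMean_translationMean, Measure.conv_comm ν μ]

end TranslationMean

lemma holderOnWith_of_dist_le {X Y : Type*} [PseudoMetricSpace X] [PseudoMetricSpace Y] {C r : ℝ≥0}
    {f : X → Y} {s : Set X}
    (h : ∀ x ∈ s, ∀ y ∈ s, dist (f x) (f y) ≤ C * dist x y ^ (r : ℝ)) : HolderOnWith C r f s := by
  intro x hx y hy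
  rw [edist_nndist, edist_nndist, ← ENNReal.coe_rpow_of_nonneg _ r.coe_nonneg]
  exact_mod_cast h x hx y hy

lemma exists_holderWith_eqOn {X : Type*} [PseudoMetricSpace X] {L α : ℝ≥0} (hα₀ : 0 < α)
    (hα₁ : α ≤ 1) {f : X → ℝ} {s : Set X} (hf : HolderOnWith L α f s) :
    ∃ g : X → ℝ, HolderWith L α g ∧ EqOn f g s := by
  -- Hölder functions are the Lipschitz functions for the snowflake metric `d ^ α`.
  let Y := Metric.Snowflaking X α (NNReal.coe_pos.2 hα₀) (NNReal.coe_le_one.2 hα₁)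
  have hlip : LipschitzOnWith L (fun x : Y ↦ f x.ofSnowflaking)
      (Metric.Snowflaking.ofSnowflaking ⁻¹' s) := fun x hx y hy ↦ hf _ hx _ hy
  obtain ⟨g, hg, hfg⟩ := hlip.extend_real
  refine ⟨g ∘ Metric.Snowflaking.toSnowflaking, fun x y ↦ hg _ _, fun x hx ↦ hfg hx⟩

lemma exists_boundedContinuous_holderWith_eqOn {X : Type*} [PseudoMetricSpace X] {L α : ℝ≥0}
    (hα₀ : 0 < α) (hα₁ : α ≤ 1) {f : X → ℝ} {s : Set X} (hs : IsCompact s)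
    (hf : HolderOnWith L α f s) :
    ∃ g : X →ᵇ ℝ, HolderWith L α g ∧ EqOn f g s := by
  obtain ⟨g, hg, hfg⟩ := exists_holderWith_eqOn hα₀ hα₁ hf
  obtain ⟨M, hM⟩ := hs.exists_bound_of_continuousOn (hf.continuousOn hα₀)
  have hM₀ : -|M| ≤ |M| := neg_le_self (abs_nonneg M)
  have hclamp : HolderWith L α fun x ↦ (projIcc (-|M|) |M| hM₀ (g x) : ℝ) := by
    simpa [Function.comp_def] using
      (LipschitzWith.subtype_val _ |>.comp (LipschitzWith.projIcc hM₀)).holderWith.comp hg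
  refine ⟨.ofNormedAddCommGroup _ (hclamp.continuous hα₀) |M| fun x ↦ abs_le.2 ?_, hclamp,
    fun x hx ↦ ?_⟩
  · exact (projIcc (-|M|) |M| hM₀ (g x)).2
  · have hfx : f x ∈ Icc (-|M|) |M| := abs_le.1 ((hM x hx).trans (le_abs_self M))
    simp only [BoundedContinuousFunction.coe_ofNormedAddCommGroup, ← hfg hx, projIcc_of_mem hM₀ hfx]

lemma nonpos_of_le_comp_two_mul {K : Type*} [Semifield K] [LinearOrder K] [IsStrictOrderedRing K]
    [ExistsAddOfLE K] [Archimedean K] {S : K → ℝ} (hS : ∀ t > 0, S t ≤ S (2 * t))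
    (hlim : Tendsto S atTop (𝓝 0)) {t : K} (ht : 0 < t) : S t ≤ 0 := by
  have hiter (n : ℕ) : S t ≤ S (2 ^ n * t) := by
    induction n with
    | zero => simp
    | succ n ih => exact ih.trans ((hS _ (by positivity)).trans_eq (by ring_nf))
  exact ge_of_tendsto' (hlim.comp ((tendsto_pow_atTop_atTop_of_one_lt one_lt_two).atTop_mul_const
    ht)) hiter

lemma le_rpow_of_le_comp_two_mul_add_rpow {S : ℝ≥0 → ℝ} {K β : ℝ} (hK : 0 ≤ K) (hβ₀ : -1 ≤ β)
    (hβ : β < 0) (hS : ∀ t > 0, S t ≤ S (2 * t) + K * (t : ℝ) ^ β) (hlim : Tendsto S atTop (𝓝 0))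
    {t : ℝ≥0} (ht : 0 < t) : S t ≤ 2 * K / (-β) * (t : ℝ) ^ β := by
  -- The gap `1 - 2 ^ β` is what makes the geometric sum of order `(-β)⁻¹`.
  have hgap : -β / 2 ≤ 1 - 2 ^ β := by
    have hbernoulli := rpow_one_add_le_one_add_mul_self (s := 1) (p := β + 1) (by norm_num)
      (by linarith) (by linarith)
    rw [Real.rpow_add_one (by norm_num)] at hbernoulli
    norm_num at hbernoulli
    linarith
  set K' := 2 * K / (-β) with hK'
  have hK'gap : K ≤ K' * (1 - 2 ^ β) := by
    have := neg_pos.2 hβ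
    calc K = K' * (-β / 2) := by rw [hK']; field_simp [hβ.ne]
      _ ≤ K' * (1 - 2 ^ β) := by gcongr
  have hstep : ∀ t > 0, S t - K' * (t : ℝ) ^ β ≤ S (2 * t) - K' * (↑(2 * t) : ℝ) ^ β :=
    fun t ht ↦ by
      rw [NNReal.coe_mul, NNReal.coe_ofNat, Real.mul_rpow zero_le_two t.coe_nonneg]
      nlinarith [hS t ht, Real.rpow_pos_of_pos (NNReal.coe_pos.2 ht) β]
  have hlim' : Tendsto (fun t : ℝ≥0 ↦ S t - K' * (t : ℝ) ^ β) atTop (𝓝 0) := by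
    have hpow := (tendsto_rpow_neg_atTop (neg_pos.2 hβ)).comp
      (NNReal.tendsto_coe_atTop.2 tendsto_id)
    simpa [Function.comp_def] using hlim.sub (hpow.const_mul K')
  linarith [nonpos_of_le_comp_two_mul hstep hlim' ht]

section Resolvent

variable {𝓐 : Type*} [CStarAlgebra 𝓐] {a : 𝓐} {z : ℂ}

lemma sub_ne_zero_of_mem_spectrum (ha : IsSelfAdjoint a) (hz : z.im ≠ 0) {w : ℂ}
    (hw : w ∈ spectrum ℂ a) : z - w ≠ 0 :=
  sub_ne_zero.2 fun h ↦ hz <| h ▸ ha.im_eq_zero_of_mem_spectrum hw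

lemma mem_resolventSet_of_im_ne_zero (ha : IsSelfAdjoint a) (hz : z.im ≠ 0) :
    z ∈ resolventSet ℂ a :=
  not_not.1 fun h ↦ hz <| ha.im_eq_zero_of_mem_spectrum h

lemma continuousOn_inv_sub_spectrum (ha : IsSelfAdjoint a) (hz : z.im ≠ 0) :
    ContinuousOn (fun w ↦ (z - w)⁻¹) (spectrum ℂ a) :=
  ContinuousOn.inv₀ (by fun_prop) fun _ ↦ sub_ne_zero_of_mem_spectrum ha hz

lemma cfc_inv_sub_eq_resolvent (ha : IsSelfAdjoint a) (hz : z.im ≠ 0) :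
    cfc (fun w ↦ (z - w)⁻¹) a = resolvent a z := by
  have := ha.isStarNormal
  rw [cfc_inv (fun w ↦ z - w) a fun _ ↦ sub_ne_zero_of_mem_spectrum ha hz, cfc_sub _ _ a,
    cfc_const z a, cfc_id' ℂ a]
  rfl

lemma star_resolvent (ha : IsSelfAdjoint a) (z : ℂ) :
    star (resolvent a z) = resolvent a (conj z) := by
  rw [resolvent, resolvent, ← Ring.inverse_star, star_sub, ha.star_eq, ← algebraMap_star_comm]
  rfl

end Resolvent

section CauchyDensity

variable {𝓐 : Type*} [CStarAlgebra 𝓐] {a : 𝓐} {t : ℝ≥0}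

/-- The operator Poisson kernel `t / π * ((a - s) ^ 2 + t ^ 2)⁻¹` at height `t` and base point `s`,
for a self-adjoint `a`. The kernel is symmetric in the base point and the variable, so it is encoded
as the Cauchy density at `s`, with `a` substituted for the location; this is `0` for `t = 0`. -/
noncomputable def cauchyDensity (t : ℝ≥0) (s : ℝ) (a : 𝓐) : 𝓐 :=
  cfc (fun l ↦ cauchyPDFReal l t s) a

lemma cfc_real_eq_cfc_complex_of_eq (ha : IsSelfAdjoint a) {f : ℝ → ℝ} {g : ℂ → ℂ}
    (h : ∀ x : ℝ, f x = g x) : cfc f a = cfc g a := by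
  rw [cfc_real_eq_complex]
  refine cfc_congr fun w hw ↦ ?_
  have hre : (w.re : ℂ) = w := Complex.ext rfl (ha.im_eq_zero_of_mem_spectrum hw).symm
  rw [h, hre]

lemma ofReal_cauchyPDFReal_eq_mul (x : ℝ) (t : ℝ≥0) (s : ℝ) :
    (cauchyPDFReal x t s : ℂ) =
      t / π * ((conj (s + t * I) - x : ℂ)⁻¹ * (s + t * I - x)⁻¹) := by
  have hprod : (conj (s + t * I) - x : ℂ) * (s + t * I - x) = (s - x) ^ 2 + t ^ 2 := by
    simp only [map_add, map_mul, Complex.conj_ofReal, Complex.conj_I]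
    linear_combination -(t : ℂ) ^ 2 * Complex.I_sq
  rw [cauchyPDFReal_def, ← mul_inv, hprod]
  push_cast
  ring

lemma ofReal_cauchyPDFReal_eq_sub (x : ℝ) (ht : t ≠ 0) (s : ℝ) :
    (cauchyPDFReal x t s : ℂ) =
      (2 * π * I)⁻¹ * ((conj (s + t * I) - x : ℂ)⁻¹ - (s + t * I - x)⁻¹) := by
  have hz : (s + t * I - x : ℂ) ≠ 0 := fun h ↦ ht <| by simpa using congrArg Complex.im h
  have hz' : (conj (s + t * I) - x : ℂ) ≠ 0 := fun h ↦ ht <| by simpa using congrArg Complex.im h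
  have hdiff : (s + t * I - x : ℂ) - (conj (s + t * I) - x) = 2 * I * t := by
    simp only [map_add, map_mul, Complex.conj_ofReal, Complex.conj_I]
    ring
  rw [ofReal_cauchyPDFReal_eq_mul, inv_sub_inv hz' hz, hdiff]
  field_simp [Complex.I_ne_zero]

lemma cauchyDensity_eq_smul_star_resolvent_mul (ha : IsSelfAdjoint a) (ht : t ≠ 0) (s : ℝ) :
    cauchyDensity t s a =
      (t / π : ℂ) • (star (resolvent a (s + t * I)) * resolvent a (s + t * I)) := by
  have hz : (s + t * I : ℂ).im ≠ 0 := by simpa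
  have hz' : (conj (s + t * I : ℂ)).im ≠ 0 := by simpa
  have hcont := continuousOn_inv_sub_spectrum ha hz
  have hcont' := continuousOn_inv_sub_spectrum ha hz'
  rw [star_resolvent ha, ← cfc_inv_sub_eq_resolvent ha hz, ← cfc_inv_sub_eq_resolvent ha hz',
    ← cfc_mul _ _ a hcont' hcont, ← cfc_const_mul _ _ a (hcont'.fun_mul hcont)]
  exact cfc_real_eq_cfc_complex_of_eq ha fun x ↦ ofReal_cauchyPDFReal_eq_mul x t s

lemma cauchyDensity_eq_smul_resolvent_sub (ha : IsSelfAdjoint a) (ht : t ≠ 0) (s : ℝ) :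
    cauchyDensity t s a =
      (2 * π * I : ℂ)⁻¹ • (resolvent a (conj (s + t * I)) - resolvent a (s + t * I)) := by
  have hz : (s + t * I : ℂ).im ≠ 0 := by simpa
  have hz' : (conj (s + t * I : ℂ)).im ≠ 0 := by simpa
  have hcont := continuousOn_inv_sub_spectrum ha hz
  have hcont' := continuousOn_inv_sub_spectrum ha hz'
  rw [← cfc_inv_sub_eq_resolvent ha hz, ← cfc_inv_sub_eq_resolvent ha hz',
    ← cfc_sub _ _ a hcont' hcont, ← cfc_const_mul _ _ a (hcont'.fun_sub hcont)]
  exact cfc_real_eq_cfc_complex_of_eq ha fun x ↦ ofReal_cauchyPDFReal_eq_sub x ht s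

lemma cauchyPDFReal_le_mul_cauchyPDFReal_zero (ht : t ≠ 0) {x R : ℝ} (hx : |x| ≤ R) (s : ℝ) :
    cauchyPDFReal x t s ≤ (2 + 2 * R ^ 2 / t ^ 2) * cauchyPDFReal 0 t s := by
  have hx2 : x ^ 2 ≤ R ^ 2 := sq_le_sq.2 (hx.trans (le_abs_self R))
  have hweight : s ^ 2 + t ^ 2 ≤ (2 + 2 * R ^ 2 / t ^ 2) * ((s - x) ^ 2 + t ^ 2) := by
    have hR : 2 * R ^ 2 ≤ 2 * R ^ 2 / t ^ 2 * ((s - x) ^ 2 + t ^ 2) := by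
      rw [div_mul_eq_mul_div, le_div_iff₀ (by positivity)]
      gcongr
      linarith [sq_nonneg (s - x)]
    nlinarith [sq_nonneg (s - 2 * x)]
  rw [cauchyPDFReal_def, cauchyPDFReal_def, sub_zero, mul_left_comm]
  gcongr
  rwa [← div_eq_mul_inv, inv_eq_one_div, div_le_div_iff₀ (by positivity) (by positivity), one_mul]

lemma continuous_cauchyPDFReal_location (ht : t ≠ 0) (s : ℝ) :
    Continuous fun l ↦ cauchyPDFReal l t s := by
  simp only [cauchyPDFReal_def]
  fun_prop (disch := intros; positivity)

lemma continuous_uncurry_smul_cauchyPDFReal (ht : t ≠ 0) (f : ℝ →ᵇ ℝ) :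
    Continuous (Function.uncurry fun s l ↦ f s * cauchyPDFReal l t s) := by
  simp only [Function.uncurry_def, cauchyPDFReal_def]
  fun_prop (disch := intros; positivity)

lemma norm_mul_cauchyPDFReal_le_of_mem_spectrum (ht : t ≠ 0) (f : ℝ →ᵇ ℝ) (s : ℝ) {l : ℝ}
    (hl : l ∈ spectrum ℝ a) :
    ‖f s * cauchyPDFReal l t s‖ ≤
      ‖f‖ * ((2 + 2 * (‖a‖ * ‖(1 : 𝓐)‖) ^ 2 / t ^ 2) * cauchyPDFReal 0 t s) := by
  rw [norm_mul, Real.norm_of_nonneg (cauchyPDF_pos l ht s).le]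
  exact mul_le_mul (f.norm_coe_le_norm s)
    (cauchyPDFReal_le_mul_cauchyPDFReal_zero ht (spectrum.norm_le_norm_mul_of_mem hl) s)
    (cauchyPDF_pos l ht s).le (norm_nonneg f)

lemma integrable_smul_cauchyDensity (ha : IsSelfAdjoint a) (ht : t ≠ 0) (f : ℝ →ᵇ ℝ) :
    Integrable fun s ↦ f s • cauchyDensity t s a := by
  have h := integrable_cfc (μ := volume) (fun s l ↦ f s * cauchyPDFReal l t s) _ a
    (continuous_uncurry_smul_cauchyPDFReal ht f).continuousOn
    (.of_forall fun s _ hl ↦ norm_mul_cauchyPDFReal_le_of_mem_spectrum ht f s hl)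
    (((integrable_cauchyPDFReal 0).const_mul _).const_mul _).2
  exact h.congr <| .of_forall fun s ↦
    cfc_const_mul _ _ a (continuous_cauchyPDFReal_location ht s).continuousOn

lemma cfc_integral_cauchyPDFReal (ha : IsSelfAdjoint a) (ht : t ≠ 0) (f : ℝ →ᵇ ℝ) :
    cfc (fun l ↦ ∫ s, f s * cauchyPDFReal l t s) a = ∫ s, f s • cauchyDensity t s a := by
  rw [cfc_integral (fun s l ↦ f s * cauchyPDFReal l t s) _ a
    (continuous_uncurry_smul_cauchyPDFReal ht f).continuousOn
    (.of_forall fun s _ hl ↦ norm_mul_cauchyPDFReal_le_of_mem_spectrum ht f s hl)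
    (((integrable_cauchyPDFReal 0).const_mul _).const_mul _).2]
  exact integral_congr_ae <| .of_forall fun s ↦
    cfc_const_mul _ _ a (continuous_cauchyPDFReal_location ht s).continuousOn

lemma integrable_cauchyDensity (ha : IsSelfAdjoint a) (ht : t ≠ 0) :
    Integrable fun s ↦ cauchyDensity t s a := by
  simpa using integrable_smul_cauchyDensity ha ht 1

lemma integral_cauchyDensity (ha : IsSelfAdjoint a) (ht : t ≠ 0) :
    ∫ s, cauchyDensity t s a = 1 := by
  have h := cfc_integral_cauchyPDFReal ha ht 1
  simp only [BoundedContinuousFunction.coe_one, Pi.one_apply, one_mul, one_smul,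
    integral_cauchyPDFReal_eq_one _ ht] at h
  rw [← h, cfc_const_one ℝ a]

end CauchyDensity

section CauchyDensitySub

variable {H : Type*} [NormedAddCommGroup H] [InnerProductSpace ℂ H] [CompleteSpace H]
  {A B : H →L[ℂ] H} {t : ℝ≥0}

lemma re_inner_cauchyDensity_apply_self (hA : IsSelfAdjoint A) (ht : t ≠ 0) (s : ℝ) (x : H) :
    (⟪cauchyDensity t s A x, x⟫_ℂ).re = t / π * ‖resolvent A (s + t * I) x‖ ^ 2 := by
  rw [cauchyDensity_eq_smul_star_resolvent_mul hA ht, smul_apply,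
    inner_smul_left, mul_apply_eq_comp, ContinuousLinearMap.star_eq_adjoint,
    ContinuousLinearMap.adjoint_inner_left, inner_self_eq_norm_sq_to_K]
  simp [← Complex.ofReal_pow]

lemma norm_resolvent_conj_apply (hA : IsSelfAdjoint A) {z : ℂ} (hz : z.im ≠ 0) (x : H) :
    ‖resolvent A (conj z) x‖ = ‖resolvent A z x‖ := by
  have hnormal : IsStarNormal (resolvent A z) := by
    have := hA.isStarNormal
    rw [← cfc_inv_sub_eq_resolvent hA hz]
    infer_instance
  rw [← star_resolvent hA, ContinuousLinearMap.star_eq_adjoint]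
  exact (ContinuousLinearMap.isStarNormal_iff_norm_eq_adjoint.1 hnormal x).symm

lemma norm_inner_mul_mul_apply_le (R D S : H →L[ℂ] H) (x y : H) :
    ‖⟪(R * D * S) x, y⟫_ℂ‖ ≤ ‖D‖ / 2 * (‖S x‖ ^ 2 + ‖star R y‖ ^ 2) := by
  calc ‖⟪(R * D * S) x, y⟫_ℂ‖ = ‖⟪D (S x), star R y⟫_ℂ‖ := by
        rw [ContinuousLinearMap.star_eq_adjoint, ContinuousLinearMap.adjoint_inner_right]
        rfl
    _ ≤ ‖D‖ * ‖S x‖ * ‖star R y‖ :=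
      (norm_inner_le_norm _ _).trans (by gcongr; exact D.le_opNorm _)
    _ ≤ ‖D‖ / 2 * (‖S x‖ ^ 2 + ‖star R y‖ ^ 2) := by
      linarith [mul_le_mul_of_nonneg_left (two_mul_le_add_sq ‖S x‖ ‖star R y‖) (norm_nonneg D)]

lemma norm_inner_resolvent_sub_apply_le (hA : IsSelfAdjoint A) (hB : IsSelfAdjoint B) {z : ℂ}
    (hz : z.im ≠ 0) (x y : H) :
    ‖⟪(resolvent A z - resolvent B z) x, y⟫_ℂ‖ ≤
      ‖A - B‖ / 2 * (‖resolvent B z x‖ ^ 2 + ‖resolvent A z y‖ ^ 2) := by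
  rw [spectrum.resolvent_sub_resolvent (mem_resolventSet_of_im_ne_zero hA hz)
    (mem_resolventSet_of_im_ne_zero hB hz), ← norm_resolvent_conj_apply hA hz y,
    ← star_resolvent hA]
  exact norm_inner_mul_mul_apply_le ..

lemma norm_inner_cauchyDensity_sub_apply_le (hA : IsSelfAdjoint A) (hB : IsSelfAdjoint B)
    (ht : t ≠ 0) (s : ℝ) (x y : H) :
    ‖⟪(cauchyDensity t s A - cauchyDensity t s B) x, y⟫_ℂ‖ ≤
      ‖A - B‖ / (2 * t) *
        ((⟪cauchyDensity t s B x, x⟫_ℂ).re + (⟪cauchyDensity t s A y, y⟫_ℂ).re) := by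
  set z : ℂ := s + t * I with hz_def
  have hz : z.im ≠ 0 := by simpa [hz_def]
  have hz' : (conj z).im ≠ 0 := by simpa [hz_def]
  set M := ‖resolvent B z x‖ ^ 2 + ‖resolvent A z y‖ ^ 2
  have hR := norm_inner_resolvent_sub_apply_le hA hB hz x y
  have hR' := norm_inner_resolvent_sub_apply_le hA hB hz' x y
  rw [norm_resolvent_conj_apply hB hz, norm_resolvent_conj_apply hA hz] at hR'
  have hdiff : cauchyDensity t s A - cauchyDensity t s B = (2 * π * I : ℂ)⁻¹ •
      ((resolvent A (conj z) - resolvent B (conj z)) - (resolvent A z - resolvent B z)) := by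
    rw [cauchyDensity_eq_smul_resolvent_sub hA ht, cauchyDensity_eq_smul_resolvent_sub hB ht,
      ← smul_sub, sub_sub_sub_comm]
  have hscale : ‖(2 * π * I : ℂ)⁻¹‖ = (2 * π)⁻¹ := by simp [abs_of_pos Real.pi_pos]
  calc ‖⟪(cauchyDensity t s A - cauchyDensity t s B) x, y⟫_ℂ‖
      = (2 * π)⁻¹ * ‖⟪(resolvent A (conj z) - resolvent B (conj z)) x, y⟫_ℂ -
          ⟪(resolvent A z - resolvent B z) x, y⟫_ℂ‖ := by
        rw [hdiff, smul_apply, inner_smul_left, sub_apply (_ - _), inner_sub_left, norm_mul,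
          RCLike.norm_conj, hscale]
    _ ≤ (2 * π)⁻¹ * (‖A - B‖ / 2 * M + ‖A - B‖ / 2 * M) := by
        gcongr
        exact (norm_sub_le _ _).trans (add_le_add hR' hR)
    _ = _ := by
        rw [re_inner_cauchyDensity_apply_self hB ht, re_inner_cauchyDensity_apply_self hA ht]
        field_simp
        ring

lemma inner_integral_apply {X : Type*} [MeasurableSpace X] {μ : Measure X} {F : X → H →L[ℂ] H}
    (hF : Integrable F μ) (x y : H) : ⟪(∫ s, F s ∂μ) x, y⟫_ℂ = ∫ s, ⟪F s x, y⟫_ℂ ∂μ := by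
  rw [ContinuousLinearMap.integral_apply hF, ← inner_conj_symm,
    ← integral_inner (hF.apply_continuousLinearMap x), ← integral_conj]
  simp only [inner_conj_symm]

lemma integrable_re_inner_cauchyDensity_apply_self (hA : IsSelfAdjoint A) (ht : t ≠ 0) (x : H) :
    Integrable fun s ↦ (⟪cauchyDensity t s A x, x⟫_ℂ).re :=
  (((integrable_cauchyDensity hA ht).apply_continuousLinearMap x).inner_const (𝕜 := ℂ) x).re

lemma integral_re_inner_cauchyDensity_apply_self (hA : IsSelfAdjoint A) (ht : t ≠ 0) (x : H) :
    ∫ s, (⟪cauchyDensity t s A x, x⟫_ℂ).re = ‖x‖ ^ 2 := by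
  have hintegrable := integrable_cauchyDensity hA ht
  have h : ∫ s, ⟪cauchyDensity t s A x, x⟫_ℂ = ⟪x, x⟫_ℂ := by
    rw [← inner_integral_apply hintegrable, integral_cauchyDensity hA ht]
    rfl
  calc ∫ s, (⟪cauchyDensity t s A x, x⟫_ℂ).re = (∫ s, ⟪cauchyDensity t s A x, x⟫_ℂ).re :=
        integral_re ((hintegrable.apply_continuousLinearMap x).inner_const (𝕜 := ℂ) x)
    _ = ‖x‖ ^ 2 := by rw [h]; exact inner_self_eq_norm_sq (𝕜 := ℂ) x

lemma norm_integral_smul_cauchyDensity_sub_le (hA : IsSelfAdjoint A) (hB : IsSelfAdjoint B)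
    (ht : t ≠ 0) (f : ℝ →ᵇ ℝ) :
    ‖(∫ s, f s • cauchyDensity t s A) - ∫ s, f s • cauchyDensity t s B‖ ≤
      ‖f‖ * ‖A - B‖ / t := by
  have hintA := integrable_smul_cauchyDensity hA ht f
  have hintB := integrable_smul_cauchyDensity hB ht f
  rw [← integral_sub hintA hintB]
  refine ContinuousLinearMap.opNorm_le_of_re_inner_le (𝕜 := ℂ) (by positivity) fun x y hx hy ↦
    (Complex.re_le_norm _).trans ?_
  have hintx := integrable_re_inner_cauchyDensity_apply_self hB ht x
  have hinty := integrable_re_inner_cauchyDensity_apply_self hA ht y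
  rw [inner_integral_apply (F := fun s ↦ f s • cauchyDensity t s A - f s • cauchyDensity t s B)
    (hintA.sub hintB)]
  calc ‖∫ s, ⟪(f s • cauchyDensity t s A - f s • cauchyDensity t s B) x, y⟫_ℂ‖
      ≤ ∫ s, ‖f‖ * (‖A - B‖ / (2 * t) *
          ((⟪cauchyDensity t s B x, x⟫_ℂ).re + (⟪cauchyDensity t s A y, y⟫_ℂ).re)) := by
        refine norm_integral_le_of_norm_le (((hintx.add hinty).const_mul _).const_mul _)
          (.of_forall fun s ↦ ?_)
        rw [← smul_sub, smul_apply, inner_smul_left_eq_smul, norm_smul]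
        gcongr
        · exact f.norm_coe_le_norm s
        · exact norm_inner_cauchyDensity_sub_apply_le hA hB ht s x y
    _ = ‖f‖ * ‖A - B‖ / t := by
        rw [integral_const_mul, integral_const_mul, integral_add hintx hinty,
          integral_re_inner_cauchyDensity_apply_self hB ht,
          integral_re_inner_cauchyDensity_apply_self hA ht, hx, hy]
        field

end CauchyDensitySub

section PoissonMean

/-- The Poisson semigroup `P_t` on bounded continuous functions: `poissonMean t f` is the harmonic
extension of `f` to the upper half-plane, restricted to height `t`. -/
noncomputable def poissonMean (t : ℝ≥0) : (ℝ →ᵇ ℝ) →L[ℝ] (ℝ →ᵇ ℝ) :=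
  translationMean (cauchyMeasure 0 t)

variable {t : ℝ≥0}

lemma norm_poissonMean_apply_le (t : ℝ≥0) (f : ℝ →ᵇ ℝ) : ‖poissonMean t f‖ ≤ ‖f‖ :=
  ((poissonMean t).le_of_opNorm_le (norm_translationMean_le _) f).trans_eq (one_mul _)

lemma integrable_mul_cauchyPDFReal (f : ℝ →ᵇ ℝ) (x : ℝ) :
    Integrable fun r ↦ f (x + r) * cauchyPDFReal 0 t r :=
  (integrable_cauchyPDFReal 0).bdd_mul (Continuous.aestronglyMeasurable (by fun_prop))
    (.of_forall fun r ↦ f.norm_coe_le_norm (x + r))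

lemma poissonMean_apply (ht : t ≠ 0) (f : ℝ →ᵇ ℝ) (x : ℝ) :
    poissonMean t f x = ∫ r, f (x + r) * cauchyPDFReal 0 t r := by
  rw [poissonMean, translationMean_apply, cauchyMeasure_of_scale_ne_zero 0 ht,
    integral_withDensity_eq_integral_toReal_smul (by fun_prop) (by simp [cauchyPDF])]
  simp only [cauchyPDF, ENNReal.toReal_ofReal (cauchyPDF_pos 0 ht _).le, smul_eq_mul, mul_comm]

lemma poissonMean_apply_eq_integral_location (ht : t ≠ 0) (f : ℝ →ᵇ ℝ) (x : ℝ) :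
    poissonMean t f x = ∫ s, f s * cauchyPDFReal x t s := by
  rw [poissonMean_apply ht, ← integral_add_left_eq_self (fun s ↦ f s * _) x]
  simp only [cauchyPDFReal_def, sub_zero, add_sub_cancel_left]

variable {H : Type*} [NormedAddCommGroup H] [InnerProductSpace ℂ H] [CompleteSpace H]
  {A B : H →L[ℂ] H}

lemma norm_cfc_poissonMean_sub_le (hA : IsSelfAdjoint A) (hB : IsSelfAdjoint B) (ht : t ≠ 0)
    (f : ℝ →ᵇ ℝ) :
    ‖cfc (poissonMean t f) A - cfc (poissonMean t f) B‖ ≤ ‖f‖ * ‖A - B‖ / t := by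
  have hcfc {T : H →L[ℂ] H} (hT : IsSelfAdjoint T) :
      cfc (poissonMean t f) T = ∫ s, f s • cauchyDensity t s T := by
    rw [← cfc_integral_cauchyPDFReal hT ht]
    exact congrArg (cfc · T) (funext (poissonMean_apply_eq_integral_location ht f))
  rw [hcfc hA, hcfc hB]
  exact norm_integral_smul_cauchyDensity_sub_le hA hB ht f

end PoissonMean

section PoissonExtrapolation

/-- The Richardson extrapolation `2 P_t - P_{2t}` of the Poisson semigroup. The leading tails of the
two kernels cancel: the combined kernel is nonnegative and decays like `r⁻⁴`, so it approximates
`α`-Hölder functions to order `t ^ α` with a constant that stays bounded as `α → 1`. -/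
noncomputable def poissonExtrapolation (t : ℝ≥0) : (ℝ →ᵇ ℝ) →L[ℝ] (ℝ →ᵇ ℝ) :=
  (2 : ℝ) • poissonMean t - poissonMean (2 * t)

lemma poissonExtrapolation_apply (t : ℝ≥0) (f : ℝ →ᵇ ℝ) :
    poissonExtrapolation t f = (2 : ℝ) • poissonMean t f - poissonMean (2 * t) f := rfl

lemma norm_poissonExtrapolation_apply_le (t : ℝ≥0) (f : ℝ →ᵇ ℝ) :
    ‖poissonExtrapolation t f‖ ≤ 3 * ‖f‖ := by
  have h := norm_sub_le ((2 : ℝ) • poissonMean t f) (poissonMean (2 * t) f)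
  rw [norm_smul, Real.norm_two] at h
  rw [poissonExtrapolation_apply]
  linarith [norm_poissonMean_apply_le t f, norm_poissonMean_apply_le (2 * t) f]

lemma poissonExtrapolation_comm (s t : ℝ≥0) (f : ℝ →ᵇ ℝ) :
    poissonExtrapolation s (poissonExtrapolation t f) =
      poissonExtrapolation t (poissonExtrapolation s f) := by
  have hP (u v : ℝ≥0) : poissonMean u (poissonMean v f) = poissonMean v (poissonMean u f) :=
    translationMean_comm _ _ f
  simp only [poissonExtrapolation_apply, map_sub, map_smul]
  rw [hP s t, hP s (2 * t), hP (2 * s) t, hP (2 * s) (2 * t)]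
  module

lemma two_mul_cauchyPDFReal_sub_eq {t : ℝ≥0} (ht : t ≠ 0) (r : ℝ) :
    2 * cauchyPDFReal 0 t r - cauchyPDFReal 0 (2 * t) r =
      cauchyPDFReal 0 t r * (6 * t ^ 2 / (r ^ 2 + (2 * t) ^ 2)) := by
  simp only [cauchyPDFReal_def, sub_zero, NNReal.coe_mul, NNReal.coe_ofNat]
  field_simp
  ring

lemma rpow_le_one_add_sq_div_four {u α : ℝ} (hu : 0 ≤ u) (hα₀ : 0 ≤ α) (hα₁ : α ≤ 1) :
    u ^ α ≤ 1 + u ^ 2 / 4 := by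
  rcases le_total u 1 with hu₁ | hu₁
  · linarith [Real.rpow_le_one hu hu₁ hα₀, sq_nonneg u]
  · have hlinear : u ^ α ≤ u :=
      (Real.rpow_le_rpow_of_exponent_le hu₁ hα₁).trans_eq (Real.rpow_one u)
    linarith [sq_nonneg (u - 2)]

lemma rpow_mul_div_le {t α : ℝ} (ht : 0 < t) (hα₀ : 0 ≤ α) (hα₁ : α ≤ 1) (r : ℝ) :
    |r| ^ α * (6 * t ^ 2 / (r ^ 2 + (2 * t) ^ 2)) ≤ 3 / 2 * t ^ α := by
  have hu := rpow_le_one_add_sq_div_four (div_nonneg (abs_nonneg r) ht.le) hα₀ hα₁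
  rw [Real.div_rpow (abs_nonneg r) ht.le, div_le_iff₀ (by positivity), div_pow, sq_abs] at hu
  calc |r| ^ α * (6 * t ^ 2 / (r ^ 2 + (2 * t) ^ 2))
      ≤ (1 + r ^ 2 / t ^ 2 / 4) * t ^ α * (6 * t ^ 2 / (r ^ 2 + (2 * t) ^ 2)) := by gcongr
    _ = 3 / 2 * t ^ α := by field

lemma poissonExtrapolation_apply_sub_self {t : ℝ≥0} (ht : t ≠ 0) (f : ℝ →ᵇ ℝ) (x : ℝ) :
    poissonExtrapolation t f x - f x =
      ∫ r, (f (x + r) - f x) * (2 * cauchyPDFReal 0 t r - cauchyPDFReal 0 (2 * t) r) := by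
  have hP {u : ℝ≥0} (hu : u ≠ 0) :
      poissonMean u f x - f x = ∫ r, (f (x + r) - f x) * cauchyPDFReal 0 u r := by
    simp only [sub_mul]
    rw [integral_sub (integrable_mul_cauchyPDFReal f x) ((integrable_cauchyPDFReal 0).const_mul _),
      integral_const_mul, integral_cauchyPDFReal_eq_one 0 hu, mul_one, poissonMean_apply hu]
  have hintegrable (u : ℝ≥0) : Integrable fun r ↦ (f (x + r) - f x) * cauchyPDFReal 0 u r := by
    simp only [sub_mul]
    exact (integrable_mul_cauchyPDFReal f x).sub ((integrable_cauchyPDFReal 0).const_mul (f x))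
  calc poissonExtrapolation t f x - f x
      = 2 * (poissonMean t f x - f x) - (poissonMean (2 * t) f x - f x) := by
        simp only [poissonExtrapolation_apply, BoundedContinuousFunction.coe_sub,
          BoundedContinuousFunction.coe_smul, Pi.sub_apply, smul_eq_mul]
        ring
    _ = _ := by
        rw [hP ht, hP (by positivity), ← integral_const_mul,
          ← integral_sub ((hintegrable t).const_mul 2) (hintegrable (2 * t))]
        exact integral_congr_ae (.of_forall fun r ↦ by ring)

lemma norm_poissonExtrapolation_sub_self_le {L α t : ℝ≥0} (hα : α ≤ 1) (ht : t ≠ 0) {f : ℝ →ᵇ ℝ}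
    (hf : HolderWith L α f) :
    ‖poissonExtrapolation t f - f‖ ≤ 3 / 2 * L * (t : ℝ) ^ (α : ℝ) := by
  refine (BoundedContinuousFunction.norm_le (by positivity)).2 fun x ↦ ?_
  rw [BoundedContinuousFunction.sub_apply, poissonExtrapolation_apply_sub_self ht]
  calc ‖∫ r, (f (x + r) - f x) * (2 * cauchyPDFReal 0 t r - cauchyPDFReal 0 (2 * t) r)‖
      ≤ ∫ r, 3 / 2 * L * (t : ℝ) ^ (α : ℝ) * cauchyPDFReal 0 t r := by
        refine norm_integral_le_of_norm_le ((integrable_cauchyPDFReal 0).const_mul _)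
          (.of_forall fun r ↦ ?_)
        have hfr : ‖f (x + r) - f x‖ ≤ L * |r| ^ (α : ℝ) := by
          simpa [Real.dist_eq] using hf.dist_le (x + r) x
        have hkernel := rpow_mul_div_le (NNReal.coe_pos.2 ht.bot_lt) α.2 (NNReal.coe_le_one.2 hα) r
        have hpdf := (cauchyPDF_pos 0 ht r).le
        rw [two_mul_cauchyPDFReal_sub_eq ht, norm_mul,
          Real.norm_of_nonneg (mul_nonneg hpdf (by positivity))]
        calc ‖f (x + r) - f x‖ * (cauchyPDFReal 0 t r * (6 * t ^ 2 / (r ^ 2 + (2 * t) ^ 2)))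
            ≤ L * |r| ^ (α : ℝ) * (cauchyPDFReal 0 t r * (6 * t ^ 2 / (r ^ 2 + (2 * t) ^ 2))) := by
              gcongr
          _ = L * cauchyPDFReal 0 t r *
                (|r| ^ (α : ℝ) * (6 * t ^ 2 / (r ^ 2 + (2 * t) ^ 2))) := by ring
          _ ≤ L * cauchyPDFReal 0 t r * (3 / 2 * (t : ℝ) ^ (α : ℝ)) :=
            mul_le_mul_of_nonneg_left hkernel (by positivity)
          _ = 3 / 2 * L * (t : ℝ) ^ (α : ℝ) * cauchyPDFReal 0 t r := by ring
    _ = 3 / 2 * L * (t : ℝ) ^ (α : ℝ) := by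
        rw [integral_const_mul, integral_cauchyPDFReal_eq_one 0 ht, mul_one]

lemma norm_poissonExtrapolation_sub_two_mul_le {L α t : ℝ≥0} (hα : α ≤ 1) (ht : t ≠ 0)
    {f : ℝ →ᵇ ℝ} (hf : HolderWith L α f) :
    ‖poissonExtrapolation t f - poissonExtrapolation (2 * t) f‖ ≤
      9 / 2 * L * (t : ℝ) ^ (α : ℝ) := by
  have h₁ := norm_poissonExtrapolation_sub_self_le hα ht hf
  have h₂ := norm_poissonExtrapolation_sub_self_le hα (mul_ne_zero two_ne_zero ht) hf
  have hpow : (↑(2 * t) : ℝ) ^ (α : ℝ) ≤ 2 * (t : ℝ) ^ (α : ℝ) := by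
    rw [NNReal.coe_mul, NNReal.coe_ofNat, Real.mul_rpow zero_le_two t.coe_nonneg]
    gcongr
    exact Real.rpow_le_self_of_one_le one_le_two hα
  calc ‖poissonExtrapolation t f - poissonExtrapolation (2 * t) f‖
      = ‖(poissonExtrapolation t f - f) - (poissonExtrapolation (2 * t) f - f)‖ := by
        rw [sub_sub_sub_cancel_right]
    _ ≤ 3 / 2 * L * (t : ℝ) ^ (α : ℝ) + 3 / 2 * L * (2 * (t : ℝ) ^ (α : ℝ)) :=
        norm_sub_le_of_le h₁ (h₂.trans (by gcongr))
    _ = 9 / 2 * L * (t : ℝ) ^ (α : ℝ) := by ring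

lemma norm_sub_poissonExtrapolation_sq_le {L α t : ℝ≥0} (hα : α ≤ 1) (ht : t ≠ 0) {f : ℝ →ᵇ ℝ}
    (hf : HolderWith L α f) :
    ‖f - poissonExtrapolation t (poissonExtrapolation t f)‖ ≤ 6 * L * (t : ℝ) ^ (α : ℝ) := by
  have h := norm_poissonExtrapolation_sub_self_le hα ht hf
  set C := poissonExtrapolation t
  have hC := norm_poissonExtrapolation_apply_le t (C f - f)
  calc ‖f - C (C f)‖ = ‖C (C f - f) + (C f - f)‖ := by
        rw [map_sub, ← norm_neg]
        congr 1
        abel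
    _ ≤ 3 * ‖C f - f‖ + ‖C f - f‖ := norm_add_le_of_le hC le_rfl
    _ ≤ 6 * L * (t : ℝ) ^ (α : ℝ) := by linarith

end PoissonExtrapolation

section CfcSub

variable {𝓐 : Type*} [CStarAlgebra 𝓐]

/-- The difference `f(a) - f(b)` of functional calculi, as a linear map in the bounded continuous
function `f`. -/
noncomputable def cfcSub (a b : 𝓐) : (ℝ →ᵇ ℝ) →ₗ[ℝ] 𝓐 where
  toFun f := cfc f a - cfc f b
  map_add' f g := by
    have h (c : 𝓐) : cfc (⇑(f + g)) c = cfc f c + cfc g c :=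
      cfc_add c f g f.continuous.continuousOn g.continuous.continuousOn
    rw [h a, h b, add_sub_add_comm]
  map_smul' r f := by
    have h (c : 𝓐) : cfc (⇑(r • f)) c = r • cfc f c := cfc_smul r f c f.continuous.continuousOn
    rw [h a, h b, ← smul_sub, RingHom.id_apply]

lemma cfcSub_apply (a b : 𝓐) (f : ℝ →ᵇ ℝ) : cfcSub a b f = cfc f a - cfc f b := rfl

lemma norm_cfcSub_le (a b : 𝓐) (f : ℝ →ᵇ ℝ) : ‖cfcSub a b f‖ ≤ 2 * ‖f‖ := by
  have hcfc (c : 𝓐) : ‖cfc f c‖ ≤ ‖f‖ :=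
    norm_cfc_le (norm_nonneg f) fun x _ ↦ f.norm_coe_le_norm x
  exact (norm_sub_le_of_le (hcfc a) (hcfc b)).trans_eq (two_mul _).symm

end CfcSub

section OperatorHolder

variable {H : Type*} [NormedAddCommGroup H] [InnerProductSpace ℂ H] [CompleteSpace H]
  {A B : H →L[ℂ] H} {L α t : ℝ≥0} {f : ℝ →ᵇ ℝ}

lemma norm_cfcSub_poissonExtrapolation_le (hA : IsSelfAdjoint A) (hB : IsSelfAdjoint B)
    (ht : t ≠ 0) (f : ℝ →ᵇ ℝ) :
    ‖cfcSub A B (poissonExtrapolation t f)‖ ≤ 5 / 2 * (‖f‖ * ‖A - B‖ / t) := by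
  have h₁ : ‖cfcSub A B (poissonMean t f)‖ ≤ ‖f‖ * ‖A - B‖ / t :=
    norm_cfc_poissonMean_sub_le hA hB ht f
  have h₂ : ‖cfcSub A B (poissonMean (2 * t) f)‖ ≤ ‖f‖ * ‖A - B‖ / (2 * t) :=
    norm_cfc_poissonMean_sub_le hA hB (mul_ne_zero two_ne_zero ht) f
  rw [poissonExtrapolation_apply, map_sub, map_smul]
  calc ‖(2 : ℝ) • cfcSub A B (poissonMean t f) - cfcSub A B (poissonMean (2 * t) f)‖
      ≤ 2 * (‖f‖ * ‖A - B‖ / t) + ‖f‖ * ‖A - B‖ / (2 * t) := by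
        refine norm_sub_le_of_le ?_ h₂
        rw [norm_smul, Real.norm_two]
        gcongr
    _ = 5 / 2 * (‖f‖ * ‖A - B‖ / t) := by
        field_simp
        ring

lemma norm_cfcSub_poissonExtrapolation_sq_le_add (hA : IsSelfAdjoint A) (hB : IsSelfAdjoint B)
    (hα : α ≤ 1) (ht : t ≠ 0) (hf : HolderWith L α f) :
    ‖cfcSub A B (poissonExtrapolation t (poissonExtrapolation t f))‖ ≤
      ‖cfcSub A B (poissonExtrapolation (2 * t) (poissonExtrapolation (2 * t) f))‖ +
        135 / 8 * L * ‖A - B‖ * (t : ℝ) ^ (α - 1 : ℝ) := by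
  set C := poissonExtrapolation t
  set C' := poissonExtrapolation (2 * t)
  have hfactor : C (C f) = C' (C' f) + (C (C f - C' f) + C' (C f - C' f)) := by
    rw [map_sub, map_sub, poissonExtrapolation_comm t (2 * t) f]
    abel
  have hsub := norm_poissonExtrapolation_sub_two_mul_le hα ht hf
  have h₁ := norm_cfcSub_poissonExtrapolation_le hA hB ht (C f - C' f)
  have h₂ := norm_cfcSub_poissonExtrapolation_le hA hB (mul_ne_zero two_ne_zero ht) (C f - C' f)
  calc ‖cfcSub A B (C (C f))‖
      ≤ ‖cfcSub A B (C' (C' f))‖ +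
          (5 / 2 * (‖C f - C' f‖ * ‖A - B‖ / t) + 5 / 2 * (‖C f - C' f‖ * ‖A - B‖ / ↑(2 * t))) := by
        rw [hfactor, map_add, map_add]
        exact norm_add_le_of_le le_rfl (norm_add_le_of_le h₁ h₂)
    _ = ‖cfcSub A B (C' (C' f))‖ + 15 / 4 * (‖C f - C' f‖ * ‖A - B‖ / t) := by
        rw [NNReal.coe_mul, NNReal.coe_ofNat]
        field_simp
        ring
    _ ≤ ‖cfcSub A B (C' (C' f))‖ + 15 / 4 * (9 / 2 * L * (t : ℝ) ^ (α : ℝ) * ‖A - B‖ / t) := by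
        gcongr
    _ = _ := by
        rw [Real.rpow_sub_one (NNReal.coe_ne_zero.2 ht)]
        ring

lemma tendsto_norm_cfcSub_poissonExtrapolation_sq (hA : IsSelfAdjoint A) (hB : IsSelfAdjoint B)
    (f : ℝ →ᵇ ℝ) :
    Tendsto (fun t ↦ ‖cfcSub A B (poissonExtrapolation t (poissonExtrapolation t f))‖) atTop
      (𝓝 0) := by
  have hlim : Tendsto (fun t : ℝ≥0 ↦ 5 / 2 * (3 * ‖f‖ * ‖A - B‖ / t)) atTop (𝓝 0) := by
    simpa using ((NNReal.tendsto_coe_atTop.2 tendsto_id).const_div_atTop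
      (3 * ‖f‖ * ‖A - B‖)).const_mul (5 / 2)
  refine squeeze_zero' (.of_forall fun _ ↦ norm_nonneg _) ?_ hlim
  filter_upwards [eventually_ne_atTop 0] with t ht
  refine (norm_cfcSub_poissonExtrapolation_le hA hB ht _).trans ?_
  gcongr
  exact norm_poissonExtrapolation_apply_le t f

lemma norm_cfcSub_poissonExtrapolation_sq_le (hA : IsSelfAdjoint A) (hB : IsSelfAdjoint B)
    (hα : α < 1) (ht : t ≠ 0) (hf : HolderWith L α f) :
    ‖cfcSub A B (poissonExtrapolation t (poissonExtrapolation t f))‖ ≤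
      135 / 4 * (1 - α : ℝ)⁻¹ * L * ‖A - B‖ * (t : ℝ) ^ (α - 1 : ℝ) := by
  have hα' : (α : ℝ) < 1 := hα
  refine (le_rpow_of_le_comp_two_mul_add_rpow (K := 135 / 8 * L * ‖A - B‖) (by positivity)
    (by linarith [α.coe_nonneg]) (sub_neg.2 hα')
    (fun u hu ↦ norm_cfcSub_poissonExtrapolation_sq_le_add hA hB hα.le hu.ne' hf)
    (tendsto_norm_cfcSub_poissonExtrapolation_sq hA hB f) ht.bot_lt).trans_eq ?_
  rw [neg_sub]
  ring

lemma norm_cfcSub_le_of_holderWith (hA : IsSelfAdjoint A) (hB : IsSelfAdjoint B) (hα : α < 1)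
    (hf : HolderWith L α f) :
    ‖cfcSub A B f‖ ≤ 46 * (1 - α : ℝ)⁻¹ * L * ‖A - B‖ ^ (α : ℝ) := by
  have hα' : (0 : ℝ) < 1 - α := sub_pos.2 hα
  rcases eq_or_ne A B with rfl | hAB
  · rw [cfcSub_apply, sub_self, norm_zero]
    positivity
  have hδ : ‖A - B‖₊ ≠ 0 := nnnorm_ne_zero_iff.2 (sub_ne_zero.2 hAB)
  set g := poissonExtrapolation ‖A - B‖₊ (poissonExtrapolation ‖A - B‖₊ f)
  have hsmooth : ‖cfcSub A B g‖ ≤ 135 / 4 * (1 - α : ℝ)⁻¹ * L * ‖A - B‖ ^ (α : ℝ) := by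
    refine (norm_cfcSub_poissonExtrapolation_sq_le hA hB hα hδ hf).trans_eq ?_
    rw [mul_assoc _ ‖A - B‖, coe_nnnorm, Real.rpow_sub_one (norm_ne_zero_iff.2 (sub_ne_zero.2 hAB)),
      mul_div_cancel₀ _ (norm_ne_zero_iff.2 (sub_ne_zero.2 hAB))]
  have hrough : ‖cfcSub A B (f - g)‖ ≤ 2 * (6 * L * ‖A - B‖ ^ (α : ℝ)) :=
    (norm_cfcSub_le A B (f - g)).trans <| by
      gcongr
      exact norm_sub_poissonExtrapolation_sq_le hα.le hδ hf
  have hinv : (1 : ℝ) ≤ (1 - α : ℝ)⁻¹ := (one_le_inv₀ hα').2 (sub_le_self _ α.coe_nonneg)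
  calc ‖cfcSub A B f‖ = ‖cfcSub A B (f - g) + cfcSub A B g‖ := by rw [← map_add, sub_add_cancel]
    _ ≤ 12 * 1 * L * ‖A - B‖ ^ (α : ℝ) + 135 / 4 * (1 - α : ℝ)⁻¹ * L * ‖A - B‖ ^ (α : ℝ) :=
        norm_add_le_of_le (hrough.trans_eq (by ring)) hsmooth
    _ ≤ 12 * (1 - α : ℝ)⁻¹ * L * ‖A - B‖ ^ (α : ℝ) +
          135 / 4 * (1 - α : ℝ)⁻¹ * L * ‖A - B‖ ^ (α : ℝ) := by gcongr
    _ ≤ 46 * (1 - α : ℝ)⁻¹ * L * ‖A - B‖ ^ (α : ℝ) := by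
        rw [← add_mul, ← add_mul, ← add_mul]
        gcongr
        norm_num

end OperatorHolder

theorem stmt_6_general {H : Type*} [NormedAddCommGroup H] [InnerProductSpace ℂ H] [CompleteSpace H]
    {A B : H →L[ℂ] H} (hA : IsSelfAdjoint A) (hB : IsSelfAdjoint B) {L α : ℝ≥0} (hα₀ : 0 < α)
    (hα₁ : α < 1) {f : ℝ → ℝ} (hf : HolderOnWith L α f (spectrum ℝ A ∪ spectrum ℝ B)) :
    ‖cfc f A - cfc f B‖ ≤ 46 * (1 - α : ℝ)⁻¹ * L * ‖A - B‖ ^ (α : ℝ) := by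
  obtain ⟨g, hg, hfg⟩ := exists_boundedContinuous_holderWith_eqOn hα₀ hα₁.le
    ((spectrum.isCompact A).union (spectrum.isCompact B)) hf
  rw [cfc_congr (hfg.mono subset_union_left), cfc_congr (hfg.mono subset_union_right)]
  exact norm_cfcSub_le_of_holderWith hA hB hα₁ hg

/-- Hölder functions are operator Hölder: there is a constant `c > 0` such that
for every `α ∈ (0,1)`, every `L ≥ 0`, every `f : ℝ → ℝ` with
`|f x - f y| ≤ L * |x - y|^α`, and all bounded self-adjoint operators `A`, `B`
on a complex Hilbert space, `‖f(A) - f(B)‖ ≤ c * (1-α)⁻¹ * L * ‖A - B‖^α`. -/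
theorem stmt_6 :
    ∃ c : ℝ, 0 < c ∧
      ∀ (α L : ℝ), α ∈ Set.Ioo (0 : ℝ) 1 → 0 ≤ L →
        ∀ f : ℝ → ℝ, (∀ x y : ℝ, |f x - f y| ≤ L * |x - y| ^ α) →
          ∀ (H : Type) [NormedAddCommGroup H] [InnerProductSpace ℂ H] [CompleteSpace H]
            (A B : H →L[ℂ] H), IsSelfAdjoint A → IsSelfAdjoint B →
            ‖cfc f A - cfc f B‖ ≤ c * (1 - α)⁻¹ * L * ‖A - B‖ ^ α := by
  refine ⟨46, by norm_num, fun α L ⟨hα₀, hα₁⟩ hL f hf H _ _ _ A B hA hB ↦ ?_⟩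
  lift α to ℝ≥0 using hα₀.le
  lift L to ℝ≥0 using hL
  exact stmt_6_general hA hB hα₀ hα₁ (holderOnWith_of_dist_le fun x _ y _ ↦ hf x y)
end
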